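/- arXiv:math/0612591 — 3 statements merged into one kernel-verified Lean document; each statement's English description precedes it below -/
import Mathlib

section
/- Let Π : B → A be an order-preserving map of finite posets such that (1) for every Y ∈ A the geometric realization of the subposet Π^{-1}(Y) = {Ŷ ∈ B : Π(Ŷ) = Y} is contractible, and (2) for every Y ∈ A and every T̂ ∈ B with Y ≥ Π(T̂), the geometric realization of the subposet Π^{-1}(Y | ≥ T̂) = {Ŷ ∈ B : Π(Ŷ) = Y and Ŷ ≥ T̂} is contractible. Then for every point z of the geometric realization |A|, the preimage |Π|^{-1}(z) under the induced continuous map |Π| : |B| → |A| is contractible. (Proposition 3.8 of the paper.) -/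
/-- The geometric realization of a poset `P` (the realization of the nerve of `P`, i.e. of
the order complex of `P`), modelled concretely as the space of finitely supported
"barycentric coordinate" functions: assignments of nonnegative weights summing to `1`
whose support is a chain of `P`.  It is topologized as a subspace of `P → ℝ` with the
product topology. -/
def PosetRealization (P : Type*) [Preorder P] : Set (P → ℝ) :=
  {f | (∀ p, 0 ≤ f p) ∧ (Function.support f).Finite ∧ ∑ᶠ p, f p = 1 ∧
      IsChain (· ≤ ·) (Function.support f)}

/-- The map of geometric realizations induced by a map of posets `g : P → Q`
(the realization of the induced simplicial map of nerves): a point with barycentric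
coordinates `f` is sent to the point whose weight at `q` is the total weight of the
fiber `g ⁻¹ {q}`. -/
noncomputable def inducedChainMap {P Q : Type*} (g : P → Q) (f : P → ℝ) : Q → ℝ :=
  fun q => ∑ᶠ p ∈ {p | g p = q}, f p

open Set Topology

universe u v

/-- A contractible neighborhood retract of a space with the Tietze extension property has the
Tietze extension property. -/
theorem TietzeExtension.of_contractible_of_neighborhood_retract {E : Type v} [TopologicalSpace E]
    [TietzeExtension.{u} E] {C U : Set E} [ContractibleSpace C] (hU : IsOpen U) (hCU : C ⊆ U)
    (r : E → E) (hr : ContinuousOn r U) (hrC : MapsTo r U C) (hr_id : ∀ x ∈ C, r x = x) :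
    TietzeExtension.{u} C where
  exists_restrict_eq' {X} _ _ s hs f := by
    classical
    obtain ⟨c, ⟨H⟩⟩ := id_nullhomotopic C
    obtain ⟨g, hg⟩ := ContinuousMap.exists_restrict_eq hs
      ((⟨Subtype.val, continuous_subtype_val⟩ : C(C, E)).comp f)
    have hgs : ∀ x (hx : x ∈ s), g x = f ⟨x, hx⟩ := fun x hx => DFunLike.congr_fun hg ⟨x, hx⟩
    have hV : IsOpen (g ⁻¹' U) := hU.preimage g.continuous
    obtain ⟨φ, hφ0, hφ1, -⟩ := exists_continuous_zero_one_of_isClosed hs hV.isClosed_compl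
      (disjoint_compl_right_iff_subset.2 fun x hx => by
        simpa [hgs x hx] using hCU (f ⟨x, hx⟩).2)
    let t : X → unitInterval := fun x => projIcc 0 1 zero_le_one (2 * φ x)
    have ht : Continuous t := continuous_projIcc.comp (by fun_prop)
    let k : X → C := fun x =>
      if hx : g x ∈ U then H (t x, ⟨r (g x), hrC hx⟩) else c
    have hk : Continuous k := by
      rw [continuous_iff_continuousAt]
      intro x
      by_cases hx : g x ∈ U
      · have hxV : g ⁻¹' U ∈ 𝓝 x := hV.mem_nhds hx
        refine ContinuousOn.continuousAt (s := g ⁻¹' U) ?_ hxV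
        rw [continuousOn_iff_continuous_domRestrict]
        have : (g ⁻¹' U).domRestrict k =
            fun y : g ⁻¹' U => H (t y, ⟨r (g y), hrC y.2⟩) := by
          ext y
          have hy : g y ∈ U := y.2
          simp [k, hy, domRestrict]
        rw [this]
        refine H.continuous.comp (.prodMk (ht.comp continuous_subtype_val) (.subtype_mk ?_ _))
        exact (hr.comp g.continuous.continuousOn (mapsTo_preimage g U)).domRestrict
      · have hφx : φ x = 1 := hφ1 hx
        have hnear : ∀ᶠ y in 𝓝 x, 1 / 2 < φ y :=
          φ.continuous.continuousAt.eventually (lt_mem_nhds (by rw [hφx]; norm_num))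
        refine (continuousAt_const (y := c)).congr (hnear.mono fun y hy => ?_)
        have hty : t y = 1 := projIcc_of_right_le _ (by linarith)
        by_cases hyU : g y ∈ U
        · simp [k, hyU, hty]
        · simp [k, hyU]
    refine ⟨⟨k, hk⟩, ?_⟩
    ext ⟨x, hx⟩
    have hxC : g x ∈ C := by rw [hgs x hx]; exact (f ⟨x, hx⟩).2
    have htx : t x = 0 := projIcc_of_le_left _ (by simp [hφ0 hx])
    have hH : H (0, ⟨r (g x), hrC (hCU hxC)⟩) = ⟨r (g x), hrC (hCU hxC)⟩ := by simp
    simp only [ContinuousMap.restrict_apply, ContinuousMap.coe_mk, k, dif_pos (hCU hxC), htx, hH]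
    rw [hr_id _ hxC, hgs x hx]

/-- A partial selection of a carrier, defined on a closed set, extends to a global selection when
the carrier takes values with the Tietze extension property, and is constant along a
stratification by a finite poset whose upper strata are closed and have smaller values. -/
theorem exists_continuous_selection {Z : Type u} {E P : Type*} [TopologicalSpace Z] [NormalSpace Z]
    [TopologicalSpace E] [PartialOrder P] [Finite P] (π : Z → P)
    (hπ : ∀ p, IsClosed {z | p ≤ π z}) (C : P → Set E) (hC : Antitone C)
    (hT : ∀ z, TietzeExtension.{u} (C (π z))) (S : Set Z) (hS : IsClosed S) (f : Z → E)
    (hf : ContinuousOn f S) (hfC : ∀ z ∈ S, f z ∈ C (π z)) :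
    ∃ g : Z → E, Continuous g ∧ EqOn g f S ∧ ∀ z, g z ∈ C (π z) := by
  classical
  induction hn : (π '' Sᶜ).ncard using Nat.strong_induction_on generalizing S f with
  | _ n ih =>
    obtain hempty | hne := (π '' Sᶜ).eq_empty_or_nonempty
    · have hSu : S = univ := by simpa using hempty
      subst hSu
      exact ⟨f, continuousOn_univ.1 hf, fun _ _ => rfl, fun z => hfC z trivial⟩
    · obtain ⟨p, hp⟩ := (toFinite (π '' Sᶜ)).exists_maximal hne
      obtain ⟨⟨z₀, hz₀, rfl⟩, hmax⟩ := hp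
      set K := {z | π z₀ ≤ π z}
      have hK : IsClosed K := hπ _
      have hKS : ∀ z ∈ K, z ∉ S → π z = π z₀ := fun z hz hzS =>
        le_antisymm (hmax ⟨z, hzS, rfl⟩ hz) hz
      have := hT z₀
      obtain ⟨g, hgC, hg⟩ := ContinuousMap.exists_forall_mem_restrict_eq (hS.inter hK)
        (⟨(S ∩ K).domRestrict f, (hf.mono inter_subset_left).domRestrict⟩ : C(↥(S ∩ K), E))
        (t := C (π z₀)) (fun x => hC x.2.2 (hfC x x.2.1))
      have hgf : ∀ z ∈ S, z ∈ K → g z = f z := fun z hz hzK => DFunLike.congr_fun hg ⟨z, hz, hzK⟩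
      let f' : Z → E := fun z => if z ∈ S then f z else g z
      have hf'S : EqOn f' f S := fun z hz => by simp [f', hz]
      have hf'K : EqOn f' g K := fun z hz => by
        by_cases hzS : z ∈ S
        · simp [f', hzS, hgf z hzS hz]
        · simp [f', hzS]
      have hlt : (π '' (S ∪ K)ᶜ).ncard < n := by
        rw [← hn]
        refine ncard_lt_ncard ⟨by gcongr; exact subset_union_left, fun h => ?_⟩
        obtain ⟨y, hy, hyz⟩ := h ⟨z₀, hz₀, rfl⟩
        exact hy (Or.inr hyz.ge)
      obtain ⟨k, hk, hkf, hkC⟩ := ih _ hlt (S ∪ K) (hS.union hK) f'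
        ((hf.congr hf'S).union_of_isClosed (g.continuous.continuousOn.congr hf'K) hS hK)
        (fun z hz => by
          by_cases hzS : z ∈ S
          · rw [hf'S hzS]; exact hfC z hzS
          · have hzK := hz.resolve_left hzS
            rw [hf'K hzK, hKS z hzK hzS]
            exact hgC z) rfl
      exact ⟨k, hk, (hkf.mono subset_union_left).trans hf'S, hkC⟩

/-- The realization of a finite poset, expressed with a finite sum. -/
theorem mem_posetRealization_iff {P : Type*} [Preorder P] [Fintype P] {f : P → ℝ} :
    f ∈ PosetRealization P ↔
      (∀ p, 0 ≤ f p) ∧ ∑ p, f p = 1 ∧ IsChain (· ≤ ·) (Function.support f) := by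
  simp [PosetRealization, finsum_eq_sum_of_fintype, toFinite]

/-- A contractible realization of a finite poset has the Tietze extension property. -/
theorem tietzeExtension_posetRealization (P : Type v) [PartialOrder P] [Fintype P]
    [ContractibleSpace (PosetRealization P)] : TietzeExtension.{u} (PosetRealization P) := by
  classical
  let m : (P → ℝ) → P → ℝ := fun f p =>
    max 0 (f p - ∑ q, if p ≤ q ∨ q ≤ p then 0 else |f q|)
  have hm : Continuous m := by
    refine continuous_pi fun p => continuous_const.max
      ((continuous_apply p).sub (continuous_finsetSum _ fun q _ => ?_))
    split_ifs
    · exact continuous_const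
    · fun_prop
  have hm0 : ∀ f p, 0 ≤ m f p := fun f p => le_max_left _ _
  have hm_lt : ∀ f p q, ¬ (p ≤ q ∨ q ≤ p) → m f p ≠ 0 → |f q| < f p := by
    intro f p q hpq hp
    have h1 : 0 < f p - ∑ q, if p ≤ q ∨ q ≤ p then 0 else |f q| := by
      by_contra h
      exact hp (max_eq_left (not_lt.1 h))
    have h2 := Finset.single_le_sum (f := fun q => if p ≤ q ∨ q ≤ p then 0 else |f q|)
      (fun q _ => by positivity) (Finset.mem_univ q)
    simp only [hpq, if_false] at h2
    linarith
  have hm_id : ∀ f ∈ PosetRealization P, m f = f := by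
    intro f hf
    obtain ⟨h0, -, hc⟩ := mem_posetRealization_iff.1 hf
    ext p
    by_cases hp : f p = 0
    · have : 0 ≤ ∑ q, if p ≤ q ∨ q ≤ p then 0 else |f q| :=
        Finset.sum_nonneg fun q _ => by positivity
      simp only [m, hp]
      exact max_eq_left (by linarith)
    · have : ∑ q, (if p ≤ q ∨ q ≤ p then 0 else |f q|) = 0 := by
        refine Finset.sum_eq_zero fun q _ => ?_
        split_ifs with h
        · rfl
        · by_contra hq
          exact h (hc.total hp (abs_ne_zero.1 hq))
      simp [m, this, h0 p]
  refine TietzeExtension.of_contractible_of_neighborhood_retract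
    (U := {f | 0 < ∑ p, m f p}) (isOpen_lt continuous_const (by fun_prop)) ?_
    (fun f p => m f p / ∑ q, m f q) ?_ ?_ ?_
  · intro f hf
    rw [mem_ofPred_eq, hm_id f hf, (mem_posetRealization_iff.1 hf).2.1]
    exact one_pos
  · refine continuousOn_pi.2 fun p => ContinuousOn.div (by fun_prop) (by fun_prop) ?_
    exact fun f hf => ne_of_gt hf
  · intro f hf
    refine mem_posetRealization_iff.2 ⟨fun p => div_nonneg (hm0 f p) hf.le, ?_, ?_⟩
    · rw [← Finset.sum_div]
      exact div_self (ne_of_gt hf)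
    · intro p hp q hq _
      have hp' : m f p ≠ 0 := fun h => hp (by simp [h])
      have hq' : m f q ≠ 0 := fun h => hq (by simp [h])
      by_contra h
      have h1 := hm_lt f p q h hp'
      have h2 := hm_lt f q p (fun h' => h h'.symm) hq'
      linarith [le_abs_self (f p), le_abs_self (f q)]
  · intro f hf
    rw [hm_id f hf, (mem_posetRealization_iff.1 hf).2.1]
    simp

/-- Nonnegative weights of total mass `c` on a chain of elements satisfying `q`. -/
def supportedWeights {B : Type*} [Preorder B] [Fintype B] (q : B → Prop) (c : ℝ) : Set (B → ℝ) :=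
  {g | (∀ b, 0 ≤ g b) ∧ IsChain (· ≤ ·) (Function.support g) ∧ (∀ b, g b ≠ 0 → q b) ∧
    ∑ b, g b = c}

theorem tietzeExtension_supportedWeights {B : Type v} [PartialOrder B] [Fintype B] (q : B → Prop)
    {c : ℝ} (hc : 0 < c) [ContractibleSpace (PosetRealization {b // q b})] :
    TietzeExtension.{u} (supportedWeights q c) := by
  classical
  have := tietzeExtension_posetRealization.{u} {b // q b}
  have hι : ∀ g ∈ supportedWeights q c,
      (fun b : {b // q b} => g b / c) ∈ PosetRealization {b // q b} := by
    rintro g ⟨h0, hch, hq, hsum⟩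
    refine mem_posetRealization_iff.2 ⟨fun b => div_nonneg (h0 b) hc.le, ?_, ?_⟩
    · rw [← Finset.sum_div, div_eq_one_iff_eq hc.ne', ← hsum]
      refine Fintype.sum_of_injective Subtype.val Subtype.val_injective _ _ (fun b hb => ?_)
        (fun _ => rfl)
      by_contra hgb
      exact hb ⟨⟨b, hq b hgb⟩, rfl⟩
    · intro a ha b hb _
      exact hch.total (x := a.1) (y := b.1) (fun h => ha (by simp [h])) (fun h => hb (by simp [h]))
  let e : ({b // q b} → ℝ) → B → ℝ := fun h b => if hb : q b then c * h ⟨b, hb⟩ else 0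
  have he : Continuous e := continuous_pi fun b => by
    by_cases hb : q b
    · simp only [e, hb, dif_pos]; fun_prop
    · simp only [e, hb]; exact continuous_const
  have hρ : ∀ h ∈ PosetRealization {b // q b}, e h ∈ supportedWeights q c := by
    intro h hh
    obtain ⟨h0, hsum, hch⟩ := mem_posetRealization_iff.1 hh
    have hsupp : ∀ b, e h b ≠ 0 → ∃ hb : q b, h ⟨b, hb⟩ ≠ 0 := by
      intro b hb
      by_cases hqb : q b
      · exact ⟨hqb, fun h0 => hb (by simp [e, hqb, h0])⟩
      · exact absurd (by simp [e, hqb]) hb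
    refine ⟨fun b => ?_, ?_, fun b hb => (hsupp b hb).1, ?_⟩
    · by_cases hqb : q b
      · simpa [e, hqb] using mul_nonneg hc.le (h0 _)
      · simp [e, hqb]
    · intro a ha b hb _
      obtain ⟨_, ha⟩ := hsupp a ha
      obtain ⟨_, hb⟩ := hsupp b hb
      exact hch.total ha hb
    · rw [← mul_one c, ← hsum, Finset.mul_sum]
      refine (Fintype.sum_of_injective Subtype.val Subtype.val_injective _ _ (fun b hb => ?_)
        (fun b => ?_)).symm
      · by_contra hgb
        exact hb ⟨⟨b, (hsupp b hgb).1⟩, rfl⟩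
      · simp [e, b.2]
  refine TietzeExtension.of_retract
    (⟨fun g => ⟨_, hι g g.2⟩, .subtype_mk (continuous_pi fun b : {b // q b} =>
      Continuous.div_const (f := fun g : supportedWeights q c => g.1 b.1)
        ((continuous_apply b.1).comp continuous_subtype_val) c) _⟩ :
        C(supportedWeights q c, PosetRealization {b // q b}))
    ⟨fun h => ⟨e h, hρ h h.2⟩, .subtype_mk (by fun_prop) _⟩ ?_
  ext g b
  by_cases hb : q b
  · simp [e, hb, mul_div_cancel₀, hc.ne']
  · have : g.1 b = 0 := by
      by_contra h
      exact hb (g.2.2.2.1 b h)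
    simp [e, hb, this]

section UpperFiber

variable {A : Type*} {B : Type v} [PartialOrder B] [Fintype B]

/-- The elements over `Y` above all of `D`. -/
def upperFiber {A B : Type*} [PartialOrder B] (F : B → A) (Y : A) (D : Set B) (b : B) : Prop :=
  F b = Y ∧ ∀ d ∈ D, d ≤ b

theorem antitone_supportedWeights_upperFiber (F : B → A) (Y : A) (c : ℝ) :
    Antitone fun D => supportedWeights (upperFiber F Y D) c :=
  fun _ _ hD _ ⟨h0, hch, hq, hsum⟩ =>
    ⟨h0, hch, fun b hb => ⟨(hq b hb).1, fun d hd => (hq b hb).2 d (hD hd)⟩, hsum⟩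

theorem tietzeExtension_supportedWeights_upperFiber [PartialOrder A] {F : B → A} {Y : A}
    (h1 : ContractibleSpace (PosetRealization {Z : B // F Z = Y}))
    (h2 : ∀ T : B, F T ≤ Y → ContractibleSpace (PosetRealization {Z : B // F Z = Y ∧ T ≤ Z}))
    {D : Set B} (hD : IsChain (· ≤ ·) D) (hDY : ∀ d ∈ D, F d ≤ Y) {c : ℝ} (hc : 0 < c) :
    TietzeExtension.{u} (supportedWeights (upperFiber F Y D) c) := by
  obtain rfl | hne := D.eq_empty_or_nonempty
  · have : upperFiber F Y ∅ = fun b => F b = Y := by ext; simp [upperFiber]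
    rw [this]
    exact tietzeExtension_supportedWeights _ hc
  · obtain ⟨T, hT⟩ := D.toFinite.exists_maximal hne
    have : upperFiber F Y D = fun b => F b = Y ∧ T ≤ b := by
      ext b
      refine and_congr_right fun _ => ⟨fun h => h T hT.prop, fun h d hd => ?_⟩
      exact ((hD.total hd hT.prop).elim id fun h' => hT.2 hd h').trans h
    rw [this]
    have := h2 T (hDY T hT.prop)
    exact tietzeExtension_supportedWeights _ hc

end UpperFiber

section WeightedFiber

variable {A B : Type*} [DecidableEq A] [Fintype B]

/-- The threshold below which weights are discarded by `truncateWeights`. -/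
noncomputable def truncationLevel (F : B → A) (w : A → ℝ) (b : B) : ℝ :=
  w (F b) / (Fintype.card B + 1)

/-- Discard small weights, and rescale in each fiber of `F` to restore the pushforward `w`. -/
noncomputable def truncateWeights (F : B → A) (w : A → ℝ) (f : B → ℝ) (b : B) : ℝ :=
  w (F b) * (max (f b - truncationLevel F w b) 0 /
    ∑ b', if F b' = F b then max (f b' - truncationLevel F w b') 0 else 0)

theorem le_of_truncateWeights_ne_zero {F : B → A} {w : A → ℝ} {f : B → ℝ}
    {b : B} (hb : truncateWeights F w f b ≠ 0) : truncationLevel F w b ≤ f b := by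
  by_contra h
  exact hb (by simp [truncateWeights, max_eq_right (sub_nonpos.2 (not_le.1 h).le)])

theorem pushforward_ne_zero_of_truncateWeights_ne_zero {F : B → A} {w : A → ℝ} {f : B → ℝ}
    {b : B} (hb : truncateWeights F w f b ≠ 0) : w (F b) ≠ 0 := by
  intro h
  exact hb (by simp [truncateWeights, h])

variable [PartialOrder B]

/-- Nonnegative weights on a chain of `B` whose pushforward along `F` is `w`. -/
def weightedFiber (F : B → A) (w : A → ℝ) : Set (B → ℝ) :=
  {f | (∀ b, 0 ≤ f b) ∧ IsChain (· ≤ ·) (Function.support f) ∧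
    ∀ a, ∑ b, (if F b = a then f b else 0) = w a}

theorem weight_pos_of_mem_weightedFiber {F : B → A} {w : A → ℝ} {f : B → ℝ}
    (hf : f ∈ weightedFiber F w) {b : B} (hb : f b ≠ 0) : 0 < w (F b) := by
  rw [← hf.2.2 (F b)]
  refine Finset.sum_pos' (fun i _ => ?_) ⟨b, Finset.mem_univ b, ?_⟩
  · split_ifs
    exacts [hf.1 i, le_rfl]
  · simpa using lt_of_le_of_ne (hf.1 b) hb.symm

theorem truncation_sum_pos {F : B → A} {w : A → ℝ} {f : B → ℝ} (hf : f ∈ weightedFiber F w)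
    {a : A} (ha : 0 < w a) :
    0 < ∑ b, if F b = a then max (f b - truncationLevel F w b) 0 else 0 := by
  have hn : (0 : ℝ) < Fintype.card B + 1 := by positivity
  have h1 : ∑ b, ((if F b = a then f b else 0) - w a / (Fintype.card B + 1)) ≤
      ∑ b, if F b = a then max (f b - truncationLevel F w b) 0 else 0 := by
    refine Finset.sum_le_sum fun b _ => ?_
    split_ifs with h
    · rw [truncationLevel, h]
      exact le_max_left _ _
    · rw [zero_sub, neg_nonpos]
      positivity
  refine lt_of_lt_of_le ?_ h1
  have h2 : ∑ b, (if F b = a then f b else 0) = w a := by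
    rw [← hf.2.2 a]
  rw [Finset.sum_sub_distrib, h2, Finset.sum_const, Finset.card_univ, nsmul_eq_mul,
    sub_pos, ← mul_div_assoc, div_lt_iff₀ hn]
  linarith

theorem truncateWeights_mem {F : B → A} {w : A → ℝ} (hw : ∀ a, 0 ≤ w a) {f : B → ℝ}
    (hf : f ∈ weightedFiber F w) : truncateWeights F w f ∈ weightedFiber F w := by
  refine ⟨fun b => ?_, hf.2.1.mono fun b hb => Function.mem_support.2 fun hfb => ?_, fun a => ?_⟩
  · refine mul_nonneg (hw _) (div_nonneg (le_max_right _ _) (Finset.sum_nonneg fun i _ => ?_))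
    split_ifs
    exacts [le_max_right _ _, le_rfl]
  · have h1 := le_of_truncateWeights_ne_zero hb
    have h2 := lt_of_le_of_ne (hw (F b)) (pushforward_ne_zero_of_truncateWeights_ne_zero hb).symm
    have h3 : 0 < truncationLevel F w b := div_pos h2 (by positivity)
    linarith
  · obtain ha | ha := (hw a).eq_or_lt
    · rw [← ha]
      refine Finset.sum_eq_zero fun b _ => ?_
      split_ifs with h
      · simp [truncateWeights, h, ← ha]
      · rfl
    · have hpos := truncation_sum_pos hf ha
      have : ∀ b, (if F b = a then truncateWeights F w f b else 0) =
          w a * ((if F b = a then max (f b - truncationLevel F w b) 0 else 0) /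
            ∑ b', if F b' = a then max (f b' - truncationLevel F w b') 0 else 0) := by
        intro b
        split_ifs with h
        · simp [truncateWeights, h]
        · simp
      rw [Finset.sum_congr rfl fun b _ => this b, ← Finset.mul_sum, ← Finset.sum_div,
        div_self hpos.ne', mul_one]

theorem continuousOn_truncateWeights {F : B → A} {w : A → ℝ} (hw : ∀ a, 0 ≤ w a) :
    ContinuousOn (truncateWeights F w) (weightedFiber F w) := by
  refine continuousOn_pi.2 fun b => ?_
  obtain hb | hb := (hw (F b)).eq_or_lt
  · simpa only [truncateWeights, ← hb, zero_mul] using continuousOn_const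
  · refine continuousOn_const.mul (ContinuousOn.div (by fun_prop) ?_ fun f hf => ?_)
    · refine Continuous.continuousOn (continuous_finsetSum _ fun i _ => ?_)
      split_ifs
      · fun_prop
      · exact continuous_const
    · exact (truncation_sum_pos hf hb).ne'

theorem add_mem_weightedFiber {F : B → A} {w : A → ℝ} {Y : A} {D : Set B}
    {y g : B → ℝ} (hy : y ∈ weightedFiber F (Function.update w Y 0))
    (hg : g ∈ supportedWeights (upperFiber F Y D) (w Y)) (hyD : Function.support y ⊆ D) :
    y + g ∈ weightedFiber F w := by
  obtain ⟨g0, gch, gq, gsum⟩ := hg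
  refine ⟨fun b => add_nonneg (hy.1 b) (g0 b), ?_, fun a => ?_⟩
  · have hsupp : Function.support (y + g) ⊆ Function.support y ∪ Function.support g :=
      Function.support_add _ _
    refine IsChain.mono hsupp ?_
    rintro a (ha | ha) b (hb | hb) hab
    · exact hy.2.1 ha hb hab
    · exact Or.inl ((gq b hb).2 a (hyD ha))
    · exact Or.inr ((gq a ha).2 b (hyD hb))
    · exact gch ha hb hab
  · have hsplit : ∑ b, (if F b = a then (y + g) b else 0) =
        (∑ b, if F b = a then y b else 0) + ∑ b, if F b = a then g b else 0 := by
      rw [← Finset.sum_add_distrib]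
      refine Finset.sum_congr rfl fun b _ => ?_
      split_ifs <;> simp
    have hya : ∑ b, (if F b = a then y b else 0) = Function.update w Y 0 a := by
      rw [← hy.2.2 a]
    rw [hsplit, hya]
    by_cases haY : a = Y
    · subst haY
      rw [Function.update_self, zero_add, ← gsum]
      refine Finset.sum_congr rfl fun b _ => ?_
      split_ifs with h
      · rfl
      · by_contra hb
        exact h (gq b (Ne.symm hb)).1
    · rw [Function.update_of_ne haY, add_eq_left]
      refine Finset.sum_eq_zero fun b _ => ?_
      split_ifs with h
      · by_contra hb
        exact haY (h ▸ (gq b hb).1)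
      · rfl

theorem lower_part_mem_weightedFiber {F : B → A} {w : A → ℝ} {Y : A}
    {f : B → ℝ} (hf : f ∈ weightedFiber F w) :
    (fun b => if F b = Y then 0 else f b) ∈ weightedFiber F (Function.update w Y 0) := by
  refine ⟨fun b => ?_, hf.2.1.mono fun b hb => Function.mem_support.2 fun hfb =>
    hb (by simp [hfb]), fun a => ?_⟩
  · dsimp only
    split_ifs
    exacts [le_rfl, hf.1 b]
  · by_cases haY : a = Y
    · subst haY
      rw [Function.update_self]
      exact Finset.sum_eq_zero fun b _ => by by_cases h : F b = a <;> simp [h]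
    · rw [Function.update_of_ne haY, ← hf.2.2 a]
      refine Finset.sum_congr rfl fun b _ => ?_
      grind

theorem upper_part_mem_supportedWeights [PartialOrder A] {F : B → A} (hF : Monotone F) {w : A → ℝ}
    {Y : A} (hY : ∀ a, w a ≠ 0 → a ≤ Y) {f : B → ℝ} (hf : f ∈ weightedFiber F w) :
    (fun b => if F b = Y then f b else 0) ∈ supportedWeights
      (upperFiber F Y (Function.support fun b => if F b = Y then 0 else f b)) (w Y) := by
  refine ⟨fun b => ?_, hf.2.1.mono fun b hb => Function.mem_support.2 fun hfb =>
    hb (by simp [hfb]), fun b hb => ?_, ?_⟩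
  · dsimp only
    split_ifs
    exacts [hf.1 b, le_rfl]
  · simp only [ne_eq, ite_eq_right_iff, Classical.not_imp] at hb
    refine ⟨hb.1, fun d hd => ?_⟩
    simp only [Function.mem_support, ne_eq, ite_eq_left_iff, Classical.not_imp] at hd
    refine (hf.2.1.total hd.2 hb.2).resolve_right fun hbd => hd.1 (le_antisymm ?_ ?_)
    · exact hY _ (weight_pos_of_mem_weightedFiber hf hd.2).ne'
    · exact hb.1 ▸ hF hbd
  · rw [← hf.2.2 Y]

theorem mix_mem_weightedFiber {F : B → A} {w : A → ℝ} {f g : B → ℝ}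
    (hf : f ∈ weightedFiber F w) (hg : g ∈ weightedFiber F w)
    (hgf : Function.support g ⊆ Function.support f) {t : ℝ} (ht : t ∈ Icc 0 1) :
    (1 - t) • f + t • g ∈ weightedFiber F w ∧
      Function.support ((1 - t) • f + t • g) ⊆ Function.support f := by
  have hsupp : Function.support ((1 - t) • f + t • g) ⊆ Function.support f := by
    refine Function.support_subset_iff'.2 fun b hb => ?_
    have hfb : f b = 0 := Function.notMem_support.1 hb
    have hgb : g b = 0 := Function.notMem_support.1 fun h => hb (hgf h)
    simp [hfb, hgb]
  refine ⟨⟨fun b => ?_, hf.2.1.mono hsupp, fun a => ?_⟩, hsupp⟩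
  · exact add_nonneg (mul_nonneg (sub_nonneg.2 ht.2) (hf.1 b)) (mul_nonneg ht.1 (hg.1 b))
  · have : ∀ b, (if F b = a then ((1 - t) • f + t • g) b else 0) =
        (1 - t) * (if F b = a then f b else 0) + t * (if F b = a then g b else 0) := fun b => by
      split_ifs <;> simp
    rw [Finset.sum_congr rfl fun b _ => this b, Finset.sum_add_distrib, ← Finset.mul_sum,
      ← Finset.mul_sum, hf.2.2 a, hg.2.2 a]
    ring

end WeightedFiber

/-- Under the fiber conditions, the space of weights with pushforward `w` is contractible: it is
deformed, by truncating the weights below the top element `Y` of the support of `w` and selecting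
new weights over `Y`, onto the image of the space of weights with pushforward `w` away from `Y`. -/
theorem contractibleSpace_weightedFiber {A : Type*} {B : Type u} [PartialOrder A] [PartialOrder B]
    [Finite A] [Fintype B] [DecidableEq A] {F : B → A} (hF : Monotone F)
    (h1 : ∀ Y : A, ContractibleSpace (PosetRealization {Z : B // F Z = Y}))
    (h2 : ∀ (Y : A) (T : B), F T ≤ Y →
      ContractibleSpace (PosetRealization {Z : B // F Z = Y ∧ T ≤ Z}))
    (w : A → ℝ) (hw : ∀ a, 0 ≤ w a) (hwc : IsChain (· ≤ ·) (Function.support w)) :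
    ContractibleSpace (weightedFiber F w) := by
  induction hn : (Function.support w).ncard using Nat.strong_induction_on generalizing w with
  | _ n ih =>
  obtain hempty | hne := (Function.support w).eq_empty_or_nonempty
  · obtain rfl : w = 0 := Function.support_eq_empty_iff.1 hempty
    have hzero : ∀ f : weightedFiber F (0 : A → ℝ), f.1 = 0 := fun f => by
      ext b
      by_contra hb
      exact (weight_pos_of_mem_weightedFiber f.2 hb).ne rfl
    have : Nonempty (weightedFiber F (0 : A → ℝ)) := ⟨0, by simp [weightedFiber, IsChain]⟩
    have : Subsingleton (weightedFiber F (0 : A → ℝ)) :=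
      ⟨fun f g => Subtype.ext ((hzero f).trans (hzero g).symm)⟩
    infer_instance
  obtain ⟨Y, hYmax⟩ := (toFinite (Function.support w)).exists_maximal hne
  have hY : ∀ a, w a ≠ 0 → a ≤ Y := fun a ha =>
    (hwc.total ha hYmax.prop).elim id (hYmax.2 ha)
  have hwY : 0 < w Y := lt_of_le_of_ne (hw Y) (Ne.symm hYmax.prop)
  set w' := Function.update w Y 0
  have hw'supp : Function.support w' ⊆ Function.support w := fun a ha => by
    by_cases h : a = Y
    · simp [w', h] at ha
    · simpa [w', h] using ha
  have hw' : ∀ a, 0 ≤ w' a := fun a => by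
    by_cases h : a = Y
    · simp [w', h]
    · simpa [w', h] using hw a
  have hX' : ContractibleSpace (weightedFiber F w') := by
    refine ih _ ?_ w' hw' (hwc.mono hw'supp) rfl
    rw [← hn]
    exact ncard_lt_ncard ⟨hw'supp, fun h => h hYmax.prop (by simp [w'])⟩
  let D : weightedFiber F w' → Set B := fun x =>
    {b | w' (F b) ≠ 0 ∧ truncationLevel F w' b ≤ x.1 b}
  have hD_supp : ∀ x, D x ⊆ Function.support x.1 := fun x b hb => by
    have : 0 < truncationLevel F w' b :=
      div_pos (lt_of_le_of_ne (hw' _) (Ne.symm hb.1)) (by positivity)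
    exact (this.trans_le hb.2).ne'
  have hD_closed : ∀ K : Set B, IsClosed {x | K ≤ D x} := fun K => by
    have : {x | K ≤ D x} = ⋂ b ∈ K, {x | w' (F b) ≠ 0 ∧ truncationLevel F w' b ≤ x.1 b} := by
      ext x
      simp [D, subset_def]
    rw [this]
    exact isClosed_biInter fun b _ => isClosed_const.and (isClosed_le continuous_const
      ((continuous_apply b).comp continuous_subtype_val))
  let C : Set B → Set (B → ℝ) := fun K => supportedWeights (upperFiber F Y K) (w Y)
  have hC : Antitone C := antitone_supportedWeights_upperFiber F Y (w Y)
  have hT : ∀ x, TietzeExtension.{u} (C (D x)) := fun x =>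
    tietzeExtension_supportedWeights_upperFiber (h1 Y) (h2 Y) (x.2.2.1.mono (hD_supp x))
      (fun d hd => hY _ (hw'supp hd.1)) hwY
  obtain ⟨g, hg, -, hgC⟩ := exists_continuous_selection D hD_closed C hC hT ∅ isClosed_empty 0
    (continuousOn_empty _) (by simp)
  let φ : weightedFiber F w' → B → ℝ := fun x => truncateWeights F w' x.1
  have hφ : Continuous φ := (continuousOn_truncateWeights hw').domRestrict
  have hφ_mem : ∀ x, φ x ∈ weightedFiber F w' := fun x => truncateWeights_mem hw' x.2
  have hφ_supp : ∀ x, Function.support (φ x) ⊆ D x := fun x b hb =>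
    ⟨pushforward_ne_zero_of_truncateWeights_ne_zero hb, le_of_truncateWeights_ne_zero hb⟩
  let s : C(weightedFiber F w', weightedFiber F w) :=
    ⟨fun x => ⟨φ x + g x, add_mem_weightedFiber (hφ_mem x) (hgC x) (hφ_supp x)⟩,
      (hφ.add hg).subtype_mk _⟩
  let p : C(weightedFiber F w, weightedFiber F w') :=
    ⟨fun x => ⟨_, lower_part_mem_weightedFiber x.2⟩, .subtype_mk (continuous_pi fun b => by
      split_ifs
      · exact continuous_const
      · exact (continuous_apply b).comp continuous_subtype_val) _⟩
  let q : weightedFiber F w → B → ℝ := fun x b => if F b = Y then x.1 b else 0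
  have hq : Continuous q := continuous_pi fun b => by
    by_cases h : F b = Y
    · simp only [q, h, if_true]; exact (continuous_apply b).comp continuous_subtype_val
    · simp only [q, h, if_false]; exact continuous_const
  have hqC : ∀ x, q x ∈ C (Function.support (p x).1) := fun x =>
    upper_part_mem_supportedWeights hF hY x.2
  have hpq : ∀ x, (p x).1 + q x = x.1 := fun x => by
    ext b
    by_cases h : F b = Y <;> simp [p, q, h]
  obtain ⟨G, hG, hGf, hGC⟩ := exists_continuous_selection
    (Z := unitInterval × weightedFiber F w) (fun z => D (p z.2))
    (fun K => (hD_closed K).preimage (p.continuous.comp continuous_snd)) C hC (fun z => hT _)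
    {z | z.1 = 0 ∨ z.1 = 1}
    ((isClosed_eq continuous_fst continuous_const).union
      (isClosed_eq continuous_fst continuous_const))
    (fun z => (1 - (z.1 : ℝ)) • q z.2 + (z.1 : ℝ) • g (p z.2)) (by fun_prop) (by
      rintro ⟨t, x⟩ (h | h)
      · obtain rfl : t = 0 := h
        simpa using hC (hD_supp (p x)) (hqC x)
      · obtain rfl : t = 1 := h
        simpa using hgC (p x))
  let m : C(weightedFiber F w, weightedFiber F w) :=
    ⟨fun x => ⟨φ (p x) + q x, add_mem_weightedFiber (hφ_mem _) (hC (hD_supp (p x)) (hqC x))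
      (hφ_supp _)⟩, ((hφ.comp p.continuous).add hq).subtype_mk _⟩
  have hmix : ∀ z : unitInterval × weightedFiber F w,
      (1 - (z.1 : ℝ)) • (p z.2).1 + (z.1 : ℝ) • φ (p z.2) ∈ weightedFiber F w' ∧
      Function.support ((1 - (z.1 : ℝ)) • (p z.2).1 + (z.1 : ℝ) • φ (p z.2)) ⊆
        Function.support (p z.2).1 := fun z =>
    mix_mem_weightedFiber (p z.2).2 (hφ_mem _) ((hφ_supp _).trans (hD_supp _)) z.1.2
  have hid : (ContinuousMap.id (weightedFiber F w)).Homotopic m :=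
    ⟨{  toFun := fun z => ⟨_, add_mem_weightedFiber (hmix z).1 (hqC z.2) (hmix z).2⟩
        continuous_toFun := .subtype_mk (by fun_prop) _
        map_zero_left := fun x => Subtype.ext (by simpa using hpq x)
        map_one_left := fun x => Subtype.ext (by simp [m]) }⟩
  have hms : m.Homotopic (s.comp p) :=
    ⟨{  toFun := fun z => ⟨_, add_mem_weightedFiber (hφ_mem (p z.2)) (hGC z) (hφ_supp _)⟩
        continuous_toFun := .subtype_mk (by fun_prop) _
        map_zero_left := fun x => Subtype.ext (by
          have := hGf (x := (0, x)) (Or.inl rfl)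
          simp [m, this])
        map_one_left := fun x => Subtype.ext (by
          have := hGf (x := (1, x)) (Or.inr rfl)
          simp [s, this]) }⟩
  obtain ⟨c, hc⟩ := ((id_nullhomotopic (weightedFiber F w')).comp_right s).comp_left p
  exact (contractible_iff_id_nullhomotopic _).2 ⟨c, (hid.trans hms).trans hc⟩

theorem inducedChainMap_apply {P Q : Type*} [Fintype P] [DecidableEq Q] (g : P → Q) (f : P → ℝ)
    (q : Q) : inducedChainMap g f q = ∑ p, if g p = q then f p else 0 := by
  rw [inducedChainMap, finsum_mem_eq_finite_toFinset_sum _ (toFinite _), ← Finset.sum_filter]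
  exact Finset.sum_congr (by ext; simp) fun _ _ => rfl

/-- **Proposition 3.8.** Let `F : B → A` be an order-preserving map of finite posets such
that (1) every fiber `F⁻¹(Y)` has contractible realization, and (2) every subposet
`F⁻¹(Y | ≥ T) = {Z : F Z = Y and Z ≥ T}` (for `Y ≥ F T`) has contractible realization.
Then the preimage of every point under the induced continuous map `|F| : |B| → |A|` of
geometric realizations is contractible. -/
theorem contractible_fibers_realization_of_contractible_poset_fibers
    (A B : Type) [PartialOrder A] [PartialOrder B] [Fintype A] [Fintype B]
    (F : B → A) (hF : Monotone F)
    (h1 : ∀ Y : A, ContractibleSpace ↥(PosetRealization {Z : B // F Z = Y}))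
    (h2 : ∀ (Y : A) (T : B), F T ≤ Y →
      ContractibleSpace ↥(PosetRealization {Z : B // F Z = Y ∧ T ≤ Z})) :
    ∃ h : Set.MapsTo (inducedChainMap F) (PosetRealization B) (PosetRealization A),
      Continuous h.restrict ∧
        ∀ z : ↥(PosetRealization A), ContractibleSpace ↥(h.restrict ⁻¹' {z}) := by
  classical
  have hmaps : MapsTo (inducedChainMap F) (PosetRealization B) (PosetRealization A) := by
    intro f hf
    obtain ⟨h0, hsum, hch⟩ := mem_posetRealization_iff.1 hf
    have hsupp : ∀ a, inducedChainMap F f a ≠ 0 → ∃ b, f b ≠ 0 ∧ F b = a := fun a ha => by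
      rw [inducedChainMap_apply] at ha
      obtain ⟨b, -, hb⟩ := Finset.exists_ne_zero_of_sum_ne_zero ha
      exact ⟨b, fun h => hb (by simp [h]), by_contra fun h => hb (by simp [h])⟩
    refine mem_posetRealization_iff.2 ⟨fun a => ?_, ?_, ?_⟩
    · rw [inducedChainMap_apply]
      exact Finset.sum_nonneg fun b _ => by split_ifs; exacts [h0 b, le_rfl]
    · simp_rw [inducedChainMap_apply]
      rw [Finset.sum_comm]
      simpa using hsum
    · intro a ha a' ha' _
      obtain ⟨b, hb, rfl⟩ := hsupp a ha
      obtain ⟨b', hb', rfl⟩ := hsupp a' ha'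
      exact (hch.total hb hb').imp (fun h => hF h) (fun h => hF h)
  refine ⟨hmaps, ?_, fun z => ?_⟩
  · refine .subtype_mk (continuous_pi fun a => ?_) _
    simp_rw [inducedChainMap_apply]
    refine continuous_finsetSum _ fun b _ => ?_
    split_ifs
    · exact (continuous_apply b).comp continuous_subtype_val
    · exact continuous_const
  · obtain ⟨z0, zsum, zch⟩ := mem_posetRealization_iff.1 z.2
    have := contractibleSpace_weightedFiber hF h1 h2 z.1 z0 zch
    have hto : ∀ x : ↥(hmaps.restrict ⁻¹' {z}), x.1.1 ∈ weightedFiber F z.1 := fun x =>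
      ⟨x.1.2.1, x.1.2.2.2.2, fun a => by
        rw [← inducedChainMap_apply]
        exact congrFun (congrArg Subtype.val
          (show MapsTo.restrict _ _ _ hmaps x.1 = z from x.2)) a⟩
    have hmem : ∀ f ∈ weightedFiber F z.1, f ∈ PosetRealization B := fun f hf => by
      refine mem_posetRealization_iff.2 ⟨hf.1, ?_, hf.2.1⟩
      rw [← zsum, ← Finset.sum_congr rfl fun a _ => hf.2.2 a, Finset.sum_comm]
      simp
    have hfiber : ∀ f (hf : f ∈ weightedFiber F z.1),
        MapsTo.restrict _ _ _ hmaps ⟨f, hmem f hf⟩ = z :=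
      fun f hf => Subtype.ext (funext fun a => (inducedChainMap_apply F f a).trans (hf.2.2 a))
    exact Homeomorph.contractibleSpace (Y := weightedFiber F z.1)
      { toFun := fun x => ⟨x.1.1, hto x⟩
        invFun := fun f => ⟨⟨f.1, hmem f f.2⟩, hfiber f f.2⟩
        left_inv := fun _ => rfl
        right_inv := fun _ => rfl
        continuous_toFun := by fun_prop
        continuous_invFun := by fun_prop }
end

section
/- For every n ≥ 1 there exists a continuous map π_n : Cycl_n → Assoc_n satisfying π_n ∘ β_n = α_n on Δ^n; such a map is unique, and the preimage π_n^{-1}(x) of every point x ∈ Assoc_n is contractible. (Theorem 2 of the paper.) -/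
open scoped ENNReal

/-- The open configuration space `Δ^n = {0 < t 1 < … < t n < 1}` of `n` points in `(0,1)`. -/
def openSimplex (n : ℕ) : Set (Fin n → ℝ) :=
  {t | (∀ i j : Fin n, i < j → t i < t j) ∧ (∀ i, 0 < t i) ∧ ∀ i, t i < 1}

/-- Extension of a configuration `t : Fin n → ℝ` by the boundary conventions
`t 0 = 0` and `t (n+1) = 1`, giving a function on `Fin (n+2)`. -/
def ext01 {n : ℕ} (t : Fin n → ℝ) : Fin (n + 2) → ℝ :=
  Fin.cons 0 (Fin.snoc t 1)

/-- Extension of a configuration `t : Fin n → ℝ` by the convention `t 0 = 0` only,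
giving a function on `Fin (n+1)`. -/
def ext0 {n : ℕ} (t : Fin n → ℝ) : Fin (n + 1) → ℝ :=
  Fin.cons 0 t

/-- The index set `T_n` of triples `0 ≤ i < j < k ≤ n+1`. -/
abbrev TriIdx (n : ℕ) : Type :=
  {p : Fin (n + 2) × Fin (n + 2) × Fin (n + 2) // p.1 < p.2.1 ∧ p.2.1 < p.2.2}

/-- The map `α_n : Δ^n → [0,1]^{T_n}`, `s_{ijk} = (t_j − t_i)/(t_k − t_i)`
(with `t_0 = 0`, `t_{n+1} = 1`), whose image's closure is the associahedron. -/
noncomputable def alphaMap (n : ℕ) (t : Fin n → ℝ) : TriIdx n → ℝ := fun q =>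
  (ext01 t q.1.2.1 - ext01 t q.1.1) / (ext01 t q.1.2.2 - ext01 t q.1.1)

/-- The `n`-dimensional associahedron: the closure of `α_n(Δ^n)`. -/
noncomputable def Assoc (n : ℕ) : Set (TriIdx n → ℝ) :=
  closure (alphaMap n '' openSimplex n)

/-- The index set `S_n` of triples of pairwise distinct elements of `{0, 1, …, n}`. -/
abbrev TripleIdx (n : ℕ) : Type :=
  {p : Fin (n + 1) × Fin (n + 1) × Fin (n + 1) // p.1 ≠ p.2.1 ∧ p.1 ≠ p.2.2 ∧ p.2.1 ≠ p.2.2}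

/-- `s̃_{kℓm}(t) = |sin π(t_ℓ − t_k)| / |sin π(t_m − t_k)| ∈ [0, +∞]`
(with the convention `t_0 = 0`). -/
noncomputable def sTilde (n : ℕ) (t : Fin n → ℝ) : TripleIdx n → ℝ≥0∞ := fun q =>
  ENNReal.ofReal |Real.sin (Real.pi * (ext0 t q.1.2.1 - ext0 t q.1.1))| /
    ENNReal.ofReal |Real.sin (Real.pi * (ext0 t q.1.2.2 - ext0 t q.1.1))|

/-- The map `β_n : Δ^n → Δ̄^n × [0,+∞]^{S_n}`. -/
noncomputable def betaMap (n : ℕ) (t : Fin n → ℝ) : (Fin n → ℝ) × (TripleIdx n → ℝ≥0∞) :=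
  (t, sTilde n t)

/-- The `n`-dimensional cyclohedron: the closure of `β_n(Δ^n)`. -/
noncomputable def Cycl (n : ℕ) : Set ((Fin n → ℝ) × (TripleIdx n → ℝ≥0∞)) :=
  closure (betaMap n '' openSimplex n)

open Filter Topology

/-- `M a b` behaves like the share `x a / (x a + x b)` of a family of positive quantities `x`,
or like a limit of such shares. -/
structure IsShare {I : Type*} (M : I → I → ℝ) : Prop where
  nonneg : ∀ a b, 0 ≤ M a b
  add : ∀ a b, M a b + M b a = 1
  cyc : ∀ a b c, M a b * M b c * M c a = M b a * M c b * M a c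

namespace IsShare

variable {I : Type*} {M : I → I → ℝ}

theorem self (h : IsShare M) (a : I) : M a a = 1 / 2 := by
  linarith [h.add a a]

theorem eq_zero_trans (h : IsShare M) {a b c : I} (hab : M a b ≠ 1) (hbc : M b c = 0) :
    M a c = 0 := by
  have h1 := h.cyc a b c
  have h2 : M c b = 1 := by linarith [h.add b c]
  rw [hbc, h2] at h1
  have h3 : M b a ≠ 0 := fun h0 => hab (by linarith [h.add a b])
  have h4 : M b a * M a c = 0 := by linarith
  exact (mul_eq_zero.1 h4).resolve_left h3

/-- Shares of a finite family come from orders of magnitude `c a * ε ^ e a`, `ε → 0`. -/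
theorem exists_magnitude [Finite I] (h : IsShare M) (o : I) (ho : ∀ a, 0 < M o a) :
    ∃ (c : I → ℝ) (e : I → ℕ), (∀ a, 0 < c a) ∧ c o = 1 ∧ e o = 0 ∧
      (∀ a b, e a = e b → M a b = c a / (c a + c b)) ∧
      ∀ a b, e a < e b → M a b = 1 := by
  classical
  cases nonempty_fintype I
  let e : I → ℕ := fun a => (Finset.univ.filter fun b => M a b = 0).card
  have lt_of_zero : ∀ a b, M a b = 0 → e b < e a := by
    intro a b hab
    apply Finset.card_lt_card
    refine Finset.ssubset_iff_of_subset ?_ |>.2 ⟨b, by simpa using hab, by simp [h.self]⟩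
    intro x hx
    simp only [Finset.mem_filter, Finset.mem_univ, true_and] at hx ⊢
    exact h.eq_zero_trans (by rw [hab]; norm_num) hx
  have eq_of_tie : ∀ a b, M a b ≠ 0 → M b a ≠ 0 → e a = e b := by
    intro a b hab hba
    have h1 : M a b ≠ 1 := fun h1 => hba (by linarith [h.add a b])
    have h2 : M b a ≠ 1 := fun h1 => hab (by linarith [h.add a b])
    change Finset.card _ = Finset.card _
    congr 1
    ext x
    simp only [Finset.mem_filter, Finset.mem_univ, true_and]
    exact ⟨fun hx => h.eq_zero_trans h2 hx, fun hx => h.eq_zero_trans h1 hx⟩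
  have ne_zero_of_eq : ∀ a b, e a = e b → M a b ≠ 0 := fun a b hab h0 =>
    absurd (lt_of_zero a b h0) (by omega)
  have : Nonempty I := ⟨o⟩
  let ρ : I → I := fun a => Function.invFun e (e a)
  have hρ : ∀ a, e (ρ a) = e a := fun a => Function.invFun_eq ⟨a, rfl⟩
  have hρ' : ∀ a b, e a = e b → ρ a = ρ b := fun a b hab => by simp only [ρ, hab]
  let c : I → ℝ := fun a => M a (ρ a) / M (ρ a) a
  have pos_of_eq : ∀ a b, e a = e b → 0 < M a b := fun a b hab =>
    lt_of_le_of_ne (h.nonneg a b) (ne_zero_of_eq a b hab).symm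
  have hc : ∀ a, 0 < c a := fun a =>
    div_pos (pos_of_eq _ _ (hρ a).symm) (pos_of_eq _ _ (hρ a))
  refine ⟨fun a => c a / c o, e, fun a => div_pos (hc a) (hc o), div_self (hc o).ne', ?_, ?_, ?_⟩
  · simp [e, fun a => (ho a).ne']
  · intro a b hab
    have ha := hc a
    have hb := hc b
    have h1 : M a b * c b = M b a * c a := by
      have h2 := h.cyc a b (ρ a)
      have h3 := pos_of_eq _ _ (hρ a)
      have h4 := pos_of_eq (ρ a) b ((hρ a).trans hab)
      simp only [c, ← hρ' a b hab]
      field_simp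
      linarith
    have h5 := h.add a b
    have ho' := hc o
    have h6 : M a b * (c a + c b) = c a := by
      linear_combination h1 + c a * h5
    field_simp
    linarith
  · intro a b hab
    have h1 : M a b ≠ 0 := fun h0 => absurd (lt_of_zero a b h0) (by omega)
    by_contra h2
    have h3 : M b a ≠ 0 := fun h0 => h2 (by linarith [h.add a b])
    exact absurd (eq_of_tie a b h1 h3) (by omega)

end IsShare

/-- The matrix with prescribed magnitudes `c` and real levels `E`, where two levels
that differ by at least `1` are treated as incomparable. -/
noncomputable def levelShare {I : Type*} (c E : I → ℝ) (a b : I) : ℝ :=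
  c a * max 0 (min 1 (1 / 2 + (E b - E a))) /
    (c a * max 0 (min 1 (1 / 2 + (E b - E a))) + c b * max 0 (min 1 (1 / 2 + (E a - E b))))

section levelShare

variable {I : Type*} {c E : I → ℝ}

theorem clamp_add (x : ℝ) :
    max 0 (min 1 (1 / 2 + x)) + max 0 (min 1 (1 / 2 - x)) = 1 := by
  rcases le_total x (1 / 2) with h1 | h1 <;> rcases le_total (-1 / 2) x with h2 | h2
  · rw [min_eq_right (by linarith), min_eq_right (by linarith), max_eq_right (by linarith),
      max_eq_right (by linarith)]
    ring
  · rw [min_eq_right (by linarith), min_eq_left (by linarith), max_eq_left (by linarith),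
      max_eq_right (by linarith)]
    ring
  · rw [min_eq_left (by linarith), min_eq_right (by linarith), max_eq_right (by linarith),
      max_eq_left (by linarith)]
    ring
  · linarith

theorem levelShare_denom_pos (hc : ∀ a, 0 < c a) (a b : I) :
    0 < c a * max 0 (min 1 (1 / 2 + (E b - E a))) +
      c b * max 0 (min 1 (1 / 2 + (E a - E b))) := by
  have h := clamp_add (E b - E a)
  have e1 : 1 / 2 - (E b - E a) = 1 / 2 + (E a - E b) := by ring
  rw [e1] at h
  have h1 : 0 ≤ max 0 (min 1 (1 / 2 + (E b - E a))) := le_max_left _ _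
  have h2 : 0 ≤ max 0 (min 1 (1 / 2 + (E a - E b))) := le_max_left _ _
  rcases h1.lt_or_eq with h3 | h3
  · exact add_pos_of_pos_of_nonneg (mul_pos (hc a) h3) (mul_nonneg (hc b).le h2)
  · have : max 0 (min 1 (1 / 2 + (E a - E b))) = 1 := by linarith
    rw [this, ← h3]
    linarith [hc b]

theorem levelShare_eq (a b : I) (h : E a = E b) : levelShare c E a b = c a / (c a + c b) := by
  have : max 0 (min 1 (1 / 2 + (0 : ℝ))) = 1 / 2 := by norm_num
  rw [levelShare, h, sub_self, this, ← add_mul]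
  exact mul_div_mul_right _ _ (by norm_num)

theorem levelShare_one (hc : ∀ a, 0 < c a) (a b : I) (h : E a + 1 ≤ E b) :
    levelShare c E a b = 1 := by
  have h1 : max 0 (min 1 (1 / 2 + (E b - E a))) = 1 := by
    rw [min_eq_left (by linarith), max_eq_right (by norm_num)]
  have h2 : max 0 (min 1 (1 / 2 + (E a - E b))) = 0 := by
    rw [max_eq_left]; exact (min_le_right _ _).trans (by linarith)
  rw [levelShare, h1, h2]
  simp [(hc a).ne']

theorem levelShare_zero (a b : I) (h : E b + 1 ≤ E a) :
    levelShare c E a b = 0 := by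
  have h2 : max 0 (min 1 (1 / 2 + (E b - E a))) = 0 := by
    rw [max_eq_left]; exact (min_le_right _ _).trans (by linarith)
  rw [levelShare, h2]
  simp

theorem levelShare_isShare (hc : ∀ a, 0 < c a)
    (hE : ∀ x y z : I, (E x = E y ∨ E x + 1 ≤ E y ∨ E y + 1 ≤ E x) ∨
      (E y = E z ∨ E y + 1 ≤ E z ∨ E z + 1 ≤ E y) ∨
      (E z = E x ∨ E z + 1 ≤ E x ∨ E x + 1 ≤ E z)) : IsShare (levelShare c E) := by
  have nonneg : ∀ a b, 0 ≤ levelShare c E a b := fun a b =>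
    div_nonneg (mul_nonneg (hc a).le (le_max_left _ _)) (levelShare_denom_pos hc a b).le
  have add : ∀ a b, levelShare c E a b + levelShare c E b a = 1 := fun a b => by
    have h := (levelShare_denom_pos (E := E) hc a b).ne'
    unfold levelShare
    rw [add_comm (c b * _) (c a * _), ← add_div, div_self h]
  have key : ∀ a b d : I, (E a = E b ∨ E a + 1 ≤ E b ∨ E b + 1 ≤ E a) →
      levelShare c E a b * levelShare c E b d * levelShare c E d a =
        levelShare c E b a * levelShare c E d b * levelShare c E a d := by
    have strict : ∀ a b d : I, E a + 1 ≤ E b →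
        levelShare c E b d * levelShare c E d a = 0 := by
      intro a b d h
      rcases le_total (E d) (E a + 1 / 2) with h1 | h1
      · have : max 0 (min 1 (1 / 2 + (E d - E b))) = 0 := by
          rw [max_eq_left]; exact (min_le_right _ _).trans (by linarith)
        rw [levelShare, this]; simp
      · have : max 0 (min 1 (1 / 2 + (E a - E d))) = 0 := by
          rw [max_eq_left]; exact (min_le_right _ _).trans (by linarith)
        rw [levelShare.eq_def c E d a, this]; simp
    intro a b d hab
    rcases hab with h | h | h
    · have h1 := (levelShare_denom_pos (E := E) hc b d).ne'
      have h2 := (levelShare_denom_pos (E := E) hc a d).ne'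
      have ha := hc a
      have hb := hc b
      rw [levelShare_eq a b h, levelShare_eq b a h.symm]
      unfold levelShare
      rw [add_comm (c d * _) (c a * _), add_comm (c d * _) (c b * _)]
      rw [h] at h2 ⊢
      field_simp
      ring
    · rw [levelShare_zero b a h, mul_assoc, strict a b d h]; ring
    · rw [levelShare_zero a b h]
      have := strict b a d h
      linear_combination - levelShare c E b a * this
  refine ⟨nonneg, add, fun a b d => ?_⟩
  rcases hE a b d with h | h | h
  · exact key a b d h
  · linear_combination key b d a h
  · linear_combination key d a b h

end levelShare

/-- If two pairs of numbers in `[0,1]` satisfy the same homogeneous relation, then so does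
their maximum. -/
theorem max_relation {q q' u v u' v' : ℝ} (hq : 0 ≤ q) (hq' : 0 ≤ q')
    (hu : 0 ≤ u) (hv : 0 ≤ v) (hu' : 0 ≤ u') (hv' : 0 ≤ v')
    (hu1 : u ≤ 1) (hv1 : v ≤ 1) (hu1' : u' ≤ 1) (hv1' : v' ≤ 1)
    (h : q * u' * (1 - u) = q' * (1 - u') * u) (k : q * v' * (1 - v) = q' * (1 - v') * v) :
    q * max u' v' * (1 - max u v) = q' * (1 - max u' v') * max u v := by
  have mixed : ∀ {u v u' v' : ℝ}, 0 ≤ u → 0 ≤ v' → u ≤ 1 → v' ≤ 1 →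
      q * u' * (1 - u) = q' * (1 - u') * u → q * v' * (1 - v) = q' * (1 - v') * v →
      v ≤ u → u' ≤ v' → q * v' * (1 - u) = q' * (1 - v') * u := by
    intro u v u' v' hu hv' hu1 hv1' h k h1 h2
    apply le_antisymm
    · calc q * v' * (1 - u) ≤ q * v' * (1 - v) := by gcongr
        _ = q' * (1 - v') * v := k
        _ ≤ q' * (1 - v') * u := mul_le_mul_of_nonneg_left h1 (mul_nonneg hq' (by linarith))
    · calc q' * (1 - v') * u ≤ q' * (1 - u') * u := by gcongr
        _ = q * u' * (1 - u) := h.symm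
        _ ≤ q * v' * (1 - u) := by
          apply mul_le_mul_of_nonneg_right _ (by linarith); gcongr
  rcases le_total u v with h1 | h1 <;> rcases le_total u' v' with h2 | h2
  · rw [max_eq_right h1, max_eq_right h2, k]
  · rw [max_eq_right h1, max_eq_left h2]
    exact mixed hv hu' hv1 hu1' k h h1 h2
  · rw [max_eq_left h1, max_eq_right h2]
    exact mixed hu hv' hu1 hv1' h k h1 h2
  · rw [max_eq_left h1, max_eq_left h2, h]

section Fiber

variable {L R : Type*}

/-- The share matrices on `L ⊕ R` with the same diagonal blocks as `M₀` that give the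
base points `o` and `o'` equal shares. -/
def shareFiber (M₀ : L ⊕ R → L ⊕ R → ℝ) (o : L) (o' : R) : Set (L ⊕ R → L ⊕ R → ℝ) :=
  {M | IsShare M ∧ (∀ a b, M (.inl a) (.inl b) = M₀ (.inl a) (.inl b)) ∧
    (∀ a b, M (.inr a) (.inr b) = M₀ (.inr a) (.inr b)) ∧ M (.inl o) (.inr o') = 1 / 2}

/-- The join of two share matrices with equal diagonal blocks. -/
noncomputable def shareJoin (M N : L ⊕ R → L ⊕ R → ℝ) : L ⊕ R → L ⊕ R → ℝ
  | .inl a, .inl b => M (.inl a) (.inl b)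
  | .inr a, .inr b => M (.inr a) (.inr b)
  | .inl a, .inr b => max (M (.inl a) (.inr b)) (N (.inl a) (.inr b))
  | .inr a, .inl b => 1 - max (M (.inl b) (.inr a)) (N (.inl b) (.inr a))

variable {M₀ M N : L ⊕ R → L ⊕ R → ℝ} {o : L} {o' : R}

theorem IsShare.le_one {I : Type*} {M : I → I → ℝ} (h : IsShare M) (a b : I) : M a b ≤ 1 := by
  linarith [h.add a b, h.nonneg b a]

theorem IsShare.join (hM : IsShare M) (hN : IsShare N)
    (hl : ∀ a b, M (.inl a) (.inl b) = N (.inl a) (.inl b))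
    (hr : ∀ a b, M (.inr a) (.inr b) = N (.inr a) (.inr b)) : IsShare (shareJoin M N) := by
  have flip : ∀ {P : L ⊕ R → L ⊕ R → ℝ}, IsShare P → ∀ a b,
      P (.inr b) (.inl a) = 1 - P (.inl a) (.inr b) := fun hP a b => by
    linarith [hP.add (.inl a) (.inr b)]
  have keyl : ∀ a b r, shareJoin M N (.inl a) (.inl b) * shareJoin M N (.inl b) (.inr r) *
      shareJoin M N (.inr r) (.inl a) = shareJoin M N (.inl b) (.inl a) *
      shareJoin M N (.inr r) (.inl b) * shareJoin M N (.inl a) (.inr r) := by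
    intro a b r
    have h := hM.cyc (.inl a) (.inl b) (.inr r)
    have k := hN.cyc (.inl a) (.inl b) (.inr r)
    rw [flip hM, flip hM] at h
    rw [flip hN, flip hN, ← hl, ← hl] at k
    exact max_relation (hM.nonneg _ _) (hM.nonneg _ _) (hM.nonneg _ _) (hN.nonneg _ _)
      (hM.nonneg _ _) (hN.nonneg _ _) (hM.le_one _ _) (hN.le_one _ _) (hM.le_one _ _)
      (hN.le_one _ _) h k
  have keyr : ∀ a b l, shareJoin M N (.inr a) (.inr b) * shareJoin M N (.inr b) (.inl l) *
      shareJoin M N (.inl l) (.inr a) = shareJoin M N (.inr b) (.inr a) *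
      shareJoin M N (.inl l) (.inr b) * shareJoin M N (.inr a) (.inl l) := by
    intro a b l
    have h := hM.cyc (.inr a) (.inr b) (.inl l)
    have k := hN.cyc (.inr a) (.inr b) (.inl l)
    rw [flip hM, flip hM] at h
    rw [flip hN, flip hN, ← hr, ← hr] at k
    have := max_relation (hM.nonneg (.inr a) (.inr b)) (hM.nonneg (.inr b) (.inr a))
      (hM.nonneg (.inl l) (.inr b)) (hN.nonneg (.inl l) (.inr b))
      (hM.nonneg (.inl l) (.inr a)) (hN.nonneg (.inl l) (.inr a)) (hM.le_one _ _)
      (hN.le_one _ _) (hM.le_one _ _) (hN.le_one _ _)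
      (by linear_combination h) (by linear_combination k)
    simp only [shareJoin]
    linear_combination this
  refine ⟨?_, ?_, ?_⟩
  · rintro (a | a) (b | b)
    · exact hM.nonneg _ _
    · exact le_max_of_le_left (hM.nonneg _ _)
    · exact sub_nonneg.2 (max_le (hM.le_one _ _) (hN.le_one _ _))
    · exact hM.nonneg _ _
  · rintro (a | a) (b | b)
    · exact hM.add _ _
    · simp [shareJoin]
    · simp [shareJoin]
    · exact hM.add _ _
  · rintro (a | a) (b | b) (c | c)
    · exact hM.cyc _ _ _
    · exact keyl a b c
    · linear_combination keyl c a b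
    · linear_combination keyr b c a
    · linear_combination keyl b c a
    · linear_combination keyr c a b
    · linear_combination keyr a b c
    · exact hM.cyc _ _ _

theorem shareJoin_mem (hM : M ∈ shareFiber M₀ o o') (hN : N ∈ shareFiber M₀ o o') :
    shareJoin M N ∈ shareFiber M₀ o o' := by
  obtain ⟨m1, m2, m3, m4⟩ := hM
  obtain ⟨n1, n2, n3, n4⟩ := hN
  refine ⟨m1.join n1 (fun a b => (m2 a b).trans (n2 a b).symm)
    (fun a b => (m3 a b).trans (n3 a b).symm), m2, m3, ?_⟩
  simp [shareJoin, m4, n4]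

/-- The two base points have the same share against every element. -/
theorem shareFiber_base (hM : M ∈ shareFiber M₀ o o') (a : L ⊕ R) :
    M (.inl o) a = M (.inr o') a := by
  have h1 := hM.1.cyc (.inl o) (.inr o') a
  have h2 := hM.1.add (.inl o) (.inr o')
  have h3 := hM.1.add (.inl o) a
  have h4 := hM.1.add (.inr o') a
  have h5 := hM.2.2.2
  have h6 : M (.inr o') (.inl o) = 1 / 2 := by linarith
  rw [h5, h6] at h1
  have e1 : M a (.inl o) = 1 - M (.inl o) a := by linarith
  have e2 : M a (.inr o') = 1 - M (.inr o') a := by linarith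
  rw [e1, e2] at h1
  linarith

/-- A left-right entry is determined by the diagonal blocks unless both elements
are negligible against the base points. -/
theorem shareFiber_entry_unique (hM : M ∈ shareFiber M₀ o o') (hN : N ∈ shareFiber M₀ o o')
    (hpos : ∀ a, 0 < M (.inl o) a) (l : L) (r : R)
    (h : M (.inl l) (.inl o) ≠ 0 ∨ M (.inr r) (.inr o') ≠ 0) :
    M (.inl l) (.inr r) = N (.inl l) (.inr r) := by
  have m1 := hM.1.cyc (.inl l) (.inr r) (.inl o)
  have n1 := hN.1.cyc (.inl l) (.inr r) (.inl o)
  have mb := shareFiber_base hM (.inr r)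
  have nb := shareFiber_base hN (.inr r)
  have e1 : N (.inr o') (.inr r) = M (.inr o') (.inr r) := (hN.2.2.1 _ _).trans (hM.2.2.1 _ _).symm
  have e2 : N (.inl o) (.inl l) = M (.inl o) (.inl l) := (hN.2.1 _ _).trans (hM.2.1 _ _).symm
  have e3 : N (.inl l) (.inl o) = M (.inl l) (.inl o) := (hN.2.1 _ _).trans (hM.2.1 _ _).symm
  have e4 : N (.inl o) (.inr r) = M (.inl o) (.inr r) := by rw [nb, e1, mb]
  have m2 := hM.1.add (.inl l) (.inr r)
  have n2 := hN.1.add (.inl l) (.inr r)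
  have m3 := hM.1.add (.inl o) (.inr r)
  have n3 := hN.1.add (.inl o) (.inr r)
  have m5 := hM.1.add (.inr o') (.inr r)
  have p1 := hpos (.inl l)
  have p2 := hpos (.inr r)
  have q1 := hM.1.nonneg (.inl l) (.inl o)
  have q2 := hM.1.nonneg (.inr r) (.inl o)
  have e5 : N (.inr r) (.inl o) = M (.inr r) (.inl o) := by linarith
  have e6 : M (.inr r) (.inr o') = M (.inr r) (.inl o) := by linarith
  rw [e2, e3, e4, e5] at n1
  rw [e6] at h
  have hs : 0 < M (.inr r) (.inl o) * M (.inl o) (.inl l) +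
      M (.inl o) (.inr r) * M (.inl l) (.inl o) := by
    rcases h with h | h
    · have := lt_of_le_of_ne q1 h.symm
      positivity
    · have := lt_of_le_of_ne q2 h.symm
      positivity
  apply mul_right_cancel₀ hs.ne'
  have m2' : M (.inr r) (.inl l) = 1 - M (.inl l) (.inr r) := by linarith
  have n2' : N (.inr r) (.inl l) = 1 - N (.inl l) (.inr r) := by linarith
  rw [m2'] at m1
  rw [n2'] at n1
  linear_combination m1 - n1

theorem continuous_shareJoin {X : Type*} [TopologicalSpace X] {f g : X → L ⊕ R → L ⊕ R → ℝ}
    (hf : Continuous f) (hg : Continuous g) : Continuous fun x => shareJoin (f x) (g x) := by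
  refine continuous_pi fun a => continuous_pi fun b => ?_
  have hf' : ∀ a b, Continuous fun x => f x a b := fun a b => by fun_prop
  have hg' : ∀ a b, Continuous fun x => g x a b := fun a b => by fun_prop
  rcases a with a | a <;> rcases b with b | b <;> simp only [shareJoin]
  · exact hf' _ _
  · exact (hf' _ _).max (hg' _ _)
  · exact continuous_const.sub ((hf' _ _).max (hg' _ _))
  · exact hf' _ _

/-- A path in the fiber from its least to its greatest element. -/
theorem exists_path_shareFiber [Finite L] [Finite R] (h₀ : M₀ ∈ shareFiber M₀ o o')
    (hpos : ∀ a, 0 < M₀ (.inl o) a) :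
    ∃ γ : ℝ → L ⊕ R → L ⊕ R → ℝ, Continuous γ ∧ (∀ s, 0 ≤ s → γ s ∈ shareFiber M₀ o o') ∧
      ∀ M ∈ shareFiber M₀ o o', ∀ l r, γ 0 (.inl l) (.inr r) ≤ M (.inl l) (.inr r) ∧
        M (.inl l) (.inr r) ≤ γ 1 (.inl l) (.inr r) := by
  classical
  obtain ⟨c, e, hc, -, heo, htie, hlt⟩ := h₀.1.exists_magnitude (.inl o) hpos
  obtain ⟨N, hN⟩ : ∃ N : ℕ, ∀ a, e a ≤ N := by
    obtain ⟨N, hN⟩ := (Set.finite_range e).bddAbove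
    exact ⟨N, fun a => hN ⟨a, rfl⟩⟩
  have hgt : ∀ a b, e b < e a → M₀ a b = 0 := fun a b h => by
    linarith [hlt b a h, h₀.1.add a b]
  have heo' : e (.inr o') = 0 := by
    by_contra h
    have h1 := hlt (.inl o) (.inr o') (by omega)
    rw [h₀.2.2.2] at h1
    norm_num at h1
  let E : ℝ → L ⊕ R → ℝ := fun s a => if e a = 0 then 0 else
    Sum.elim (fun l => (e (.inl l) : ℝ) + N) (fun r => (e (.inr r) : ℝ) + s * (2 * N + 1)) a
  have cast_pos : ∀ a, e a ≠ 0 → (1 : ℝ) ≤ e a := fun a h => by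
    exact_mod_cast Nat.one_le_iff_ne_zero.2 h
  have cast_lt : ∀ a b, e a < e b → (e a : ℝ) + 1 ≤ e b := fun a b h => by exact_mod_cast h
  have hN' : ∀ a, (e a : ℝ) ≤ N := fun a => by exact_mod_cast hN a
  have N0 : (0 : ℝ) ≤ N := Nat.cast_nonneg N
  have sepl : ∀ s l l', e (.inl l) < e (.inl l') → E s (.inl l) + 1 ≤ E s (.inl l') := by
    intro s l l' h
    have h1 := cast_lt _ _ h
    have h2 : e (.inl l') ≠ 0 := by omega
    have h3 := cast_pos _ h2
    by_cases h4 : e (.inl l) = 0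
    · simp only [E, h4, h2, if_true, if_false, Sum.elim_inl]; linarith
    · simp only [E, h4, h2, if_false, Sum.elim_inl]; linarith
  have sepr : ∀ s, 0 ≤ s → ∀ r r', e (.inr r) < e (.inr r') →
      E s (.inr r) + 1 ≤ E s (.inr r') := by
    intro s hs l l' h
    have h1 := cast_lt _ _ h
    have h2 : e (.inr l') ≠ 0 := by omega
    have h3 := cast_pos _ h2
    have h5 : 0 ≤ s * (2 * N + 1) := by positivity
    by_cases h4 : e (.inr l) = 0
    · simp only [E, h4, h2, if_true, if_false, Sum.elim_inr]; linarith
    · simp only [E, h4, h2, if_false, Sum.elim_inr]; linarith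
  have eql : ∀ s l l', e (.inl l) = e (.inl l') → E s (.inl l) = E s (.inl l') := by
    intro s l l' h; simp only [E, h, Sum.elim_inl]
  have eqr : ∀ s l l', e (.inr l) = e (.inr l') → E s (.inr l) = E s (.inr l') := by
    intro s l l' h; simp only [E, h, Sum.elim_inr]
  have tril : ∀ s l l', E s (.inl l) = E s (.inl l') ∨ E s (.inl l) + 1 ≤ E s (.inl l') ∨
      E s (.inl l') + 1 ≤ E s (.inl l) := by
    intro s l l'
    rcases lt_trichotomy (e (.inl l)) (e (.inl l')) with h | h | h
    · exact .inr (.inl (sepl s _ _ h))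
    · exact .inl (eql s _ _ h)
    · exact .inr (.inr (sepl s _ _ h))
  have trir : ∀ s, 0 ≤ s → ∀ l l', E s (.inr l) = E s (.inr l') ∨
      E s (.inr l) + 1 ≤ E s (.inr l') ∨ E s (.inr l') + 1 ≤ E s (.inr l) := by
    intro s hs l l'
    rcases lt_trichotomy (e (.inr l)) (e (.inr l')) with h | h | h
    · exact .inr (.inl (sepr s hs _ _ h))
    · exact .inl (eqr s _ _ h)
    · exact .inr (.inr (sepr s hs _ _ h))
  have mem : ∀ s, 0 ≤ s → levelShare c (E s) ∈ shareFiber M₀ o o' := by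
    intro s hs
    refine ⟨levelShare_isShare hc ?_, ?_, ?_, ?_⟩
    · rintro (x | x) (y | y) (z | z)
      · exact .inl (tril s _ _)
      · exact .inl (tril s _ _)
      · exact .inr (.inr (tril s _ _))
      · exact .inr (.inl (trir s hs _ _))
      · exact .inr (.inl (tril s _ _))
      · exact .inr (.inr (trir s hs _ _))
      · exact .inl (trir s hs _ _)
      · exact .inl (trir s hs _ _)
    · intro a b
      rcases lt_trichotomy (e (.inl a)) (e (.inl b)) with h | h | h
      · rw [levelShare_one hc _ _ (sepl s _ _ h), hlt _ _ h]
      · rw [levelShare_eq _ _ (eql s _ _ h), htie _ _ h]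
      · rw [levelShare_zero _ _ (sepl s _ _ h), hgt _ _ h]
    · intro a b
      rcases lt_trichotomy (e (.inr a)) (e (.inr b)) with h | h | h
      · rw [levelShare_one hc _ _ (sepr s hs _ _ h), hlt _ _ h]
      · rw [levelShare_eq _ _ (eqr s _ _ h), htie _ _ h]
      · rw [levelShare_zero _ _ (sepr s hs _ _ h), hgt _ _ h]
    · have : E s (.inl o) = E s (.inr o') := by simp only [E, heo, heo', if_true]
      rw [levelShare_eq _ _ this, ← htie _ _ (heo.trans heo'.symm), h₀.2.2.2]
  refine ⟨fun s => levelShare c (E s), ?_, mem, ?_⟩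
  · have hE : ∀ a, Continuous fun s => E s a := by
      intro a
      by_cases h : e a = 0
      · simp only [E, h, if_true]; exact continuous_const
      · simp only [E, h, if_false]
        rcases a with a | a
        · simp only [Sum.elim_inl]; fun_prop
        · simp only [Sum.elim_inr]; fun_prop
    refine continuous_pi fun a => continuous_pi fun b => ?_
    have h1 := hE a
    have h2 := hE b
    exact Continuous.div (by fun_prop) (by fun_prop)
      fun s => (levelShare_denom_pos hc a b).ne'
  · intro M hM l r
    by_cases hfree : e (.inl l) = 0 ∨ e (.inr r) = 0
    · have key : M₀ (.inl l) (.inl o) ≠ 0 ∨ M₀ (.inr r) (.inr o') ≠ 0 := by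
        have aux : ∀ a b, 0 < c a / (c a + c b) := fun a b =>
          div_pos (hc a) (add_pos (hc a) (hc b))
        rcases hfree with h | h
        · left; rw [htie _ _ (h.trans heo.symm)]; exact (aux _ _).ne'
        · right; rw [htie _ _ (h.trans heo'.symm)]; exact (aux _ _).ne'
      have e1 := shareFiber_entry_unique h₀ hM hpos l r key
      have e2 := shareFiber_entry_unique h₀ (mem 0 le_rfl) hpos l r key
      have e3 := shareFiber_entry_unique h₀ (mem 1 zero_le_one) hpos l r key
      exact ⟨(e2.symm.trans e1).le, (e1.symm.trans e3).le⟩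
    · push Not at hfree
      obtain ⟨h1, h2⟩ := hfree
      have p1 := cast_pos _ h1
      have p2 := cast_pos _ h2
      have n1 := hN' (.inl l)
      have n2 := hN' (.inr r)
      beta_reduce
      constructor
      · rw [levelShare_zero]
        · exact hM.1.nonneg _ _
        · simp only [E, h1, h2, if_false, Sum.elim_inl, Sum.elim_inr]; linarith
      · rw [levelShare_one hc]
        · exact hM.1.le_one _ _
        · simp only [E, h1, h2, if_false, Sum.elim_inl, Sum.elim_inr]; linarith

theorem contractibleSpace_shareFiber [Finite L] [Finite R] (h₀ : M₀ ∈ shareFiber M₀ o o')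
    (hpos : ∀ a, 0 < M₀ (.inl o) a) : ContractibleSpace (shareFiber M₀ o o') := by
  obtain ⟨γ, hγ, mem, hle⟩ := exists_path_shareFiber h₀ hpos
  rw [contractible_iff_id_nullhomotopic]
  have ext : ∀ {P Q : L ⊕ R → L ⊕ R → ℝ}, P ∈ shareFiber M₀ o o' → Q ∈ shareFiber M₀ o o' →
      (∀ l r, P (.inl l) (.inr r) = Q (.inl l) (.inr r)) → P = Q := by
    intro P Q hP hQ h
    funext a b
    rcases a with a | a <;> rcases b with b | b
    · rw [hP.2.1, hQ.2.1]
    · exact h a b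
    · linarith [hP.1.add (.inl b) (.inr a), hQ.1.add (.inl b) (.inr a), h b a]
    · rw [hP.2.2.1, hQ.2.2.1]
  refine ⟨⟨γ 1, mem 1 zero_le_one⟩, ⟨⟨⟨fun p => ⟨shareJoin p.2.1 (γ p.1),
    shareJoin_mem p.2.2 (mem _ p.1.2.1)⟩, ?_⟩, ?_, ?_⟩⟩⟩
  · exact Continuous.subtype_mk (continuous_shareJoin (by fun_prop) (by fun_prop)) _
  · intro M
    refine Subtype.ext (ext (shareJoin_mem M.2 (mem 0 le_rfl)) M.2 fun l r => ?_)
    exact max_eq_left (hle M.1 M.2 l r).1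
  · intro M
    refine Subtype.ext (ext (shareJoin_mem M.2 (mem 1 zero_le_one)) (mem 1 zero_le_one)
      fun l r => ?_)
    exact max_eq_right (hle M.1 M.2 l r).2

end Fiber

section ext01

variable {n : ℕ} (t : Fin n → ℝ)

theorem ext01_zero : ext01 t 0 = 0 := rfl

theorem ext01_last : ext01 t (Fin.last (n + 1)) = 1 := by
  rw [← Fin.succ_last, ext01, Fin.cons_succ, Fin.snoc_last]

theorem ext01_castSucc_succ (i : Fin n) : ext01 t i.castSucc.succ = t i := by
  rw [ext01, Fin.cons_succ, Fin.snoc_castSucc]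

theorem ext0_eq (i : Fin (n + 1)) : ext0 t i = ext01 t i.castSucc := by
  cases i using Fin.cases with
  | zero => rfl
  | succ i => rw [← Fin.succ_castSucc, ext01_castSucc_succ, ext0, Fin.cons_succ]

/-- Every index of `ext01` is `0`, interior or last. -/
theorem Fin.cases_interior {n : ℕ} (i : Fin (n + 2)) :
    i = 0 ∨ (∃ j : Fin n, i = j.castSucc.succ) ∨ i = Fin.last (n + 1) := by
  cases i using Fin.cases with
  | zero => exact .inl rfl
  | succ i =>
    cases i using Fin.lastCases with
    | last => exact .inr (.inr rfl)
    | cast j => exact .inr (.inl ⟨j, rfl⟩)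

theorem ext01_ext {y : Fin (n + 2) → ℝ} (h0 : y 0 = 0) (h1 : y (Fin.last _) = 1) :
    ext01 (fun i : Fin n => y i.castSucc.succ) = y := by
  funext i
  rcases Fin.cases_interior i with rfl | ⟨j, rfl⟩ | rfl
  · exact h0.symm
  · exact ext01_castSucc_succ _ j
  · rw [ext01_last, h1]

variable {t}

theorem mem_openSimplex_iff : t ∈ openSimplex n ↔ StrictMono (ext01 t) := by
  constructor
  · rintro ⟨h1, h2, h3⟩ i j hij
    rcases Fin.cases_interior i with rfl | ⟨i, rfl⟩ | rfl
    · rcases Fin.cases_interior j with rfl | ⟨j, rfl⟩ | rfl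
      · exact absurd hij (lt_irrefl _)
      · rw [ext01_zero, ext01_castSucc_succ]; exact h2 j
      · rw [ext01_zero, ext01_last]; exact one_pos
    · rcases Fin.cases_interior j with rfl | ⟨j, rfl⟩ | rfl
      · exact absurd hij (Fin.not_lt_zero _)
      · rw [ext01_castSucc_succ, ext01_castSucc_succ]
        exact h1 i j (by simpa using hij)
      · rw [ext01_castSucc_succ, ext01_last]; exact h3 i
    · exact absurd hij (not_lt.2 (Fin.le_last _))
  · intro h
    refine ⟨fun i j hij => ?_, fun i => ?_, fun i => ?_⟩
    · rw [← ext01_castSucc_succ t i, ← ext01_castSucc_succ t j]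
      exact h (by simpa using hij)
    · rw [← ext01_castSucc_succ t i, ← ext01_zero t]
      exact h (Fin.succ_pos _)
    · rw [← ext01_castSucc_succ t i, ← ext01_last t]
      apply h
      rw [← Fin.succ_last, Fin.succ_lt_succ_iff]
      exact Fin.castSucc_lt_last i

theorem ext01_nonneg (h : t ∈ openSimplex n) (i) : 0 ≤ ext01 t i := by
  rw [← ext01_zero t]; exact (mem_openSimplex_iff.1 h).monotone (Fin.zero_le _)

theorem ext01_le_one (h : t ∈ openSimplex n) (i) : ext01 t i ≤ 1 := by
  rw [← ext01_last t]; exact (mem_openSimplex_iff.1 h).monotone (Fin.le_last _)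

theorem ext01_pos (h : t ∈ openSimplex n) {i} (hi : i ≠ 0) : 0 < ext01 t i := by
  rw [← ext01_zero t]; exact (mem_openSimplex_iff.1 h) (Fin.pos_iff_ne_zero.2 hi)

theorem ext01_lt_one (h : t ∈ openSimplex n) {i} (hi : i ≠ Fin.last _) : ext01 t i < 1 := by
  rw [← ext01_last t]; exact (mem_openSimplex_iff.1 h) (Fin.lt_last_iff_ne_last.2 hi)

theorem continuous_ext01 (i : Fin (n + 2)) : Continuous fun t : Fin n → ℝ => ext01 t i := by
  rcases Fin.cases_interior i with rfl | ⟨i, rfl⟩ | rfl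
  · exact continuous_const
  · simp only [ext01_castSucc_succ]; fun_prop
  · simp only [ext01_last]; exact continuous_const

end ext01

/-- The distances of the points to the left end (for `Sum.inl`) or the right end
(for `Sum.inr`) of the interval; the base points have distance `1`. -/
def endDist {n : ℕ} (t : Fin n → ℝ) : Fin (n + 1) ⊕ Fin (n + 1) → ℝ :=
  Sum.elim (fun i => ext01 t i.succ) (fun i => 1 - ext01 t i.castSucc)

/-- The shares of the distances to the ends of the interval. -/
noncomputable def endShare {n : ℕ} (t : Fin n → ℝ) (a b : Fin (n + 1) ⊕ Fin (n + 1)) : ℝ :=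
  endDist t a / (endDist t a + endDist t b)

/-- The map `α_n` together with the comparison of distances to both ends. -/
noncomputable def gammaMap (n : ℕ) (t : Fin n → ℝ) :
    (TriIdx n → ℝ) × (Fin (n + 1) ⊕ Fin (n + 1) → Fin (n + 1) ⊕ Fin (n + 1) → ℝ) :=
  (alphaMap n t, endShare t)

theorem endDist_pos {n : ℕ} {t : Fin n → ℝ} (h : t ∈ openSimplex n) (a) : 0 < endDist t a := by
  rcases a with a | a
  · exact ext01_pos h (Fin.succ_ne_zero a)
  · exact sub_pos.2 (ext01_lt_one h (Fin.castSucc_ne_last a))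

/-- The interval ratio `(t_j - t_i) / (t_k - t_i)` for arbitrary indices. -/
noncomputable def segRatio {n : ℕ} (i j k : Fin (n + 2)) (t : Fin n → ℝ) : ℝ :=
  (ext01 t j - ext01 t i) / (ext01 t k - ext01 t i)

/-- Convergence of a function to some limit along a filter. -/
def Conv {T Y : Type*} [TopologicalSpace Y] (F : Filter T) (f : T → Y) : Prop :=
  ∃ y, Tendsto f F (𝓝 y)

/-- The positive function `h` with `sin (π d) = d (1 - d) h d`. -/
noncomputable def sinFactor (d : ℝ) : ℝ :=
  Real.pi * (Real.sinc (Real.pi * d) + Real.sinc (Real.pi * (1 - d)))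

theorem continuous_sinFactor : Continuous sinFactor := by
  have := Real.continuous_sinc
  unfold sinFactor
  fun_prop

theorem sin_eq_sinFactor {d : ℝ} (h0 : 0 < d) (h1 : d < 1) :
    Real.sin (Real.pi * d) = d * (1 - d) * sinFactor d := by
  have hπ := Real.pi_pos
  have h2 : 0 < 1 - d := sub_pos.2 h1
  rw [sinFactor, Real.sinc_of_ne_zero (by positivity), Real.sinc_of_ne_zero (by positivity)]
  have : Real.sin (Real.pi * (1 - d)) = Real.sin (Real.pi * d) := by
    rw [mul_sub, mul_one, Real.sin_pi_sub]
  rw [this]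
  field_simp
  ring

theorem sinFactor_pos {d : ℝ} (h0 : 0 ≤ d) (h1 : d ≤ 1) : 0 < sinFactor d := by
  have hπ := Real.pi_pos
  rcases h0.eq_or_lt with rfl | h0
  · simp [sinFactor, Real.sinc_of_ne_zero hπ.ne', hπ]
  rcases h1.eq_or_lt with rfl | h1
  · simp [sinFactor, Real.sinc_of_ne_zero hπ.ne', hπ]
  have h2 : 0 < 1 - d := sub_pos.2 h1
  have h3 : 0 < Real.sin (Real.pi * d) :=
    Real.sin_pos_of_pos_of_lt_pi (by positivity) (by nlinarith)
  rw [sin_eq_sinFactor h0 h1] at h3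
  exact pos_of_mul_pos_right h3 (by positivity)

/-- The chord between the points `i` and `j` of the circle. -/
noncomputable def chord {n : ℕ} (i j : Fin (n + 2)) (t : Fin n → ℝ) : ℝ :=
  |Real.sin (Real.pi * (ext01 t j - ext01 t i))|

theorem chord_comm {n : ℕ} (i j : Fin (n + 2)) (t : Fin n → ℝ) : chord i j t = chord j i t := by
  rw [chord, chord, ← abs_neg, ← Real.sin_neg]
  congr 2; ring

theorem chord_eq {n : ℕ} {t : Fin n → ℝ} (h : t ∈ openSimplex n) {i j : Fin (n + 2)} (hij : i < j)
    (hj : j ≠ Fin.last _) :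
    chord i j t = (ext01 t j - ext01 t i) * (1 - (ext01 t j - ext01 t i)) *
      sinFactor (ext01 t j - ext01 t i) := by
  have h1 : 0 < ext01 t j - ext01 t i := sub_pos.2 (mem_openSimplex_iff.1 h hij)
  have h2 : ext01 t j - ext01 t i < 1 := by
    linarith [ext01_nonneg h i, ext01_lt_one h hj]
  rw [chord, sin_eq_sinFactor h1 h2, abs_of_nonneg]
  have := sinFactor_pos h1.le h2.le
  have : 0 < 1 - (ext01 t j - ext01 t i) := by linarith
  positivity

theorem chord_pos {n : ℕ} {t : Fin n → ℝ} (h : t ∈ openSimplex n) {i j : Fin (n + 2)} (hij : i ≠ j)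
    (hi : i ≠ Fin.last _) (hj : j ≠ Fin.last _) : 0 < chord i j t := by
  wlog hlt : i < j generalizing i j
  · rw [chord_comm]
    exact this hij.symm hj hi (lt_of_le_of_ne (not_lt.1 hlt) hij.symm)
  have h1 : 0 < ext01 t j - ext01 t i := sub_pos.2 (mem_openSimplex_iff.1 h hlt)
  have h2 : 0 < 1 - (ext01 t j - ext01 t i) := by
    linarith [ext01_nonneg h i, ext01_lt_one h hj]
  have := sinFactor_pos h1.le (by linarith)
  rw [chord_eq h hlt hj]
  positivity

theorem sTilde_eq {n : ℕ} (t : Fin n → ℝ) (q : TripleIdx n) :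
    sTilde n t q = ENNReal.ofReal (chord q.1.1.castSucc q.1.2.1.castSucc t) /
      ENNReal.ofReal (chord q.1.1.castSucc q.1.2.2.castSucc t) := by
  simp only [sTilde, ext0_eq, chord]

section Forward

variable {n : ℕ} {F : Filter (Fin n → ℝ)} [NeBot F]

theorem mem_Icc_of_tendsto {T : Type*} {F : Filter T} [NeBot F] {f : T → ℝ} {v : ℝ}
    (h : Tendsto f F (𝓝 v)) (hf : ∀ᶠ t in F, f t ∈ Set.Icc (0 : ℝ) 1) :
    v ∈ Set.Icc (0 : ℝ) 1 :=
  isClosed_Icc.mem_of_tendsto h hf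

theorem div_mem_Icc {a b : ℝ} (ha : 0 ≤ a) (hab : a ≤ b) : a / b ∈ Set.Icc (0 : ℝ) 1 :=
  ⟨div_nonneg ha (ha.trans hab), div_le_one_of_le₀ hab (ha.trans hab)⟩

theorem tendsto_position_mono (hD : openSimplex n ∈ F) {p : Fin (n + 2) → ℝ}
    (hx : ∀ i, Tendsto (fun t => ext01 t i) F (𝓝 (p i))) : Monotone p := by
  intro i j hij
  refine le_of_tendsto_of_tendsto (hx i) (hx j) ?_
  filter_upwards [hD] with t ht using (mem_openSimplex_iff.1 ht).monotone hij

theorem tendsto_position_zero {p : Fin (n + 2) → ℝ}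
    (hx : ∀ i, Tendsto (fun t => ext01 t i) F (𝓝 (p i))) : p 0 = 0 := by
  have h := hx 0
  simp only [ext01_zero] at h
  exact tendsto_nhds_unique h tendsto_const_nhds

theorem tendsto_position_last {p : Fin (n + 2) → ℝ}
    (hx : ∀ i, Tendsto (fun t => ext01 t i) F (𝓝 (p i))) : p (Fin.last _) = 1 := by
  have h := hx (Fin.last _)
  simp only [ext01_last] at h
  exact tendsto_nhds_unique h tendsto_const_nhds

theorem tendsto_position_mem (hD : openSimplex n ∈ F) {p : Fin (n + 2) → ℝ}
    (hx : ∀ i, Tendsto (fun t => ext01 t i) F (𝓝 (p i))) (i) : p i ∈ Set.Icc (0 : ℝ) 1 := by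
  refine mem_Icc_of_tendsto (hx i) ?_
  filter_upwards [hD] with t ht using ⟨ext01_nonneg ht i, ext01_le_one ht i⟩

/-- After division by a suitable common scale, the three quadratic lengths `d (1 - d)` of
a triple of points converge, and no two of the limits vanish simultaneously. -/
theorem exists_scale_quadratic (hD : openSimplex n ∈ F) {p : Fin (n + 2) → ℝ}
    (hx : ∀ i, Tendsto (fun t => ext01 t i) F (𝓝 (p i)))
    (hS : ∀ i j k, i < j → j < k → Conv F (segRatio i j k))
    (hM : ∀ a b, Conv F (fun t => endShare t a b))
    {a b c : Fin (n + 2)} (hab : a < b) (hbc : b < c) (hc : c ≠ Fin.last _) :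
    ∃ (C : (Fin n → ℝ) → ℝ) (u v w : ℝ), (∀ t ∈ openSimplex n, 0 < C t) ∧
      Tendsto (fun t => (ext01 t b - ext01 t a) * (1 - (ext01 t b - ext01 t a)) / C t) F (𝓝 u) ∧
      Tendsto (fun t => (ext01 t c - ext01 t b) * (1 - (ext01 t c - ext01 t b)) / C t) F (𝓝 v) ∧
      Tendsto (fun t => (ext01 t c - ext01 t a) * (1 - (ext01 t c - ext01 t a)) / C t) F (𝓝 w) ∧
      0 ≤ u ∧ 0 ≤ v ∧ 0 ≤ w ∧ 0 < u + v ∧ 0 < v + w ∧ 0 < u + w := by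
  have lt : ∀ t ∈ openSimplex n, ∀ {i j}, i < j → ext01 t i < ext01 t j :=
    fun t ht i j hij => mem_openSimplex_iff.1 ht hij
  have hac := hab.trans hbc
  have hb0 : b ≠ 0 := (Fin.pos_iff_ne_zero.1 ((Fin.zero_le a).trans_lt hab))
  have hbl : b ≠ Fin.last _ := (hbc.trans_le (Fin.le_last c)).ne
  have hcl : c < Fin.last _ := Fin.lt_last_iff_ne_last.2 hc
  have mono := tendsto_position_mono hD hx
  have pab := mono hab.le
  have pbc := mono hbc.le
  have hpa := tendsto_position_mem hD hx a
  have hpb := tendsto_position_mem hD hx b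
  have hpc := tendsto_position_mem hD hx c
  have dab := (hx b).sub (hx a)
  have dbc := (hx c).sub (hx b)
  have dac := (hx c).sub (hx a)
  by_cases h1 : p a = p c
  · have e1 : p b - p a = 0 := by linarith
    have e2 : p c - p b = 0 := by linarith
    have e3 : p c - p a = 0 := by linarith
    rw [e1] at dab
    rw [e2] at dbc
    rw [e3] at dac
    obtain ⟨s, hs⟩ := hS a b c hab hbc
    have hs1 : s ∈ Set.Icc (0 : ℝ) 1 := by
      refine mem_Icc_of_tendsto hs ?_
      filter_upwards [hD] with t ht
      exact div_mem_Icc (by linarith [lt t ht hab]) (by linarith [lt t ht hbc])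
    refine ⟨fun t => ext01 t c - ext01 t a, s * (1 - 0), (1 - s) * (1 - 0), 1 - 0,
      fun t ht => sub_pos.2 (lt t ht hac), ?_, ?_, ?_, ?_⟩
    · refine (hs.mul (tendsto_const_nhds.sub dab)).congr' ?_
      filter_upwards [hD] with t ht
      simp only [segRatio]; ring
    · refine ((tendsto_const_nhds.sub hs).mul (tendsto_const_nhds.sub dbc)).congr' ?_
      filter_upwards [hD] with t ht
      have := sub_pos.2 (lt t ht hac)
      simp only [segRatio]; field_simp; ring
    · refine (tendsto_const_nhds.sub dac).congr' ?_
      filter_upwards [hD] with t ht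
      have := sub_pos.2 (lt t ht hac)
      field_simp
    · obtain ⟨h2, h3⟩ := hs1
      refine ⟨?_, ?_, ?_, ?_, ?_, ?_⟩ <;> linarith
  have pac : p a < p c := lt_of_le_of_ne (pab.trans pbc) h1
  by_cases h2 : p a = 0 ∧ p b = 0 ∧ p c = 1
  · obtain ⟨ha, hb, hc'⟩ := h2
    rw [ha, hb, sub_zero] at dab
    rw [hb, hc', sub_zero] at dbc
    rw [ha, hc', sub_zero] at dac
    obtain ⟨s, hs⟩ : Conv F fun t => ext01 t a / ext01 t b := by
      by_cases ha0 : a = 0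
      · exact ⟨0, by simp only [ha0, ext01_zero, zero_div]; exact tendsto_const_nhds⟩
      · obtain ⟨s, hs⟩ := hS 0 a b (Fin.pos_iff_ne_zero.2 ha0) hab
        exact ⟨s, hs.congr fun t => by simp only [segRatio, ext01_zero, sub_zero]⟩
    obtain ⟨u, hu⟩ : Conv F fun t => ext01 t b / (ext01 t b + (1 - ext01 t c)) := by
      obtain ⟨β, rfl⟩ := Fin.exists_succ_eq.2 hb0
      obtain ⟨γ, rfl⟩ := Fin.exists_castSucc_eq.2 hc
      exact hM (.inl β) (.inr γ)
    have hs1 : s ∈ Set.Icc (0 : ℝ) 1 := by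
      refine mem_Icc_of_tendsto hs ?_
      filter_upwards [hD] with t ht
      exact div_mem_Icc (ext01_nonneg ht a) (lt t ht hab).le
    have hu1 : u ∈ Set.Icc (0 : ℝ) 1 := by
      refine mem_Icc_of_tendsto hu ?_
      filter_upwards [hD] with t ht
      exact div_mem_Icc (ext01_nonneg ht b) (by linarith [ext01_le_one ht c])
    have hC : ∀ t ∈ openSimplex n, 0 < ext01 t b + (1 - ext01 t c) := fun t ht => by
      linarith [ext01_pos ht hb0, ext01_le_one ht c]
    refine ⟨fun t => ext01 t b + (1 - ext01 t c), (1 - s) * u * (1 - 0), 1,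
      1 * (s * u + (1 - u)), hC, ?_, ?_, ?_, ?_⟩
    · refine (((tendsto_const_nhds.sub hs).mul hu).mul (tendsto_const_nhds.sub dab)).congr' ?_
      filter_upwards [hD] with t ht
      have h3 := hC t ht
      have h4 := ext01_pos ht hb0
      field_simp
    · refine dbc.congr' ?_
      filter_upwards [hD] with t ht
      have h3 := hC t ht
      field_simp; ring
    · refine (dac.mul ((hs.mul hu).add (tendsto_const_nhds.sub hu))).congr' ?_
      filter_upwards [hD] with t ht
      have h3 := hC t ht
      have h4 := ext01_pos ht hb0
      field_simp; ring
    · obtain ⟨h3, h4⟩ := hs1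
      obtain ⟨h5, h6⟩ := hu1
      have : 0 ≤ s * u := mul_nonneg h3 h5
      have : s * u ≤ u := mul_le_of_le_one_left h5 h4
      refine ⟨?_, ?_, ?_, ?_, ?_, ?_⟩ <;> linarith
  by_cases h3 : p a = 0 ∧ p b = 1 ∧ p c = 1
  · obtain ⟨ha, hb, hc'⟩ := h3
    rw [ha, hb, sub_zero] at dab
    rw [hb, hc', sub_self] at dbc
    rw [ha, hc', sub_zero] at dac
    obtain ⟨s, hs⟩ := hS b c (Fin.last _) hbc hcl
    replace hs : Tendsto (fun t => (ext01 t c - ext01 t b) / (1 - ext01 t b)) F (𝓝 s) :=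
      hs.congr fun t => by simp only [segRatio, ext01_last]
    obtain ⟨u, hu⟩ : Conv F fun t => ext01 t a / (ext01 t a + (1 - ext01 t b)) := by
      by_cases ha0 : a = 0
      · exact ⟨0, by simp only [ha0, ext01_zero, zero_div]; exact tendsto_const_nhds⟩
      obtain ⟨β, rfl⟩ := Fin.exists_succ_eq.2 ha0
      obtain ⟨γ, rfl⟩ := Fin.exists_castSucc_eq.2 hbl
      exact hM (.inl β) (.inr γ)
    have hs1 : s ∈ Set.Icc (0 : ℝ) 1 := by
      refine mem_Icc_of_tendsto hs ?_
      filter_upwards [hD] with t ht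
      exact div_mem_Icc (by linarith [lt t ht hbc]) (by linarith [ext01_le_one ht c])
    have hu1 : u ∈ Set.Icc (0 : ℝ) 1 := by
      refine mem_Icc_of_tendsto hu ?_
      filter_upwards [hD] with t ht
      exact div_mem_Icc (ext01_nonneg ht a) (by linarith [ext01_le_one ht b])
    have hC : ∀ t ∈ openSimplex n, 0 < ext01 t a + (1 - ext01 t b) := fun t ht => by
      linarith [ext01_nonneg ht a, ext01_lt_one ht hbl]
    refine ⟨fun t => ext01 t a + (1 - ext01 t b), 1, s * (1 - u) * (1 - 0),
      1 * (1 - s * (1 - u)), hC, ?_, ?_, ?_, ?_⟩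
    · refine dab.congr' ?_
      filter_upwards [hD] with t ht
      have h3 := hC t ht
      field_simp; ring
    · refine ((hs.mul (tendsto_const_nhds.sub hu)).mul (tendsto_const_nhds.sub dbc)).congr' ?_
      filter_upwards [hD] with t ht
      have h3 := hC t ht
      have h4 := sub_pos.2 (ext01_lt_one ht hbl)
      field_simp; ring
    · refine (dac.mul (tendsto_const_nhds.sub (hs.mul (tendsto_const_nhds.sub hu)))).congr' ?_
      filter_upwards [hD] with t ht
      have h3 := hC t ht
      have h4 := sub_pos.2 (ext01_lt_one ht hbl)
      field_simp; ring
    · obtain ⟨h3, h4⟩ := hs1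
      obtain ⟨h5, h6⟩ := hu1
      have : 0 ≤ s * (1 - u) := mul_nonneg h3 (by linarith)
      have : s * (1 - u) ≤ 1 - u := mul_le_of_le_one_left (by linarith) h4
      refine ⟨?_, ?_, ?_, ?_, ?_, ?_⟩ <;> linarith
  · refine ⟨fun _ => 1, (p b - p a) * (1 - (p b - p a)) / 1, (p c - p b) * (1 - (p c - p b)) / 1,
      (p c - p a) * (1 - (p c - p a)) / 1, fun _ _ => one_pos,
      (dab.mul (tendsto_const_nhds.sub dab)).div_const 1,
      (dbc.mul (tendsto_const_nhds.sub dbc)).div_const 1,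
      (dac.mul (tendsto_const_nhds.sub dac)).div_const 1, ?_⟩
    obtain ⟨a0, a1⟩ := hpa
    obtain ⟨b0, b1⟩ := hpb
    obtain ⟨c0, c1⟩ := hpc
    simp only [div_one]
    have u0 : 0 ≤ (p b - p a) * (1 - (p b - p a)) := mul_nonneg (by linarith) (by linarith)
    have v0 : 0 ≤ (p c - p b) * (1 - (p c - p b)) := mul_nonneg (by linarith) (by linarith)
    have w0 : 0 ≤ (p c - p a) * (1 - (p c - p a)) := mul_nonneg (by linarith) (by linarith)
    refine ⟨u0, v0, w0, ?_⟩
    rcases pab.eq_or_lt with e1 | e1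
    · have : p c - p b < 1 := by
        by_contra h4
        exact h2 ⟨by linarith, by linarith, by linarith⟩
      have v1 : 0 < (p c - p b) * (1 - (p c - p b)) := mul_pos (by linarith) (by linarith)
      have w1 : 0 < (p c - p a) * (1 - (p c - p a)) := mul_pos (by linarith) (by linarith)
      refine ⟨?_, ?_, ?_⟩ <;> linarith
    rcases pbc.eq_or_lt with e2 | e2
    · have : p b - p a < 1 := by
        by_contra h4
        exact h3 ⟨by linarith, by linarith, by linarith⟩
      have v1 : 0 < (p b - p a) * (1 - (p b - p a)) := mul_pos (by linarith) (by linarith)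
      have w1 : 0 < (p c - p a) * (1 - (p c - p a)) := mul_pos (by linarith) (by linarith)
      refine ⟨?_, ?_, ?_⟩ <;> linarith
    · have v1 : 0 < (p b - p a) * (1 - (p b - p a)) := mul_pos (by linarith) (by linarith)
      have w1 : 0 < (p c - p b) * (1 - (p c - p b)) := mul_pos (by linarith) (by linarith)
      refine ⟨?_, ?_, ?_⟩ <;> linarith

theorem add_pos_of_weights {x y h k : ℝ} (hx : 0 ≤ x) (hy : 0 ≤ y) (hxy : 0 < x + y)
    (hh : 0 < h) (hk : 0 < k) : 0 < x * h + y * k := by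
  rcases hx.eq_or_lt with rfl | hx
  · have : 0 < y := by linarith
    positivity
  · positivity

/-- The analogue of `exists_scale_quadratic` for chords. -/
theorem exists_scale_chord (hD : openSimplex n ∈ F) {p : Fin (n + 2) → ℝ}
    (hx : ∀ i, Tendsto (fun t => ext01 t i) F (𝓝 (p i)))
    (hS : ∀ i j k, i < j → j < k → Conv F (segRatio i j k))
    (hM : ∀ a b, Conv F (fun t => endShare t a b))
    {a b c : Fin (n + 2)} (hab : a < b) (hbc : b < c) (hc : c ≠ Fin.last _) :
    ∃ (C : (Fin n → ℝ) → ℝ) (u v w : ℝ), (∀ t ∈ openSimplex n, 0 < C t) ∧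
      Tendsto (fun t => chord a b t / C t) F (𝓝 u) ∧
      Tendsto (fun t => chord b c t / C t) F (𝓝 v) ∧
      Tendsto (fun t => chord a c t / C t) F (𝓝 w) ∧
      0 < u + v ∧ 0 < v + w ∧ 0 < u + w := by
  obtain ⟨C, u, v, w, hC, hu, hv, hw, u0, v0, w0, uv, vw, uw⟩ :=
    exists_scale_quadratic hD hx hS hM hab hbc hc
  have hb : b ≠ Fin.last _ := (hbc.trans_le (Fin.le_last c)).ne
  have mono := tendsto_position_mono hD hx
  have pos : ∀ {i j : Fin (n + 2)}, i < j → 0 < sinFactor (p j - p i) := fun {i j} hij => by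
    apply sinFactor_pos
    · linarith [mono hij.le]
    · linarith [(tendsto_position_mem hD hx i).1, (tendsto_position_mem hD hx j).2]
  have aux : ∀ {i j : Fin (n + 2)} {u : ℝ}, i < j → j ≠ Fin.last _ →
      Tendsto (fun t => (ext01 t j - ext01 t i) * (1 - (ext01 t j - ext01 t i)) / C t) F (𝓝 u) →
      Tendsto (fun t => chord i j t / C t) F (𝓝 (u * sinFactor (p j - p i))) := by
    intro i j u hij hj hu
    refine (hu.mul ((continuous_sinFactor.tendsto _).comp ((hx j).sub (hx i)))).congr' ?_
    filter_upwards [hD] with t ht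
    rw [chord_eq ht hij hj, Function.comp_apply]; ring
  exact ⟨C, _, _, _, hC, aux hab hb hu, aux hbc hc hv, aux (hab.trans hbc) hc hw,
    add_pos_of_weights u0 v0 uv (pos hab) (pos hbc),
    add_pos_of_weights v0 w0 vw (pos hbc) (pos (hab.trans hbc)),
    add_pos_of_weights u0 w0 uw (pos hab) (pos (hab.trans hbc))⟩

theorem conv_ofReal_div {T : Type*} {F : Filter T} {A B C : T → ℝ} {u v : ℝ}
    (hC : ∀ᶠ t in F, 0 < C t) (hu : Tendsto (fun t => A t / C t) F (𝓝 u))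
    (hv : Tendsto (fun t => B t / C t) F (𝓝 v)) (huv : 0 < u + v) :
    Conv F fun t => ENNReal.ofReal (A t) / ENNReal.ofReal (B t) := by
  refine ⟨ENNReal.ofReal u / ENNReal.ofReal v, ?_⟩
  have h := ENNReal.Tendsto.div (ENNReal.tendsto_ofReal hu) (by
    simp only [ne_eq, ENNReal.ofReal_eq_zero, not_le]
    by_contra! h
    linarith) (ENNReal.tendsto_ofReal hv) (.inl ENNReal.ofReal_ne_top)
  refine h.congr' ?_
  filter_upwards [hC] with t ht
  rw [ENNReal.ofReal_div_of_pos ht, ENNReal.ofReal_div_of_pos ht]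
  have h1 : ENNReal.ofReal (C t) ≠ 0 := by simpa using ht
  rw [div_eq_mul_inv, div_eq_mul_inv, div_eq_mul_inv, ENNReal.mul_inv (.inr (by simp [h1]))
    (.inr (by simp)), inv_inv, mul_mul_mul_comm, ENNReal.inv_mul_cancel h1
    ENNReal.ofReal_ne_top, mul_one, div_eq_mul_inv]

theorem conv_sTilde (hD : openSimplex n ∈ F) {p : Fin (n + 2) → ℝ}
    (hx : ∀ i, Tendsto (fun t => ext01 t i) F (𝓝 (p i)))
    (hS : ∀ i j k, i < j → j < k → Conv F (segRatio i j k))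
    (hM : ∀ a b, Conv F (fun t => endShare t a b)) (q : TripleIdx n) :
    Conv F fun t => sTilde n t q := by
  simp only [sTilde_eq]
  obtain ⟨⟨k, l, m⟩, hkl, hkm, hlm⟩ := q
  simp only at hkl hkm hlm ⊢
  have key : ∀ {a b c : Fin (n + 1)}, a < b → b < c → _ := fun {a b c} h1 h2 =>
    exists_scale_chord hD hx hS hM (a := a.castSucc) (b := b.castSucc) (c := c.castSucc) h1 h2
      (Fin.castSucc_ne_last c)
  rcases lt_or_gt_of_ne hkl with h1 | h1 <;> rcases lt_or_gt_of_ne hkm with h2 | h2 <;>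
    rcases lt_or_gt_of_ne hlm with h3 | h3
  · obtain ⟨C, u, v, w, hC, hu, hv, hw, uv, vw, uw⟩ := key h1 h3
    exact conv_ofReal_div (mem_of_superset hD hC) hu hw uw
  · obtain ⟨C, u, v, w, hC, hu, hv, hw, uv, vw, uw⟩ := key h2 h3
    exact conv_ofReal_div (mem_of_superset hD hC) hw hu (by linarith)
  · omega
  · obtain ⟨C, u, v, w, hC, hu, hv, hw, uv, vw, uw⟩ := key h2 h1
    simp only [chord_comm k.castSucc m.castSucc]
    exact conv_ofReal_div (mem_of_superset hD hC) hv hu (by linarith)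
  · obtain ⟨C, u, v, w, hC, hu, hv, hw, uv, vw, uw⟩ := key h1 h2
    simp only [chord_comm k.castSucc l.castSucc]
    exact conv_ofReal_div (mem_of_superset hD hC) hu hv uv
  · omega
  · obtain ⟨C, u, v, w, hC, hu, hv, hw, uv, vw, uw⟩ := key h3 h2
    simp only [chord_comm k.castSucc]
    exact conv_ofReal_div (mem_of_superset hD hC) hw hv (by linarith)
  · obtain ⟨C, u, v, w, hC, hu, hv, hw, uv, vw, uw⟩ := key h3 h1
    simp only [chord_comm k.castSucc]
    exact conv_ofReal_div (mem_of_superset hD hC) hv hw vw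

end Forward

section Backward

theorem conv_share_of_ofReal_div {T : Type*} {F : Filter T} {A B : T → ℝ}
    (hA : ∀ᶠ t in F, 0 < A t) (hB : ∀ᶠ t in F, 0 < B t)
    (h : Conv F fun t => ENNReal.ofReal (A t) / ENNReal.ofReal (B t)) :
    Conv F fun t => A t / (A t + B t) := by
  obtain ⟨v, hv⟩ := h
  have h1 : Tendsto (fun t => (1 + ENNReal.ofReal (A t) / ENNReal.ofReal (B t))⁻¹) F
      (𝓝 (1 + v)⁻¹) := (tendsto_const_nhds.add hv).inv
  have h2 := (ENNReal.tendsto_toReal (a := (1 + v)⁻¹) (by simp)).comp h1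
  refine ⟨_, (tendsto_const_nhds (x := (1 : ℝ)).sub h2).congr' ?_⟩
  filter_upwards [hA, hB] with t ha hb
  simp only [Function.comp_apply]
  rw [← ENNReal.ofReal_div_of_pos hb, ← ENNReal.ofReal_one,
    ← ENNReal.ofReal_add zero_le_one (by positivity), ENNReal.toReal_inv,
    ENNReal.toReal_ofReal (by positivity)]
  field_simp
  ring

theorem conv_share_weighted {T : Type*} {F : Filter T} [NeBot F] {A B P Q A' B' : T → ℝ} {p q : ℝ}
    (hA : ∀ᶠ t in F, 0 < A t) (hB : ∀ᶠ t in F, 0 < B t)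
    (h : Conv F fun t => A t / (A t + B t)) (hP : Tendsto P F (𝓝 p)) (hQ : Tendsto Q F (𝓝 q))
    (hp : 0 < p) (hq : 0 < q)
    (hA' : ∀ᶠ t in F, A t = A' t * P t) (hB' : ∀ᶠ t in F, B t = B' t * Q t) :
    Conv F fun t => A' t / (A' t + B' t) := by
  obtain ⟨v, hv⟩ := h
  have hv1 : v ∈ Set.Icc (0 : ℝ) 1 := by
    refine mem_Icc_of_tendsto hv ?_
    filter_upwards [hA, hB] with t ha hb
    exact div_mem_Icc ha.le (by linarith)
  have hpos : 0 < v * q + (1 - v) * p :=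
    add_pos_of_weights hv1.1 (sub_nonneg.2 hv1.2) (by linarith) hq hp
  refine ⟨_, ((hv.mul hQ).div ((hv.mul hQ).add ((tendsto_const_nhds.sub hv).mul hP))
    hpos.ne').congr' ?_⟩
  filter_upwards [hA, hB, hA', hB', hP.eventually (lt_mem_nhds hp),
    hQ.eventually (lt_mem_nhds hq)] with t ha hb ha' hb' hPt hQt
  have h1 : 0 < A' t := pos_of_mul_pos_left (ha' ▸ ha) hPt.le
  have h2 : 0 < B' t := pos_of_mul_pos_left (hb' ▸ hb) hQt.le
  have h3 : A' t * P t + B' t * Q t ≠ 0 := by positivity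
  simp only [Pi.div_apply]
  rw [ha', hb', one_sub_div h3, add_sub_cancel_left]
  field_simp

theorem conv_div_of_conv_share {T : Type*} {F : Filter T} [NeBot F] {A B : T → ℝ}
    (hA : ∀ᶠ t in F, 0 < A t) (hAB : ∀ᶠ t in F, A t ≤ B t)
    (h : Conv F fun t => A t / (A t + B t)) : Conv F fun t => A t / B t := by
  obtain ⟨v, hv⟩ := h
  have h1 : v ≤ 1 / 2 := by
    refine le_of_tendsto hv ?_
    filter_upwards [hA, hAB] with t ha hab
    rw [div_le_div_iff₀ (by linarith) two_pos]
    linarith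
  refine ⟨_, (hv.div (tendsto_const_nhds.sub hv) (by linarith : 1 - v ≠ 0)).congr' ?_⟩
  filter_upwards [hA, hAB] with t ha hab
  have hb : 0 < B t := by linarith
  have : A t + B t ≠ 0 := by positivity
  simp only [Pi.div_apply]
  rw [one_sub_div this, add_sub_cancel_left]
  field_simp

theorem conv_share_symm {T : Type*} {F : Filter T} {A B : T → ℝ}
    (hAB : ∀ᶠ t in F, 0 < A t + B t) (h : Conv F fun t => A t / (A t + B t)) :
    Conv F fun t => B t / (B t + A t) := by
  obtain ⟨v, hv⟩ := h
  refine ⟨_, (tendsto_const_nhds (x := (1 : ℝ)).sub hv).congr' ?_⟩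
  filter_upwards [hAB] with t ht
  rw [one_sub_div ht.ne', add_comm (B t)]
  congr 1
  ring

variable {n : ℕ} {F : Filter (Fin n → ℝ)} [NeBot F]

/-- If the `sTilde` converge, so do the shares of the chords. -/
theorem conv_share_chord {n : ℕ} {F : Filter (Fin n → ℝ)} (hD : openSimplex n ∈ F)
    (hs : ∀ q, Conv F fun t => sTilde n t q) {k l m : Fin (n + 2)}
    (hk : k ≠ Fin.last _) (hl : l ≠ Fin.last _) (hm : m ≠ Fin.last _)
    (hkl : k ≠ l) (hkm : k ≠ m) (hlm : l ≠ m) :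
    Conv F fun t => chord k l t / (chord k l t + chord k m t) := by
  obtain ⟨k, rfl⟩ := Fin.exists_castSucc_eq.2 hk
  obtain ⟨l, rfl⟩ := Fin.exists_castSucc_eq.2 hl
  obtain ⟨m, rfl⟩ := Fin.exists_castSucc_eq.2 hm
  have h := hs ⟨(k, l, m), ne_of_apply_ne _ hkl, ne_of_apply_ne _ hkm, ne_of_apply_ne _ hlm⟩
  simp only [sTilde_eq] at h
  exact conv_share_of_ofReal_div (mem_of_superset hD fun t ht => chord_pos ht hkl hk hl)
    (mem_of_superset hD fun t ht => chord_pos ht hkm hk hm) h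

theorem tendsto_sinFactor_sub {n : ℕ} {F : Filter (Fin n → ℝ)} {p : Fin (n + 2) → ℝ}
    (hx : ∀ i, Tendsto (fun t => ext01 t i) F (𝓝 (p i))) (i j) :
    Tendsto (fun t => sinFactor (ext01 t j - ext01 t i)) F (𝓝 (sinFactor (p j - p i))) :=
  (continuous_sinFactor.tendsto _).comp ((hx j).sub (hx i))

theorem sinFactor_sub_pos (hD : openSimplex n ∈ F) {p : Fin (n + 2) → ℝ}
    (hx : ∀ i, Tendsto (fun t => ext01 t i) F (𝓝 (p i))) {i j} (hij : i < j) :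
    0 < sinFactor (p j - p i) := by
  apply sinFactor_pos
  · linarith [tendsto_position_mono hD hx hij.le]
  · linarith [(tendsto_position_mem hD hx i).1, (tendsto_position_mem hD hx j).2]

theorem conv_segRatio (hD : openSimplex n ∈ F) {p : Fin (n + 2) → ℝ}
    (hx : ∀ i, Tendsto (fun t => ext01 t i) F (𝓝 (p i)))
    (hs : ∀ q, Conv F fun t => sTilde n t q) {i j k : Fin (n + 2)} (hij : i < j) (hjk : j < k) :
    Conv F (segRatio i j k) := by
  have lt : ∀ t ∈ openSimplex n, ∀ {i j}, i < j → ext01 t i < ext01 t j :=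
    fun t ht i j hij => mem_openSimplex_iff.1 ht hij
  have hik := hij.trans hjk
  have hil : i ≠ Fin.last _ := (hik.trans_le (Fin.le_last k)).ne
  have hjl : j ≠ Fin.last _ := (hjk.trans_le (Fin.le_last k)).ne
  have mono := tendsto_position_mono hD hx
  have dij := (hx j).sub (hx i)
  have dik := (hx k).sub (hx i)
  by_cases h0 : p i < p k
  · exact ⟨_, dij.div dik (sub_pos.2 h0).ne'⟩
  have pij : p i = p j := le_antisymm (mono hij.le) ((mono hjk.le).trans (not_lt.1 h0))
  have pik : p i = p k := le_antisymm (mono hik.le) (not_lt.1 h0)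
  rw [pij, sub_self] at dij
  rw [pik, sub_self] at dik
  by_cases hk : k = Fin.last _
  · subst hk
    rw [tendsto_position_last hx] at pik
    have hi0 : (0 : Fin (n + 2)) < i := by
      rw [Fin.pos_iff_ne_zero]
      rintro rfl
      rw [tendsto_position_zero hx] at pik
      norm_num at pik
    have h := conv_share_chord hD hs hil hjl Fin.last_pos.ne hij.ne hi0.ne' (hi0.trans hij).ne'
    have hi1 := hx i
    rw [pik] at hi1
    have h2 := tendsto_sinFactor_sub hx 0 i
    simp only [chord_comm i 0] at h
    refine conv_div_of_conv_share (A := fun t => ext01 t j - ext01 t i) ?_ ?_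
      (conv_share_weighted ?_ ?_ h
      (P := fun t => (1 - (ext01 t j - ext01 t i)) * sinFactor (ext01 t j - ext01 t i))
      (Q := fun t => ext01 t i * sinFactor (ext01 t i - ext01 t 0))
      ((tendsto_const_nhds.sub dij).mul (tendsto_sinFactor_sub hx i j)) (hi1.mul h2) ?_ ?_ ?_ ?_)
    · filter_upwards [hD] with t ht using sub_pos.2 (lt t ht hij)
    · filter_upwards [hD] with t ht using sub_le_sub_right (lt t ht hjk).le _
    · filter_upwards [hD] with t ht using chord_pos ht hij.ne hil hjl
    · filter_upwards [hD] with t ht using chord_pos ht hi0.ne Fin.last_pos.ne hil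
    · simpa using sinFactor_sub_pos hD hx hij
    · simpa using sinFactor_sub_pos hD hx hi0
    · filter_upwards [hD] with t ht
      rw [chord_eq ht hij hjl]; ring
    · filter_upwards [hD] with t ht
      rw [chord_eq ht hi0 hil, ext01_last, ext01_zero]; ring
  · have h := conv_share_chord hD hs hil hjl hk hij.ne hik.ne hjk.ne
    refine conv_div_of_conv_share (A := fun t => ext01 t j - ext01 t i) ?_ ?_
      (conv_share_weighted ?_ ?_ h
      (P := fun t => (1 - (ext01 t j - ext01 t i)) * sinFactor (ext01 t j - ext01 t i))
      (Q := fun t => (1 - (ext01 t k - ext01 t i)) * sinFactor (ext01 t k - ext01 t i))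
      ((tendsto_const_nhds.sub dij).mul (tendsto_sinFactor_sub hx i j))
      ((tendsto_const_nhds.sub dik).mul (tendsto_sinFactor_sub hx i k)) ?_ ?_ ?_ ?_)
    · filter_upwards [hD] with t ht using sub_pos.2 (lt t ht hij)
    · filter_upwards [hD] with t ht using sub_le_sub_right (lt t ht hjk).le _
    · filter_upwards [hD] with t ht using chord_pos ht hij.ne hil hjl
    · filter_upwards [hD] with t ht using chord_pos ht hik.ne hil hk
    · simpa using sinFactor_sub_pos hD hx hij
    · simpa using sinFactor_sub_pos hD hx hik
    · filter_upwards [hD] with t ht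
      rw [chord_eq ht hij hjl]; ring
    · filter_upwards [hD] with t ht
      rw [chord_eq ht hik hk]; ring

theorem conv_endShare_inl_inr (hD : openSimplex n ∈ F) {p : Fin (n + 2) → ℝ}
    (hx : ∀ i, Tendsto (fun t => ext01 t i) F (𝓝 (p i)))
    (hs : ∀ q, Conv F fun t => sTilde n t q) (i j : Fin (n + 1)) :
    Conv F fun t => endShare t (.inl i) (.inr j) := by
  have hi := hx i.succ
  have hj := tendsto_const_nhds (x := (1 : ℝ)).sub (hx j.castSucc)
  have hpi := tendsto_position_mem hD hx i.succ
  have hpj := tendsto_position_mem hD hx j.castSucc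
  by_cases h0 : p i.succ + (1 - p j.castSucc) = 0
  · have e1 : p i.succ = 0 := by linarith [hpi.1, hpj.2]
    have e2 : p j.castSucc = 1 := by linarith [hpi.1, hpj.2]
    have i0 : (0 : Fin (n + 2)) < i.succ := Fin.succ_pos i
    have jl := Fin.castSucc_ne_last j
    have il : i.succ ≠ Fin.last _ := by
      intro h
      rw [h, tendsto_position_last hx] at e1
      norm_num at e1
    have j0 : 0 < j.castSucc := by
      rw [Fin.pos_iff_ne_zero]
      intro h
      rw [h, tendsto_position_zero hx] at e2
      norm_num at e2
    have hij : i.succ ≠ j.castSucc := by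
      intro h
      rw [h, e2] at e1
      norm_num at e1
    have h := conv_share_chord hD hs Fin.last_pos.ne il jl i0.ne j0.ne hij
    rw [e1] at hi
    refine conv_share_weighted (A' := fun t => ext01 t i.succ)
      (B' := fun t => 1 - ext01 t j.castSucc) ?_ ?_ h
      (P := fun t => (1 - ext01 t i.succ) * sinFactor (ext01 t i.succ - ext01 t 0))
      (Q := fun t => ext01 t j.castSucc * sinFactor (ext01 t j.castSucc - ext01 t 0))
      ((tendsto_const_nhds.sub hi).mul (tendsto_sinFactor_sub hx _ _))
      ((hx _).mul (tendsto_sinFactor_sub hx _ _)) ?_ ?_ ?_ ?_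
    · filter_upwards [hD] with t ht using chord_pos ht i0.ne Fin.last_pos.ne il
    · filter_upwards [hD] with t ht using chord_pos ht j0.ne Fin.last_pos.ne jl
    · simpa using sinFactor_sub_pos hD hx i0
    · simpa [e2] using sinFactor_sub_pos hD hx j0
    · filter_upwards [hD] with t ht
      rw [chord_eq ht i0 il, ext01_zero]; ring
    · filter_upwards [hD] with t ht
      rw [chord_eq ht j0 jl, ext01_zero]; ring
  · exact ⟨_, hi.div (hi.add hj) h0⟩

theorem conv_share_of_conv_div {T : Type*} {F : Filter T} [NeBot F] {A B : T → ℝ}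
    (hA : ∀ᶠ t in F, 0 ≤ A t) (hB : ∀ᶠ t in F, 0 < B t)
    (h : Conv F fun t => A t / B t) : Conv F fun t => A t / (A t + B t) := by
  obtain ⟨v, hv⟩ := h
  have h1 : 0 ≤ v := by
    refine ge_of_tendsto hv ?_
    filter_upwards [hA, hB] with t ha hb using div_nonneg ha hb.le
  refine ⟨_, (hv.div (hv.add_const 1) (by linarith : v + 1 ≠ 0)).congr' ?_⟩
  filter_upwards [hA, hB] with t ha hb
  have : A t + B t ≠ 0 := by positivity
  simp only [Pi.div_apply]
  field_simp

theorem conv_endShare (hD : openSimplex n ∈ F) {p : Fin (n + 2) → ℝ}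
    (hx : ∀ i, Tendsto (fun t => ext01 t i) F (𝓝 (p i)))
    (hs : ∀ q, Conv F fun t => sTilde n t q) (a b) : Conv F fun t => endShare t a b := by
  have pos : ∀ a, ∀ᶠ t in F, 0 < endDist t a := fun a =>
    mem_of_superset hD fun t ht => endDist_pos ht a
  have half : ∀ a, Conv F fun t => endShare t a a := fun a => ⟨1 / 2, by
    refine tendsto_const_nhds.congr' ?_
    filter_upwards [pos a] with t ht
    rw [endShare]; field_simp; norm_num⟩
  have symm : ∀ a b, (Conv F fun t => endShare t a b) → Conv F fun t => endShare t b a :=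
    fun a b h => conv_share_symm (by
      filter_upwards [pos a, pos b] with t ha hb using add_pos ha hb) h
  rcases a with i | i <;> rcases b with j | j
  · wlog hij : i ≤ j generalizing i j
    · exact symm _ _ (this _ _ (le_of_not_ge hij))
    rcases hij.eq_or_lt with rfl | hij
    · exact half _
    refine conv_share_of_conv_div ((pos _).mono fun t h => h.le) (pos _) ?_
    obtain ⟨v, hv⟩ := conv_segRatio hD hx hs (Fin.succ_pos i) (Fin.succ_lt_succ_iff.2 hij)
    exact ⟨v, hv.congr fun t => by simp [segRatio, endDist, ext01_zero]⟩
  · exact conv_endShare_inl_inr hD hx hs i j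
  · exact symm _ _ (conv_endShare_inl_inr hD hx hs j i)
  · wlog hij : j ≤ i generalizing i j
    · exact symm _ _ (this _ _ (le_of_not_ge hij))
    rcases hij.eq_or_lt with rfl | hij
    · exact half _
    refine conv_share_of_conv_div ((pos _).mono fun t h => h.le) (pos _) ?_
    obtain ⟨v, hv⟩ := conv_segRatio hD hx hs (Fin.castSucc_lt_castSucc_iff.2 hij)
      (Fin.castSucc_lt_last i)
    refine ⟨1 - v, (tendsto_const_nhds.sub hv).congr' ?_⟩
    filter_upwards [pos (.inr j)] with t ht
    simp only [endDist, Sum.elim_inr] at ht ⊢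
    rw [segRatio, ext01_last, one_sub_div ht.ne']
    congr 1; ring

end Backward

section Extension

theorem Conv.pi {T ι : Type*} {Y : ι → Type*} [∀ i, TopologicalSpace (Y i)] {F : Filter T}
    {f : T → ∀ i, Y i} (h : ∀ i, Conv F fun t => f t i) : Conv F f := by
  choose y hy using h
  exact ⟨y, tendsto_pi_nhds.2 hy⟩

theorem Conv.prodMk {T Y Z : Type*} [TopologicalSpace Y] [TopologicalSpace Z] {F : Filter T}
    {f : T → Y} {g : T → Z} (hf : Conv F f) (hg : Conv F g) : Conv F fun t => (f t, g t) := by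
  obtain ⟨y, hy⟩ := hf
  obtain ⟨z, hz⟩ := hg
  exact ⟨(y, z), hy.prodMk_nhds hz⟩

/-- If `g` converges along every filter along which the injective map `f` converges, then
`g ∘ f⁻¹` extends continuously to the closure of the image of `f`. -/
theorem exists_continuousOn_extension {T Y Z : Type*} [TopologicalSpace Y] [TopologicalSpace Z]
    [T3Space Z] {D : Set T} {f : T → Y} {g : T → Z} {p : Y → T} (hp : ∀ t ∈ D, p (f t) = t)
    (hconv : ∀ (F : Filter T) (c : Y), NeBot F → D ∈ F → Tendsto f F (𝓝 c) → Conv F g) :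
    ∃ Φ : Y → Z, ContinuousOn Φ (closure (f '' D)) ∧ ∀ t ∈ D, Φ (f t) = g t := by
  have key : ∀ c ∈ closure (f '' D), Conv (𝓝[f '' D] c) (g ∘ p) := by
    intro c hc
    have : NeBot (𝓝[f '' D] c) := mem_closure_iff_nhdsWithin_neBot.1 hc
    refine hconv (map p (𝓝[f '' D] c)) c inferInstance ?_ ?_
    · refine mem_map.2 (mem_of_superset self_mem_nhdsWithin ?_)
      rintro _ ⟨t, ht, rfl⟩
      rw [Set.mem_preimage, hp t ht]
      exact ht
    · refine tendsto_map'_iff.2 ((tendsto_nhdsWithin_of_tendsto_nhds tendsto_id).congr' ?_)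
      filter_upwards [self_mem_nhdsWithin]
      rintro _ ⟨t, ht, rfl⟩
      simp [hp t ht]
  refine ⟨extendFrom (f '' D) (g ∘ p), continuousOn_extendFrom subset_rfl key, fun t ht => ?_⟩
  have hmem : f t ∈ f '' D := ⟨t, ht, rfl⟩
  obtain ⟨y, hy⟩ := key _ (subset_closure hmem)
  rw [extendFrom_eq (subset_closure hmem) hy]
  have h1 : Tendsto (g ∘ p) (pure (f t)) (𝓝 y) := hy.mono_left (pure_le_nhdsWithin hmem)
  have h2 := tendsto_nhds_unique h1 (tendsto_pure_nhds (g ∘ p) (f t))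
  rw [h2, Function.comp_apply, hp t ht]

/-- Two injective maps with the same convergent filters have homeomorphic image closures. -/
theorem exists_homeomorph_closure_image {T Y Z : Type*} [TopologicalSpace Y] [TopologicalSpace Z]
    [T3Space Y] [T3Space Z] {D : Set T} {f : T → Y} {g : T → Z} {p : Y → T} {q : Z → T}
    (hp : ∀ t ∈ D, p (f t) = t) (hq : ∀ t ∈ D, q (g t) = t)
    (hfg : ∀ (F : Filter T) (c : Y), NeBot F → D ∈ F → Tendsto f F (𝓝 c) → Conv F g)
    (hgf : ∀ (F : Filter T) (c : Z), NeBot F → D ∈ F → Tendsto g F (𝓝 c) → Conv F f) :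
    ∃ e : closure (f '' D) ≃ₜ closure (g '' D), ∀ t ∈ D, ∀ h, (e ⟨f t, h⟩ : Z) = g t := by
  obtain ⟨Φ, hΦ, hΦ'⟩ := exists_continuousOn_extension hp hfg
  obtain ⟨Ψ, hΨ, hΨ'⟩ := exists_continuousOn_extension hq hgf
  have mapsΦ : Set.MapsTo Φ (closure (f '' D)) (closure (g '' D)) := by
    refine Set.MapsTo.closure_of_continuousOn ?_ hΦ
    rintro _ ⟨t, ht, rfl⟩
    exact ⟨t, ht, (hΦ' t ht).symm⟩
  have mapsΨ : Set.MapsTo Ψ (closure (g '' D)) (closure (f '' D)) := by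
    refine Set.MapsTo.closure_of_continuousOn ?_ hΨ
    rintro _ ⟨t, ht, rfl⟩
    exact ⟨t, ht, (hΨ' t ht).symm⟩
  have left : Set.EqOn (Ψ ∘ Φ) id (closure (f '' D)) := by
    refine Set.EqOn.of_subset_closure (s := f '' D) ?_ (hΨ.comp hΦ mapsΦ) continuousOn_id
      subset_closure subset_rfl
    rintro _ ⟨t, ht, rfl⟩
    simp [hΦ' t ht, hΨ' t ht]
  have right : Set.EqOn (Φ ∘ Ψ) id (closure (g '' D)) := by
    refine Set.EqOn.of_subset_closure (s := g '' D) ?_ (hΦ.comp hΨ mapsΨ) continuousOn_id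
      subset_closure subset_rfl
    rintro _ ⟨t, ht, rfl⟩
    simp [hΦ' t ht, hΨ' t ht]
  exact ⟨{ toFun := mapsΦ.restrict, invFun := mapsΨ.restrict
           left_inv := fun x => Subtype.ext (left x.2)
           right_inv := fun x => Subtype.ext (right x.2)
           continuous_toFun := hΦ.mapsToRestrict mapsΦ
           continuous_invFun := hΨ.mapsToRestrict mapsΨ }, fun t ht h => hΦ' t ht⟩

end Extension

theorem alphaMap_zero_last {n : ℕ} (t : Fin n → ℝ) (j : Fin (n + 2)) (h) :
    alphaMap n t ⟨(0, j, Fin.last _), h⟩ = ext01 t j := by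
  simp [alphaMap, ext01_zero, ext01_last]

theorem zero_lt_and_lt_last {n : ℕ} (j : Fin n) :
    (0 : Fin (n + 2)) < j.castSucc.succ ∧ j.castSucc.succ < Fin.last (n + 1) :=
  ⟨Fin.succ_pos _, by
    rw [← Fin.succ_last, Fin.succ_lt_succ_iff]; exact Fin.castSucc_lt_last j⟩

theorem tendsto_ext01_of_alpha {n : ℕ} {T : Type*} {F : Filter T} {u : T → Fin n → ℝ}
    {x : TriIdx n → ℝ} (h : Tendsto (fun k => alphaMap n (u k)) F (𝓝 x)) :
    Tendsto u F (𝓝 fun j => x ⟨(0, j.castSucc.succ, Fin.last _), zero_lt_and_lt_last j⟩) := by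
  refine tendsto_pi_nhds.2 fun j => ?_
  refine (tendsto_pi_nhds.1 h ⟨(0, j.castSucc.succ, Fin.last _), zero_lt_and_lt_last j⟩).congr
    fun k => ?_
  rw [alphaMap_zero_last, ext01_castSucc_succ]

theorem tendsto_ext01 {n : ℕ} {T : Type*} {F : Filter T} {u : T → Fin n → ℝ} {v : Fin n → ℝ}
    (h : Tendsto u F (𝓝 v)) (i) : Tendsto (fun k => ext01 (u k) i) F (𝓝 (ext01 v i)) :=
  ((continuous_ext01 i).tendsto v).comp h

theorem exists_homeomorph_gammaMap (n : ℕ) :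
    ∃ e : Cycl n ≃ₜ closure (gammaMap n '' openSimplex n),
      ∀ t ∈ openSimplex n, ∀ h, (e ⟨betaMap n t, h⟩ : _ × _) = gammaMap n t := by
  refine exists_homeomorph_closure_image (p := Prod.fst)
    (q := fun z j => z.1 ⟨(0, j.castSucc.succ, Fin.last _), zero_lt_and_lt_last j⟩)
    (fun _ _ => rfl) (fun t _ => ?_) (fun F c hF hD hc => ?_) (fun F c hF hD hc => ?_)
  · funext j
    exact (alphaMap_zero_last t _ _).trans (ext01_castSucc_succ t j)
  · have h1 : Tendsto (fun t => t) F (𝓝 c.1) := (continuous_fst.tendsto c).comp hc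
    have h2 : ∀ q, Conv F fun t => sTilde n t q := fun q =>
      ⟨c.2 q, tendsto_pi_nhds.1 ((continuous_snd.tendsto c).comp hc) q⟩
    have hx := tendsto_ext01 h1
    refine Conv.prodMk (Conv.pi fun q => ?_)
      (Conv.pi fun a => Conv.pi fun b => conv_endShare hD hx h2 a b)
    exact conv_segRatio hD hx h2 q.2.1 q.2.2
  · have h1 : Tendsto (alphaMap n) F (𝓝 c.1) := (continuous_fst.tendsto c).comp hc
    have h2 : Tendsto endShare F (𝓝 c.2) := (continuous_snd.tendsto c).comp hc
    have h3 := tendsto_ext01_of_alpha h1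
    refine Conv.prodMk ⟨_, h3⟩ (Conv.pi fun q => conv_sTilde hD (tendsto_ext01 h3)
      (fun i j k hij hjk => ?_) (fun a b => ?_) q)
    · exact ⟨_, tendsto_pi_nhds.1 h1 ⟨(i, j, k), hij, hjk⟩⟩
    · exact ⟨_, tendsto_pi_nhds.1 (tendsto_pi_nhds.1 h2 a) b⟩

section Rescaling

/-- The pairs `(a, b)` and `(A, B)` of sequences have the same asymptotic ratio, either because
they are proportional or because both ratios tend to zero. -/
def SameRatio (a b A B : ℕ → ℝ) : Prop :=
  (∃ r : ℕ → ℝ, (∀ k, 0 < r k) ∧ (∀ k, A k = r k * a k) ∧ ∀ k, B k = r k * b k) ∨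
    (Tendsto (fun k => a k / b k) atTop (𝓝 0) ∧ Tendsto (fun k => A k / B k) atTop (𝓝 0))

variable {a b c A B C : ℕ → ℝ}

theorem SameRatio.eventually_lt (h : SameRatio a b A B) (hab : ∀ k, a k < b k)
    (hB : ∀ k, 0 < B k) : ∀ᶠ k in atTop, A k < B k := by
  rcases h with ⟨r, hr, hA, hB'⟩ | ⟨-, h⟩
  · refine Eventually.of_forall fun k => ?_
    rw [hA, hB']
    exact mul_lt_mul_of_pos_left (hab k) (hr k)
  · filter_upwards [h.eventually (gt_mem_nhds one_pos)] with k hk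
    exact (div_lt_one (hB k)).1 hk

theorem tendsto_segment_of_outer (ha : ∀ᶠ k in atTop, 0 ≤ a k) (hab : ∀ᶠ k in atTop, a k < b k)
    (hbc : ∀ᶠ k in atTop, b k < c k) (h : Tendsto (fun k => b k / c k) atTop (𝓝 0)) :
    Tendsto (fun k => (b k - a k) / (c k - a k)) atTop (𝓝 0) := by
  refine tendsto_of_tendsto_of_tendsto_of_le_of_le' tendsto_const_nhds h ?_ ?_
  · filter_upwards [ha, hab, hbc] with k h1 h2 h3
    exact div_nonneg (by linarith) (by linarith)
  · filter_upwards [ha, hab, hbc] with k h1 h2 h3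
    rw [div_le_div_iff₀ (by linarith) (by linarith)]
    nlinarith

theorem tendsto_segment_sub_of_inner (ha : ∀ᶠ k in atTop, 0 ≤ a k)
    (hab : ∀ᶠ k in atTop, a k < b k) (hbc : ∀ᶠ k in atTop, b k < c k)
    (h : Tendsto (fun k => a k / b k) atTop (𝓝 0)) :
    Tendsto (fun k => b k / c k - (b k - a k) / (c k - a k)) atTop (𝓝 0) := by
  refine tendsto_of_tendsto_of_tendsto_of_le_of_le' tendsto_const_nhds h ?_ ?_
  · filter_upwards [ha, hab, hbc] with k h1 h2 h3
    rw [sub_nonneg, div_le_div_iff₀ (by linarith) (by linarith)]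
    nlinarith
  · filter_upwards [ha, hab, hbc] with k h1 h2 h3
    have hc : 0 < c k := by linarith
    have hca : 0 < c k - a k := by linarith
    have hb : 0 < b k := by linarith
    rw [div_sub_div _ _ hc.ne' hca.ne', div_le_div_iff₀ (by positivity) hb]
    have e : (b k * (c k - a k) - c k * (b k - a k)) * b k = a k * ((c k - b k) * b k) := by ring
    rw [e]
    refine mul_le_mul_of_nonneg_left ?_ h1
    nlinarith [mul_nonneg h1 hb.le]

theorem SameRatio.tendsto_segment_sub (hab : SameRatio a b A B) (hbc : SameRatio b c B C)
    (ha : ∀ k, 0 ≤ a k) (lab : ∀ k, a k < b k) (lbc : ∀ k, b k < c k)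
    (hA : ∀ k, 0 ≤ A k) (hB : ∀ k, 0 < B k) (hC : ∀ k, 0 < C k) :
    Tendsto (fun k => (B k - A k) / (C k - A k) - (b k - a k) / (c k - a k)) atTop (𝓝 0) := by
  have lAB := hab.eventually_lt lab hB
  have lBC := hbc.eventually_lt lbc hC
  have ha' := Eventually.of_forall (f := atTop) ha
  have lab' := Eventually.of_forall (f := atTop) lab
  have lbc' := Eventually.of_forall (f := atTop) lbc
  have hA' := Eventually.of_forall (f := atTop) hA
  rcases hbc with ⟨r, hr, hBr, hCr⟩ | ⟨h1, h2⟩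
  · rcases hab with ⟨r', hr', hAr', hBr'⟩ | ⟨h1, h2⟩
    · refine tendsto_const_nhds.congr fun k => ?_
      have hb : 0 < b k := (ha k).trans_lt (lab k)
      have e : r' k = r k := mul_right_cancel₀ hb.ne' ((hBr' k).symm.trans (hBr k))
      rw [hAr', hBr, hCr, e, ← mul_sub, ← mul_sub, mul_div_mul_left _ _ (hr k).ne', sub_self]
    · have := (tendsto_segment_sub_of_inner ha' lab' lbc' h1).sub
        (tendsto_segment_sub_of_inner hA' lAB lBC h2)
      rw [sub_zero] at this
      refine this.congr fun k => ?_
      have e : B k / C k = b k / c k := by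
        rw [hBr, hCr, mul_div_mul_left _ _ (hr k).ne']
      rw [e]; ring
  · have := (tendsto_segment_of_outer hA' lAB lBC h2).sub
      (tendsto_segment_of_outer ha' lab' lbc' h1)
    rwa [sub_zero] at this

/-- The scale `ε_k = 1 / (k + 1)`. -/
noncomputable def epsSeq (k : ℕ) : ℝ := 1 / ((k : ℝ) + 1)

theorem epsSeq_pos (k : ℕ) : 0 < epsSeq k := Nat.one_div_pos_of_nat

theorem tendsto_epsSeq_pow {m : ℕ} (hm : m ≠ 0) :
    Tendsto (fun k => epsSeq k ^ m) atTop (𝓝 0) := by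
  have := (tendsto_one_div_add_atTop_nhds_zero_nat (𝕜 := ℝ)).pow m
  rwa [zero_pow hm] at this

variable {I : Type*} {D : ℕ → I → ℝ} {w : I → ℝ} {e : I → ℕ}

theorem tendsto_zero_of_level (h : ∀ a, Tendsto (fun k => D k a / epsSeq k ^ e a) atTop (𝓝 (w a)))
    {a : I} (ha : e a ≠ 0) : Tendsto (fun k => D k a) atTop (𝓝 0) := by
  have := (h a).mul (tendsto_epsSeq_pow ha)
  rw [mul_zero] at this
  refine this.congr fun k => ?_
  have := epsSeq_pos k
  field_simp

theorem tendsto_div_zero_of_level_lt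
    (h : ∀ a, Tendsto (fun k => D k a / epsSeq k ^ e a) atTop (𝓝 (w a))) (hw : ∀ a, 0 < w a)
    (hD : ∀ a, ∀ᶠ k in atTop, 0 < D k a) {a b : I} (hab : e a < e b) :
    Tendsto (fun k => D k b / D k a) atTop (𝓝 0) := by
  have := ((h b).div (h a) (hw a).ne').mul (tendsto_epsSeq_pow (Nat.sub_ne_zero_of_lt hab))
  rw [mul_zero] at this
  refine this.congr' ?_
  filter_upwards [hD a] with k h2
  have h1 := epsSeq_pos k
  have h3 : epsSeq k ^ e b = epsSeq k ^ e a * epsSeq k ^ (e b - e a) := by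
    rw [← pow_add, Nat.add_sub_cancel' hab.le]
  simp only [Pi.div_apply]
  rw [h3]
  field_simp

theorem tendsto_share_of_level_lt
    (h : ∀ a, Tendsto (fun k => D k a / epsSeq k ^ e a) atTop (𝓝 (w a))) (hw : ∀ a, 0 < w a)
    (hD : ∀ a, ∀ᶠ k in atTop, 0 < D k a) {a b : I} (hab : e a < e b) :
    Tendsto (fun k => D k a / (D k a + D k b)) atTop (𝓝 1) := by
  have := ((tendsto_div_zero_of_level_lt h hw hD hab).const_add 1).inv₀ (by norm_num)
  rw [add_zero, inv_one] at this
  refine this.congr' ?_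
  filter_upwards [hD a, hD b] with k h2 h3
  field_simp

theorem tendsto_share_of_level_eq
    (h : ∀ a, Tendsto (fun k => D k a / epsSeq k ^ e a) atTop (𝓝 (w a))) (hw : ∀ a, 0 < w a)
    (hD : ∀ a, ∀ᶠ k in atTop, 0 < D k a) {a b : I} (hab : e a = e b) :
    Tendsto (fun k => D k a / (D k a + D k b)) atTop (𝓝 (w a / (w a + w b))) := by
  refine ((h a).div ((h a).add (h b)) (add_pos (hw a) (hw b)).ne').congr' ?_
  filter_upwards [hD a, hD b] with k h2 h3
  have h1 := epsSeq_pos k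
  simp only [Pi.div_apply]
  rw [hab]
  field_simp

theorem tendsto_div_of_tendsto_share {A B : ℕ → ℝ} (hA : ∀ k, 0 < A k) (hB : ∀ k, 0 < B k) {v : ℝ}
    (hv : v ≠ 0) (h : Tendsto (fun k => A k / (A k + B k)) atTop (𝓝 v)) :
    Tendsto (fun k => B k / A k) atTop (𝓝 (v⁻¹ - 1)) := by
  refine ((h.inv₀ hv).sub_const 1).congr fun k => ?_
  have h1 := hA k
  have h2 := hB k
  field_simp
  ring

/-- A family of positive sequences can be rescaled, with one factor per level, to have the
orders of magnitude `w a * ε ^ e a` whenever its shares have the corresponding limits. -/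
theorem exists_rescaling {o : I} {d : ℕ → I → ℝ} (hw : ∀ a, 0 < w a) (ho : e o = 0)
    (hwo : w o = 1) (hd : ∀ k a, 0 < d k a) (hdo : ∀ k, d k o = 1)
    (heq : ∀ a b, e a = e b →
      Tendsto (fun k => d k a / (d k a + d k b)) atTop (𝓝 (w a / (w a + w b))))
    (hlt : ∀ a b, e a < e b → Tendsto (fun k => d k a / (d k a + d k b)) atTop (𝓝 1)) :
    ∃ D : ℕ → I → ℝ, (∀ k a, 0 < D k a) ∧ (∀ k a, e a = 0 → D k a = d k a) ∧
      (∀ a, e a ≠ 0 → Tendsto (fun k => d k a) atTop (𝓝 0)) ∧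
      (∀ a, Tendsto (fun k => D k a / epsSeq k ^ e a) atTop (𝓝 (w a))) ∧
      ∀ a b, (∀ k, d k a < d k b) →
        SameRatio (fun k => d k a) (fun k => d k b) (fun k => D k a) (fun k => D k b) := by
  have hrep : ∀ m, ∃ r : I, (m = 0 → r = o) ∧ ∀ a, e a = m → e r = m := by
    intro m
    by_cases hm : m = 0
    · exact ⟨o, fun _ => rfl, fun _ _ => ho.trans hm.symm⟩
    · by_cases h : ∃ a, e a = m
      · obtain ⟨a, ha⟩ := h
        exact ⟨a, fun h => absurd h hm, fun _ _ => ha⟩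
      · exact ⟨o, fun h => absurd h hm, fun a ha => absurd ⟨a, ha⟩ h⟩
  choose r hr0 hr using hrep
  have div_eq : ∀ a b, e a = e b → Tendsto (fun k => d k b / d k a) atTop (𝓝 (w b / w a)) := by
    intro a b hab
    have ha := hw a
    have hb := hw b
    have := tendsto_div_of_tendsto_share (fun k => hd k a) (fun k => hd k b) (by positivity)
      (heq a b hab)
    convert this using 2
    field_simp
    ring
  have div_lt : ∀ a b, e a < e b → Tendsto (fun k => d k b / d k a) atTop (𝓝 0) := by
    intro a b hab
    simpa using tendsto_div_of_tendsto_share (fun k => hd k a) (fun k => hd k b) one_ne_zero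
      (hlt a b hab)
  let s : ℕ → ℕ → ℝ := fun k m => w (r m) * epsSeq k ^ m / d k (r m)
  have hs : ∀ k m, 0 < s k m := fun k m =>
    div_pos (mul_pos (hw _) (pow_pos (epsSeq_pos k) _)) (hd _ _)
  have hD : ∀ k a, 0 < s k (e a) * d k a := fun k a => mul_pos (hs _ _) (hd _ _)
  have hlev : ∀ a, Tendsto (fun k => s k (e a) * d k a / epsSeq k ^ e a) atTop (𝓝 (w a)) := by
    intro a
    have := (div_eq (r (e a)) a (hr _ a rfl)).const_mul (w (r (e a)))
    rw [mul_div_cancel₀ _ (hw _).ne'] at this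
    refine this.congr fun k => ?_
    have h1 := epsSeq_pos k
    have h2 := hd k (r (e a))
    simp only [s]
    field_simp
  refine ⟨fun k a => s k (e a) * d k a, hD, fun k a ha => ?_, fun a ha => ?_, hlev,
    fun a b hab => ?_⟩
  · simp [s, ha, hr0 0 rfl, hwo, hdo]
  · simpa [hdo] using div_lt o a (by omega)
  · rcases lt_trichotomy (e a) (e b) with h | h | h
    · have := (div_lt a b h).eventually (gt_mem_nhds one_pos)
      obtain ⟨k, hk⟩ := this.exists
      exact absurd ((div_lt_one (hd k a)).1 hk) (hab k).not_gt
    · exact .inl ⟨fun k => s k (e a), fun k => hs k _, fun k => rfl, fun k => by rw [h]⟩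
    · exact .inr ⟨div_lt b a h, tendsto_div_zero_of_level_lt hlev hw (fun a => .of_forall (hD · a)) h⟩

end Rescaling

section Realization

variable {n : ℕ}

/-- Reflected version of `SameRatio.tendsto_segment_sub`. -/
theorem SameRatio.tendsto_segment_sub_reflect {a b c A B C : ℕ → ℝ}
    (hcb : SameRatio (fun k => 1 - c k) (fun k => 1 - b k) C B)
    (hba : SameRatio (fun k => 1 - b k) (fun k => 1 - a k) B A)
    (hc : ∀ k, c k ≤ 1) (lab : ∀ k, a k < b k) (lbc : ∀ k, b k < c k)
    (hA : ∀ k, 0 < A k) (hB : ∀ k, 0 < B k) (hC : ∀ k, 0 ≤ C k) :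
    Tendsto (fun k => ((1 - B k) - (1 - A k)) / ((1 - C k) - (1 - A k)) -
      (b k - a k) / (c k - a k)) atTop (𝓝 0) := by
  have l1 : ∀ k, 1 - c k < 1 - b k := fun k => by linarith [lbc k]
  have l2 : ∀ k, 1 - b k < 1 - a k := fun k => by linarith [lab k]
  have h := (hcb.tendsto_segment_sub hba (fun k => by linarith [hc k]) l1 l2 hC hB hA).neg
  rw [neg_zero] at h
  refine h.congr' ?_
  filter_upwards [hcb.eventually_lt l1 hB, hba.eventually_lt l2 hA] with k h1 h2
  have h3 : 1 - C k - (1 - A k) ≠ 0 := by linarith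
  have h4 : A k - C k ≠ 0 := by linarith
  have h5 : c k - a k ≠ 0 := by linarith [lab k, lbc k]
  have h6 : 1 - a k - (1 - c k) ≠ 0 := by linarith [lab k, lbc k]
  have e1 : (1 - B k - (1 - A k)) / (1 - C k - (1 - A k)) = 1 - (B k - C k) / (A k - C k) := by
    rw [one_sub_div h4]; congr 1 <;> ring
  have e2 : (b k - a k) / (c k - a k) = 1 - (1 - b k - (1 - c k)) / (1 - a k - (1 - c k)) := by
    rw [one_sub_div h6]; congr 1 <;> ring
  rw [e1, e2]
  ring

/-- Every element of the fiber of shares over a point of the associahedron occurs in the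
closure of the image of `gammaMap`. -/
theorem mem_closure_gammaMap_of_mem_shareFiber {x : TriIdx n → ℝ}
    {M₀ M : Fin (n + 1) ⊕ Fin (n + 1) → Fin (n + 1) ⊕ Fin (n + 1) → ℝ}
    (h : (x, M₀) ∈ closure (gammaMap n '' openSimplex n))
    (hM : M ∈ shareFiber M₀ (Fin.last n) 0) (hpos : ∀ a, 0 < M (.inl (Fin.last n)) a) :
    (x, M) ∈ closure (gammaMap n '' openSimplex n) := by
  obtain ⟨z, hz, hlim⟩ := mem_closure_iff_seq_limit.1 h
  choose u hu huz using hz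
  obtain rfl : (fun k => gammaMap n (u k)) = z := funext huz
  have hα : Tendsto (fun k => alphaMap n (u k)) atTop (𝓝 x) :=
    (continuous_fst.tendsto _).comp hlim
  have hE : ∀ a b, Tendsto (fun k => endShare (u k) a b) atTop (𝓝 (M₀ a b)) := fun a b =>
    tendsto_pi_nhds.1 (tendsto_pi_nhds.1 ((continuous_snd.tendsto _).comp hlim) a) b
  have hx := tendsto_ext01 (tendsto_ext01_of_alpha hα)
  generalize hp : ext01 (fun j => x ⟨(0, j.castSucc.succ, Fin.last _), zero_lt_and_lt_last j⟩) = p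
    at hx
  have p0 : p 0 = 0 := by rw [← hp, ext01_zero]
  have p1 : p (Fin.last _) = 1 := by rw [← hp, ext01_last]
  have pmem : ∀ i, p i ∈ Set.Icc (0 : ℝ) 1 := fun i => mem_Icc_of_tendsto (hx i)
    (Eventually.of_forall fun k => ⟨ext01_nonneg (hu k) i, ext01_le_one (hu k) i⟩)
  have lt : ∀ k {i j}, i < j → ext01 (u k) i < ext01 (u k) j := fun k i j hij =>
    mem_openSimplex_iff.1 (hu k) hij
  have pmono : Monotone p := fun i j hij => le_of_tendsto_of_tendsto' (hx i) (hx j) fun k =>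
    (mem_openSimplex_iff.1 (hu k)).monotone hij
  obtain ⟨w, e, hw, wo, eo, heq, hlt⟩ := hM.1.exists_magnitude (.inl (Fin.last n)) hpos
  obtain ⟨hMshare, hML, hMR, hMhalf⟩ := hM
  have eo' : e (.inr 0) = 0 := by
    by_contra hne
    have := hlt (.inl (Fin.last n)) (.inr 0) (by omega)
    rw [hMhalf] at this
    norm_num at this
  have wo' : w (.inr 0) = 1 := by
    have := heq (.inl (Fin.last n)) (.inr 0) (by omega)
    rw [hMhalf, wo, div_eq_div_iff two_ne_zero (by linarith [hw (.inr 0)])] at this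
    linarith
  obtain ⟨DL, DL1, DL2, DL3, DL4, DL5⟩ := exists_rescaling (I := Fin (n + 1))
    (w := fun i => w (.inl i)) (e := fun i => e (.inl i)) (o := Fin.last n)
    (d := fun k i => endDist (u k) (.inl i)) (fun _ => hw _) eo wo (fun k i => endDist_pos (hu k) _)
    (fun k => ext01_last (u k)) (fun i j hij => heq _ _ hij ▸ hML i j ▸ hE (.inl i) (.inl j))
    (fun i j hij => hlt _ _ hij ▸ hML i j ▸ hE (.inl i) (.inl j))
  obtain ⟨DR, DR1, DR2, DR3, DR4, DR5⟩ := exists_rescaling (I := Fin (n + 1))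
    (w := fun i => w (.inr i)) (e := fun i => e (.inr i)) (o := 0)
    (d := fun k i => endDist (u k) (.inr i)) (fun _ => hw _) eo' wo'
    (fun k i => endDist_pos (hu k) _)
    (fun k => by simp [endDist, ext01_zero]) (fun i j hij => heq _ _ hij ▸ hMR i j ▸ hE _ _)
    (fun i j hij => hlt _ _ hij ▸ hMR i j ▸ hE _ _)
  have eL : ∀ i : Fin (n + 1), p i.succ ≠ 0 → e (.inl i) = 0 := fun i hi => by
    by_contra hne
    exact hi (tendsto_nhds_unique (hx i.succ) (DL3 i hne))
  have eR : ∀ i : Fin (n + 1), p i.castSucc ≠ 1 → e (.inr i) = 0 := fun i hi => by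
    by_contra hne
    have := tendsto_nhds_unique ((hx i.castSucc).const_sub 1) (DR3 i hne)
    exact hi (by linarith)
  let yL : ℕ → Fin (n + 2) → ℝ := fun k => Fin.cases 0 (DL k)
  let yR : ℕ → Fin (n + 2) → ℝ := fun k => Fin.lastCases 0 (DR k)
  have yL0 : ∀ k, yL k 0 = 0 := fun k => rfl
  have yLs : ∀ k i, yL k i.succ = DL k i := fun k i => rfl
  have yRl : ∀ k, yR k (Fin.last _) = 0 := fun k => Fin.lastCases_last
  have yRs : ∀ k i, yR k i.castSucc = DR k i := fun k i => Fin.lastCases_castSucc i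
  have L1 : ∀ k i, p i ≠ 0 → yL k i = ext01 (u k) i := by
    intro k i hi
    cases i using Fin.cases with
    | zero => exact absurd p0 hi
    | succ i => rw [yLs, DL2 k i (eL i hi)]; rfl
  have R1 : ∀ k i, p i ≠ 1 → yR k i = 1 - ext01 (u k) i := by
    intro k i hi
    cases i using Fin.lastCases with
    | last => exact absurd p1 hi
    | cast i => rw [yRs, DR2 k i (eR i hi)]; rfl
  have Lpos : ∀ k i, i ≠ 0 → 0 < yL k i := by
    intro k i hi
    obtain ⟨i, rfl⟩ := Fin.exists_succ_eq.2 hi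
    exact DL1 k i
  have Rpos : ∀ k i, i ≠ Fin.last _ → 0 < yR k i := by
    intro k i hi
    obtain ⟨i, rfl⟩ := Fin.exists_castSucc_eq.2 hi
    rw [yRs]
    exact DR1 k i
  have Lnonneg : ∀ k i, 0 ≤ yL k i := fun k i => by
    by_cases hi : i = 0
    · rw [hi, yL0]
    · exact (Lpos k i hi).le
  have Rnonneg : ∀ k i, 0 ≤ yR k i := fun k i => by
    by_cases hi : i = Fin.last _
    · rw [hi, yRl]
    · exact (Rpos k i hi).le
  have Llim : ∀ i, Tendsto (fun k => yL k i) atTop (𝓝 (p i)) := by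
    intro i
    by_cases hi : p i = 0
    · rw [hi]
      cases i using Fin.cases with
      | zero => exact tendsto_const_nhds
      | succ i =>
        by_cases he : e (.inl i) = 0
        · rw [← hi]
          exact (hx i.succ).congr fun k => (DL2 k i he).symm
        · exact tendsto_zero_of_level DL4 he
    · exact (hx i).congr fun k => (L1 k i hi).symm
  have Rlim : ∀ i, Tendsto (fun k => yR k i) atTop (𝓝 (1 - p i)) := by
    intro i
    by_cases hi : p i = 1
    · cases i using Fin.lastCases with
      | last =>
        simp only [yRl, p1, sub_self]
        exact tendsto_const_nhds
      | cast i =>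
        simp only [yRs]
        by_cases he : e (.inr i) = 0
        · exact ((hx i.castSucc).const_sub 1).congr fun k => (DR2 k i he).symm
        · rw [hi, sub_self]
          exact tendsto_zero_of_level DR4 he
    · exact ((hx i).const_sub 1).congr fun k => (R1 k i hi).symm
  have Lratio : ∀ i j, i < j → SameRatio (fun k => ext01 (u k) i) (fun k => ext01 (u k) j)
      (fun k => yL k i) (fun k => yL k j) := by
    intro i j hij
    obtain ⟨j, rfl⟩ := Fin.exists_succ_eq.2 (Fin.ne_zero_of_lt hij)
    cases i using Fin.cases with
    | zero => exact .inr ⟨by simp [ext01_zero], by simp [yL0]⟩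
    | succ i => exact DL5 i j fun k => lt k hij
  have Rratio : ∀ i j, i < j → SameRatio (fun k => 1 - ext01 (u k) j)
      (fun k => 1 - ext01 (u k) i) (fun k => yR k j) (fun k => yR k i) := by
    intro i j hij
    obtain ⟨i, rfl⟩ := Fin.exists_castSucc_eq.2 (Fin.ne_last_of_lt hij)
    cases j using Fin.lastCases with
    | last => exact .inr ⟨by simp [ext01_last], by simp [yRl]⟩
    | cast j =>
      simp only [yRs]
      exact DR5 j i fun k => sub_lt_sub_left (lt k hij) 1
  let y : ℕ → Fin (n + 2) → ℝ := fun k i => if p i = 1 then 1 - yR k i else yL k i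
  have Y1 : ∀ k i, p i ≠ 1 → y k i = yL k i := fun k i hi => if_neg hi
  have Y2 : ∀ k i, p i ≠ 0 → y k i = 1 - yR k i := fun k i hi => by
    by_cases h1 : p i = 1
    · exact if_pos h1
    · rw [Y1 k i h1, L1 k i hi, R1 k i h1]; ring
  have ylim : ∀ i, Tendsto (fun k => y k i) atTop (𝓝 (p i)) := by
    intro i
    by_cases hi : p i = 1
    · have := (Rlim i).const_sub 1
      rw [sub_sub_cancel] at this
      exact this.congr fun k => (Y2 k i (by rw [hi]; exact one_ne_zero)).symm
    · exact (Llim i).congr fun k => (Y1 k i hi).symm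
  have ylt : ∀ i j, i < j → ∀ᶠ k in atTop, y k i < y k j := by
    intro i j hij
    rcases (pmono hij.le).lt_or_eq with h1 | h1
    · exact (ylim i).eventually_lt (ylim j) h1
    by_cases h2 : p i = 1
    · have h3 : p i ≠ 0 := by rw [h2]; exact one_ne_zero
      filter_upwards [(Rratio i j hij).eventually_lt (fun k => sub_lt_sub_left (lt k hij) 1)
        fun k => Rpos k i (Fin.ne_last_of_lt hij)] with k hk
      rw [Y2 k i h3, Y2 k j (h1 ▸ h3)]
      linarith
    · filter_upwards [(Lratio i j hij).eventually_lt (fun k => lt k hij)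
        fun k => Lpos k j (Fin.ne_zero_of_lt hij)] with k hk
      rw [Y1 k i h2, Y1 k j (h1 ▸ h2)]
      exact hk
  have yseg : ∀ i j l, i < j → j < l → Tendsto (fun k => (y k j - y k i) / (y k l - y k i) -
      segRatio i j l (u k)) atTop (𝓝 0) := by
    intro i j l hij hjl
    rcases (pmono (hij.trans hjl).le).lt_or_eq with h1 | h1
    · have h2 : p l - p i ≠ 0 := (sub_pos.2 h1).ne'
      have := (((ylim j).sub (ylim i)).div ((ylim l).sub (ylim i)) h2).sub
        (((hx j).sub (hx i)).div ((hx l).sub (hx i)) h2)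
      rwa [sub_self] at this
    have h2 : p i = p j := le_antisymm (pmono hij.le) (h1 ▸ pmono hjl.le)
    by_cases h3 : p i = 1
    · have h4 : p i ≠ 0 := by rw [h3]; exact one_ne_zero
      simp only [Y2 _ i h4, Y2 _ j (h2 ▸ h4), Y2 _ l (h1 ▸ h4)]
      exact (Rratio j l hjl).tendsto_segment_sub_reflect (Rratio i j hij)
        (fun k => ext01_le_one (hu k) l) (fun k => lt k hij) (fun k => lt k hjl)
        (fun k => Rpos k i (Fin.ne_last_of_lt hij)) (fun k => Rpos k j (Fin.ne_last_of_lt hjl))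
        (fun k => Rnonneg k l)
    · simp only [Y1 _ i h3, Y1 _ j (h2 ▸ h3), Y1 _ l (h1 ▸ h3)]
      exact (Lratio i j hij).tendsto_segment_sub (Lratio j l hjl)
        (fun k => ext01_nonneg (hu k) i) (fun k => lt k hij) (fun k => lt k hjl)
        (fun k => Lnonneg k i) (fun k => Lpos k j (Fin.ne_zero_of_lt hij))
        (fun k => Lpos k l (Fin.ne_zero_of_lt hjl))
  let τ : ℕ → Fin n → ℝ := fun k i => y k i.castSucc.succ
  have hτ : ∀ k, ext01 (τ k) = y k := by
    intro k
    refine ext01_ext ?_ ?_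
    · rw [Y1 k 0 (by rw [p0]; exact zero_ne_one), yL0]
    · rw [Y2 k _ (by rw [p1]; exact one_ne_zero), yRl, sub_zero]
  have hmem : ∀ᶠ k in atTop, τ k ∈ openSimplex n := by
    have : ∀ᶠ k in atTop, ∀ i j, i < j → y k i < y k j :=
      eventually_all.2 fun i => eventually_all.2 fun j => eventually_imp_distrib_left.2 (ylt i j)
    filter_upwards [this] with k hk
    rw [mem_openSimplex_iff, hτ]
    exact fun i j hij => hk i j hij
  have hlev : ∀ a, Tendsto (fun k => endDist (τ k) a / epsSeq k ^ e a) atTop (𝓝 (w a)) := by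
    rintro (i | i)
    · simp only [endDist, Sum.elim_inl, hτ]
      by_cases hi : p i.succ = 1
      · have h0 := eL i (by rw [hi]; exact one_ne_zero)
        have h1 := DL4 i
        simp only [h0, pow_zero, div_one, DL2 _ i h0] at h1 ⊢
        rw [← tendsto_nhds_unique (hx i.succ) h1]
        exact ylim _
      · simp only [Y1 _ _ hi]
        exact DL4 i
    · simp only [endDist, Sum.elim_inr, hτ]
      by_cases hi : p i.castSucc = 0
      · have h0 := eR i (by rw [hi]; exact zero_ne_one)
        have h1 := DR4 i
        simp only [h0, pow_zero, div_one, DR2 _ i h0] at h1 ⊢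
        rw [← tendsto_nhds_unique ((hx i.castSucc).const_sub 1) h1]
        exact (ylim _).const_sub 1
      · simp only [Y2 _ _ hi, sub_sub_cancel, yRs]
        exact DR4 i
  have hshare : ∀ a b, Tendsto (fun k => endShare (τ k) a b) atTop (𝓝 (M a b)) := by
    have pos : ∀ a, ∀ᶠ k in atTop, 0 < endDist (τ k) a := fun a =>
      hmem.mono fun k hk => endDist_pos hk a
    intro a b
    rcases lt_trichotomy (e a) (e b) with h | h | h
    · rw [hlt a b h]
      exact tendsto_share_of_level_lt hlev hw pos h
    · rw [heq a b h]
      exact tendsto_share_of_level_eq hlev hw pos h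
    · rw [← sub_eq_of_eq_add (hMshare.add a b).symm, hlt b a h]
      refine ((tendsto_share_of_level_lt hlev hw pos h).const_sub 1).congr' ?_
      filter_upwards [pos a, pos b] with k ha hb
      rw [endShare, one_sub_div (by positivity), add_sub_cancel_left, add_comm]
  refine mem_closure_of_tendsto (f := fun k => gammaMap n (τ k)) (b := atTop) ?_
    (hmem.mono fun k hk => ⟨_, hk, rfl⟩)
  refine Tendsto.prodMk_nhds (tendsto_pi_nhds.2 fun q => ?_)
    (tendsto_pi_nhds.2 fun a => tendsto_pi_nhds.2 fun b => hshare a b)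
  have h1 := (yseg q.1.1 q.1.2.1 q.1.2.2 q.2.1 q.2.2).add (tendsto_pi_nhds.1 hα q)
  rw [zero_add] at h1
  refine h1.congr fun k => ?_
  simp only [alphaMap, hτ, segRatio]
  ring

end Realization

section Fiber

variable {n : ℕ}

theorem isShare_endShare {t : Fin n → ℝ} (ht : t ∈ openSimplex n) : IsShare (endShare t) where
  nonneg a b := div_nonneg (endDist_pos ht a).le (add_pos (endDist_pos ht a) (endDist_pos ht b)).le
  add a b := by
    have ha := endDist_pos ht a
    have hb := endDist_pos ht b
    rw [endShare, endShare, add_comm (endDist t b), ← add_div, div_self (by positivity)]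
  cyc a b c := by
    have ha := endDist_pos ht a
    have hb := endDist_pos ht b
    have hc := endDist_pos ht c
    simp only [endShare, add_comm (endDist t b) (endDist t a), add_comm (endDist t c) (endDist t b),
      add_comm (endDist t c) (endDist t a)]
    field_simp

theorem endDist_le_one {t : Fin n → ℝ} (ht : t ∈ openSimplex n) (a) : endDist t a ≤ 1 := by
  rcases a with a | a
  · exact ext01_le_one ht a.succ
  · exact sub_le_self _ (ext01_nonneg ht _)

theorem endDist_inl_last (t : Fin n → ℝ) : endDist t (.inl (Fin.last n)) = 1 := ext01_last t

theorem endDist_inr_zero (t : Fin n → ℝ) : endDist t (.inr 0) = 1 := by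
  simp [endDist, ext01_zero]

theorem alphaMap_mem_Icc {t : Fin n → ℝ} (ht : t ∈ openSimplex n) (q) :
    alphaMap n t q ∈ Set.Icc (0 : ℝ) 1 := by
  have h1 := mem_openSimplex_iff.1 ht q.2.1
  have h2 := mem_openSimplex_iff.1 ht q.2.2
  exact div_mem_Icc (by linarith) (by linarith)

theorem closure_gammaMap_induction
    {P : (TriIdx n → ℝ) × (Fin (n + 1) ⊕ Fin (n + 1) → Fin (n + 1) ⊕ Fin (n + 1) → ℝ) → Prop}
    (hP : IsClosed {z | P z}) (h : ∀ t ∈ openSimplex n, P (gammaMap n t)) {z}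
    (hz : z ∈ closure (gammaMap n '' openSimplex n)) : P z := by
  refine closure_minimal (t := {z | P z}) ?_ hP hz
  rintro _ ⟨t, ht, rfl⟩
  exact h t ht

variable {x : TriIdx n → ℝ} {M M' : Fin (n + 1) ⊕ Fin (n + 1) → Fin (n + 1) ⊕ Fin (n + 1) → ℝ}

theorem mem_Icc_of_mem_closure_gammaMap (h : (x, M) ∈ closure (gammaMap n '' openSimplex n))
    (q) : x q ∈ Set.Icc (0 : ℝ) 1 :=
  closure_gammaMap_induction (P := fun z => z.1 q ∈ Set.Icc (0 : ℝ) 1)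
    (isClosed_Icc.preimage (by fun_prop)) (fun _ ht => alphaMap_mem_Icc ht q) h

theorem isShare_of_mem_closure_gammaMap (h : (x, M) ∈ closure (gammaMap n '' openSimplex n)) :
    IsShare M where
  nonneg a b := closure_gammaMap_induction (P := fun z => 0 ≤ z.2 a b)
    (isClosed_le (by fun_prop) (by fun_prop)) (fun _ ht => (isShare_endShare ht).nonneg a b) h
  add a b := closure_gammaMap_induction (P := fun z => z.2 a b + z.2 b a = 1)
    (isClosed_eq (by fun_prop) (by fun_prop)) (fun _ ht => (isShare_endShare ht).add a b) h
  cyc a b c := closure_gammaMap_induction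
    (P := fun z => z.2 a b * z.2 b c * z.2 c a = z.2 b a * z.2 c b * z.2 a c)
    (isClosed_eq (by fun_prop) (by fun_prop)) (fun _ ht => (isShare_endShare ht).cyc a b c) h

theorem base_eq_half_of_mem_closure_gammaMap
    (h : (x, M) ∈ closure (gammaMap n '' openSimplex n)) :
    M (.inl (Fin.last n)) (.inr 0) = 1 / 2 :=
  closure_gammaMap_induction (P := fun z => z.2 (.inl (Fin.last n)) (.inr 0) = 1 / 2)
    (isClosed_eq (by fun_prop) (by fun_prop)) (fun t _ => by
      simp only [gammaMap, endShare, endDist_inl_last, endDist_inr_zero]; norm_num) h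

theorem base_pos_of_mem_closure_gammaMap (h : (x, M) ∈ closure (gammaMap n '' openSimplex n))
    (a) : 0 < M (.inl (Fin.last n)) a :=
  one_half_pos.trans_le <|
    closure_gammaMap_induction (P := fun z => 1 / 2 ≤ z.2 (.inl (Fin.last n)) a)
      (isClosed_le (by fun_prop) (by fun_prop)) (fun t ht => by
        simp only [gammaMap, endShare, endDist_inl_last]
        have h1 := endDist_pos ht a
        have h2 := endDist_le_one ht a
        rw [div_le_div_iff₀ two_pos (by positivity)]
        linarith) h

theorem inl_block_unique (h : (x, M) ∈ closure (gammaMap n '' openSimplex n))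
    (h' : (x, M') ∈ closure (gammaMap n '' openSimplex n)) (i j) :
    M (.inl i) (.inl j) = M' (.inl i) (.inl j) := by
  have hs := isShare_of_mem_closure_gammaMap h
  have hs' := isShare_of_mem_closure_gammaMap h'
  wlog hij : i ≤ j generalizing i j
  · linarith [this j i (le_of_not_ge hij), hs.add (.inl i) (.inl j), hs'.add (.inl i) (.inl j)]
  rcases hij.eq_or_lt with rfl | hij
  · linarith [hs.add (.inl i) (.inl i), hs'.add (.inl i) (.inl i)]
  have key : ∀ {M}, (x, M) ∈ closure (gammaMap n '' openSimplex n) → _ := fun h =>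
    closure_gammaMap_induction (P := fun z => z.2 (.inl i) (.inl j) *
      (1 + z.1 ⟨(0, i.succ, j.succ), Fin.succ_pos i, Fin.succ_lt_succ_iff.2 hij⟩) =
        z.1 ⟨(0, i.succ, j.succ), Fin.succ_pos i, Fin.succ_lt_succ_iff.2 hij⟩)
      (isClosed_eq (by fun_prop) (by fun_prop)) (fun t ht => by
        have h1 := endDist_pos ht (.inl i)
        have h2 := endDist_pos ht (.inl j)
        simp only [gammaMap, endShare, alphaMap, ext01_zero, sub_zero, endDist, Sum.elim_inl]
          at h1 h2 ⊢
        field_simp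
        ring) h
  have hpos := (mem_Icc_of_mem_closure_gammaMap h
    ⟨(0, i.succ, j.succ), Fin.succ_pos i, Fin.succ_lt_succ_iff.2 hij⟩).1
  exact mul_right_cancel₀ (by positivity) ((key h).trans (key h').symm)

theorem inr_block_unique (h : (x, M) ∈ closure (gammaMap n '' openSimplex n))
    (h' : (x, M') ∈ closure (gammaMap n '' openSimplex n)) (i j) :
    M (.inr i) (.inr j) = M' (.inr i) (.inr j) := by
  have hs := isShare_of_mem_closure_gammaMap h
  have hs' := isShare_of_mem_closure_gammaMap h'
  wlog hij : i ≤ j generalizing i j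
  · linarith [this j i (le_of_not_ge hij), hs.add (.inr i) (.inr j), hs'.add (.inr i) (.inr j)]
  rcases hij.eq_or_lt with rfl | hij
  · linarith [hs.add (.inr i) (.inr i), hs'.add (.inr i) (.inr i)]
  have key : ∀ {M}, (x, M) ∈ closure (gammaMap n '' openSimplex n) → _ := fun h =>
    closure_gammaMap_induction (P := fun z => z.2 (.inr i) (.inr j) *
      (2 - z.1 ⟨(i.castSucc, j.castSucc, Fin.last _), hij, Fin.castSucc_lt_last j⟩) = 1)
      (isClosed_eq (by fun_prop) (by fun_prop)) (fun t ht => by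
        have h1 := endDist_pos ht (.inr i)
        have h2 := endDist_pos ht (.inr j)
        simp only [gammaMap, endShare, alphaMap, ext01_last, endDist, Sum.elim_inr] at h1 h2 ⊢
        have h3 := (add_pos h1 h2).ne'
        field_simp
        ring) h
  have hle := (mem_Icc_of_mem_closure_gammaMap h
    ⟨(i.castSucc, j.castSucc, Fin.last _), hij, Fin.castSucc_lt_last j⟩).2
  exact mul_right_cancel₀ (by linarith) ((key h).trans (key h').symm)

theorem mem_shareFiber_of_mem_closure_gammaMap
    (h : (x, M) ∈ closure (gammaMap n '' openSimplex n))
    (h' : (x, M') ∈ closure (gammaMap n '' openSimplex n)) :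
    M' ∈ shareFiber M (Fin.last n) 0 :=
  ⟨isShare_of_mem_closure_gammaMap h', inl_block_unique h' h, inr_block_unique h' h,
    base_eq_half_of_mem_closure_gammaMap h'⟩

theorem mem_closure_gammaMap_iff (h : (x, M) ∈ closure (gammaMap n '' openSimplex n)) :
    (x, M') ∈ closure (gammaMap n '' openSimplex n) ↔ M' ∈ shareFiber M (Fin.last n) 0 := by
  refine ⟨mem_shareFiber_of_mem_closure_gammaMap h, fun hM => ?_⟩
  refine mem_closure_gammaMap_of_mem_shareFiber h hM fun a => ?_
  have h₀ := mem_shareFiber_of_mem_closure_gammaMap h h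
  have hpos := base_pos_of_mem_closure_gammaMap h
  rcases a with a | a
  · rw [hM.2.1]
    exact hpos _
  · rw [shareFiber_base hM, hM.2.2.1, ← shareFiber_base h₀]
    exact hpos _

theorem isCompact_closure_gammaMap : IsCompact (closure (gammaMap n '' openSimplex n)) := by
  refine IsCompact.of_isClosed_subset (isCompact_Icc (a := 0) (b := 1)) isClosed_closure ?_
  rintro ⟨x, M⟩ h
  have hx := mem_Icc_of_mem_closure_gammaMap h
  have hM := isShare_of_mem_closure_gammaMap h
  exact ⟨⟨fun q => (hx q).1, fun a b => hM.nonneg a b⟩,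
    ⟨fun q => (hx q).2, fun a b => hM.le_one a b⟩⟩

theorem exists_mem_closure_gammaMap (hx : x ∈ Assoc n) :
    ∃ M, (x, M) ∈ closure (gammaMap n '' openSimplex n) := by
  have hclosed := ((isCompact_closure_gammaMap (n := n)).image continuous_fst).isClosed
  have hsub : alphaMap n '' openSimplex n ⊆ Prod.fst '' closure (gammaMap n '' openSimplex n) := by
    rintro _ ⟨t, ht, rfl⟩
    exact ⟨gammaMap n t, subset_closure ⟨t, ht, rfl⟩, rfl⟩
  obtain ⟨z, hz, rfl⟩ := closure_minimal hsub hclosed hx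
  exact ⟨z.2, hz⟩

theorem fst_mem_Assoc {z} (hz : z ∈ closure (gammaMap n '' openSimplex n)) : z.1 ∈ Assoc n :=
  map_mem_closure continuous_fst hz (by
    rintro _ ⟨t, ht, rfl⟩
    exact ⟨t, ht, rfl⟩)

end Fiber

/-- **Theorem 2.** There is a continuous map `π_n : Cycl_n → Assoc_n` with
`π_n ∘ β_n = α_n` on `Δ^n`; such a map is unique, and the preimage of every point of
`Assoc_n` under `π_n` is contractible. -/
theorem projection_cyclohedron_to_associahedron (n : ℕ) (hn : 1 ≤ n) :
    ∃ piN : ↥(Cycl n) → ↥(Assoc n),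
      Continuous piN ∧
      (∀ t (ht : t ∈ openSimplex n),
        piN ⟨betaMap n t, subset_closure (Set.mem_image_of_mem _ ht)⟩ =
          ⟨alphaMap n t, subset_closure (Set.mem_image_of_mem _ ht)⟩) ∧
      (∀ piN' : ↥(Cycl n) → ↥(Assoc n), Continuous piN' →
        (∀ t (ht : t ∈ openSimplex n),
          piN' ⟨betaMap n t, subset_closure (Set.mem_image_of_mem _ ht)⟩ =
            ⟨alphaMap n t, subset_closure (Set.mem_image_of_mem _ ht)⟩) →
        piN' = piN) ∧
      ∀ x : ↥(Assoc n), ContractibleSpace ↥(piN ⁻¹' {x}) := by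
  obtain ⟨e, he⟩ := exists_homeomorph_gammaMap n
  let piN : Cycl n → Assoc n := fun z => ⟨(e z).1.1, fst_mem_Assoc (e z).2⟩
  have hcont : Continuous piN := by fun_prop
  have hβ : ∀ t (ht : t ∈ openSimplex n),
      piN ⟨betaMap n t, subset_closure (Set.mem_image_of_mem _ ht)⟩ =
        ⟨alphaMap n t, subset_closure (Set.mem_image_of_mem _ ht)⟩ := fun t ht =>
    Subtype.ext (congrArg Prod.fst (he t ht _))
  refine ⟨piN, hcont, hβ, fun piN' hcont' hβ' => ?_, fun ⟨x, hx⟩ => ?_⟩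
  · have hdense : Dense {z : Cycl n | z.1 ∈ betaMap n '' openSimplex n} := by
      rw [Subtype.dense_iff]
      refine closure_mono ?_
      intro z hz
      exact ⟨⟨z, subset_closure hz⟩, hz, rfl⟩
    refine hcont'.ext_on hdense hcont ?_
    rintro ⟨_, hz⟩ ⟨t, ht, rfl⟩
    exact (hβ' t ht).trans (hβ t ht).symm
  · obtain ⟨M, hM⟩ := exists_mem_closure_gammaMap hx
    have : ContractibleSpace (shareFiber M (Fin.last n) (0 : Fin (n + 1))) :=
      contractibleSpace_shareFiber (mem_shareFiber_of_mem_closure_gammaMap hM hM)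
        (base_pos_of_mem_closure_gammaMap hM)
    have hfst : ∀ z : piN ⁻¹' {⟨x, hx⟩}, (e z.1).1 = (x, (e z.1).1.2) := fun z =>
      Prod.ext (congrArg Subtype.val z.2) rfl
    let E : piN ⁻¹' {⟨x, hx⟩} ≃ₜ shareFiber M (Fin.last n) (0 : Fin (n + 1)) :=
      { toFun := fun z => ⟨(e z.1).1.2, (mem_closure_gammaMap_iff hM).1 (hfst z ▸ (e z.1).2)⟩
        invFun := fun N => ⟨e.symm ⟨(x, N.1), (mem_closure_gammaMap_iff hM).2 N.2⟩,
          Subtype.ext (by simp [piN])⟩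
        left_inv := fun z => Subtype.ext (e.symm_apply_eq.2 (Subtype.ext (hfst z).symm))
        right_inv := fun N => Subtype.ext (by simp)
        continuous_toFun := by fun_prop
        continuous_invFun := by fun_prop }
    exact E.contractibleSpace
end

section
/- Let T be a finite rooted tree with at least one internal vertex and let (T', L') be a leveled tree such that T ≥ T' (T' is obtained from T by contracting a set of internal edges). Then the subposet of X_T consisting of those levelizations L of T for which (T, L) ≥ (T', L') has contractible geometric realization. (Lemma 7.3 of the paper; in fact this subposet is isomorphic to a product of posets of the form X_{T_i}, one for each level of (T', L'), where each T_i is obtained from T by contracting some edges.) -/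
/-- A levelization of (the internal vertices of) a rooted tree, viewed as a preordered
type `V`: a surjection onto a finite ordinal `Fin m` that is strictly order-preserving. -/
structure Levelization (V : Type) [Preorder V] where
  m : ℕ
  level : V → Fin m
  surj : Function.Surjective level
  strict : ∀ v w : V, v < w → level v < level w

/-- The preorder on levelizations: `L' ≤ L` iff `L'` is obtained from `L` by merging
levels, i.e. `L'.level = φ ∘ L.level` for a weakly monotone surjection `φ`. -/
instance Levelization.instPreorder (V : Type) [Preorder V] : Preorder (Levelization V) where
  le A B := ∃ φ : Fin B.m → Fin A.m, Monotone φ ∧ Function.Surjective φ ∧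
    ∀ v, A.level v = φ (B.level v)
  le_refl A := ⟨id, monotone_id, Function.surjective_id, fun _ => rfl⟩
  le_trans A B C := by
    rintro ⟨φ, hφm, hφs, hφ⟩ ⟨ψ, hψm, hψs, hψ⟩
    exact ⟨φ ∘ ψ, hφm.comp hψm, hφs.comp hψs, fun v => by simp [hφ v, hψ v]⟩

/-- The convex combination of two points of a realization whose supports lie in a common chain
is again a point of the realization. -/
theorem PosetRealization.lineMap_mem {P : Type*} [Preorder P] {f g : P → ℝ}
    (hf : f ∈ PosetRealization P) (hg : g ∈ PosetRealization P)
    (hfg : IsChain (· ≤ ·) (Function.support f ∪ Function.support g))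
    {t : ℝ} (h0 : 0 ≤ t) (h1 : t ≤ 1) :
    (fun p => (1 - t) * f p + t * g p) ∈ PosetRealization P := by
  have hsub : Function.support (fun p => (1 - t) * f p + t * g p) ⊆
      Function.support f ∪ Function.support g := by
    intro p hp
    by_contra h
    simp only [Set.mem_union, Function.mem_support, not_or, not_not] at h
    exact hp (by simp [h.1, h.2])
  refine ⟨fun p => ?_, (hf.2.1.union hg.2.1).subset hsub, ?_, hfg.mono hsub⟩
  · exact add_nonneg (mul_nonneg (by linarith) (hf.1 p)) (mul_nonneg h0 (hg.1 p))
  · rw [finsum_add_distrib (hf.2.1.subset fun p hp => right_ne_zero_of_mul hp)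
        (hg.2.1.subset fun p hp => right_ne_zero_of_mul hp), ← mul_finsum,
      ← mul_finsum, hf.2.2.1, hg.2.2.1]
    ring

/-- A space that maps to a contractible space and back, in such a way that the composite is
homotopic to the identity, is contractible. -/
theorem ContractibleSpace.of_homotopic_id {X Y : Type*} [TopologicalSpace X] [TopologicalSpace Y]
    [ContractibleSpace Y] (i : C(X, Y)) (r : C(Y, X))
    (h : (r.comp i).Homotopic (ContinuousMap.id X)) : ContractibleSpace X := by
  rw [contractible_iff_id_nullhomotopic]
  obtain ⟨y, hy⟩ := id_nullhomotopic Y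
  refine ⟨r y, h.symm.trans ?_⟩
  exact ((ContinuousMap.Homotopic.refl r).comp (hy.comp (ContinuousMap.Homotopic.refl i)))

/-- The signed gap, in the values of `x`, between a set `S` and its complement. It is `0` if `S` is
empty or everything. -/
noncomputable def cutGap {V : Type*} (S : Set V) (x : V → ℝ) : ℝ :=
  ⨅ e : S × (Sᶜ : Set V), (x e.2 - x e.1)

theorem continuous_cutGap {V : Type*} [Finite V] (S : Set V) :
    Continuous (cutGap S) := by
  have : Fintype (S × (Sᶜ : Set V)) := Fintype.ofFinite _
  unfold cutGap
  rcases isEmpty_or_nonempty (S × (Sᶜ : Set V)) with h | h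
  · simp only [Real.iInf_of_isEmpty]
    exact continuous_const
  · simp only [← Finset.inf'_univ_eq_ciInf]
    exact Continuous.finset_inf'_apply _ fun e _ => by fun_prop

theorem cutGap_le {V : Type*} [Finite V] {S : Set V} (x : V → ℝ) {u z : V} (hu : u ∈ S)
    (hz : z ∉ S) : cutGap S x ≤ x z - x u :=
  ciInf_le (Set.finite_range _).bddBelow ((⟨u, hu⟩, ⟨z, hz⟩) : S × (Sᶜ : Set V))

theorem exists_cutGap_eq {V : Type*} [Finite V] {S : Set V} (x : V → ℝ) (hS : S.Nonempty)
    (hS' : Sᶜ.Nonempty) : ∃ u ∈ S, ∃ z ∉ S, cutGap S x = x z - x u := by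
  have := hS.to_subtype
  have := hS'.to_subtype
  obtain ⟨⟨⟨u, hu⟩, ⟨z, hz⟩⟩, h⟩ :=
    exists_eq_ciInf_of_finite (f := fun e : S × (Sᶜ : Set V) => x e.2 - x e.1)
  exact ⟨u, hu, z, hz, h.symm⟩

theorem cutGap_eq_zero {V : Type*} {S : Set V} (x : V → ℝ)
    (hS : ¬(S.Nonempty ∧ Sᶜ.Nonempty)) : cutGap S x = 0 := by
  have : IsEmpty (S × (Sᶜ : Set V)) :=
    ⟨fun e => hS ⟨⟨e.1, e.1.2⟩, ⟨e.2, e.2.2⟩⟩⟩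
  exact Real.iInf_of_isEmpty _

/-- A surjection onto a finite ordinal factors monotonically through the level function of `L` if
and only if it is reflected strictly by `L`. -/
theorem Levelization.exists_factorization_iff {V : Type} [Preorder V] (L : Levelization V) {n : ℕ}
    (f : V → Fin n) (hf : Function.Surjective f) :
    (∃ φ : Fin L.m → Fin n, Monotone φ ∧ Function.Surjective φ ∧ ∀ v, f v = φ (L.level v)) ↔
      ∀ v w, f v < f w → L.level v < L.level w := by
  constructor
  · rintro ⟨φ, hφ, -, h⟩ v w hvw
    by_contra hlt
    rw [h, h] at hvw
    exact absurd (hφ (not_lt.1 hlt)) (not_le.2 hvw)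
  · intro h
    have hle : ∀ v w, L.level v ≤ L.level w → f v ≤ f w := fun v w hvw =>
      not_lt.1 fun hlt => absurd (h _ _ hlt) (not_lt.2 hvw)
    have hφ : ∀ v, f v = f (Function.surjInv L.surj (L.level v)) := fun v =>
      le_antisymm (hle _ _ (Function.surjInv_eq L.surj _).ge)
        (hle _ _ (Function.surjInv_eq L.surj _).le)
    refine ⟨fun i => f (Function.surjInv L.surj i), fun i j hij => hle _ _ ?_, fun i => ?_, hφ⟩
    · simpa only [Function.surjInv_eq] using hij
    · obtain ⟨v, rfl⟩ := hf i
      exact ⟨L.level v, (hφ v).symm⟩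

namespace Levelization

variable {V : Type} [Preorder V]

theorem le_iff (A B : Levelization V) :
    A ≤ B ↔ ∀ v w, A.level v < A.level w → B.level v < B.level w :=
  B.exists_factorization_iff A.level A.surj

instance [Finite V] : Finite (Levelization V) := by
  have hm : ∀ L : Levelization V, L.m < Nat.card V + 1 := fun L => by
    simpa [Nat.lt_succ_iff] using Nat.card_le_card_of_surjective _ L.surj
  refine Finite.of_injective
    (fun L => (⟨⟨L.m, hm L⟩, L.level⟩ : Σ m : Fin (Nat.card V + 1), (V → Fin m))) ?_
  rintro ⟨m, l, hs, ht⟩ ⟨m', l', hs', ht'⟩ h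
  simp only [Sigma.mk.injEq, Fin.mk.injEq] at h
  obtain ⟨rfl, h⟩ := h
  cases h
  rfl

/-- A cut of `L` is a nonempty proper subset consisting of the first few levels. -/
def IsCut (L : Levelization V) (S : Set V) : Prop :=
  S.Nonempty ∧ Sᶜ.Nonempty ∧ ∀ u ∈ S, ∀ z ∉ S, L.level u < L.level z

theorem le_of_isCut {A B : Levelization V} (h : ∀ S, A.IsCut S → B.IsCut S) : A ≤ B := by
  rw [le_iff]
  intro v w hvw
  have hcut : A.IsCut {u | A.level u ≤ A.level v} :=
    ⟨⟨v, le_refl (A.level v)⟩, ⟨w, not_le.2 hvw⟩, fun u hu z hz => lt_of_le_of_lt hu (not_le.1 hz)⟩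
  exact (h _ hcut).2.2 v (le_refl (A.level v)) w (not_le.2 hvw)

/-- The levelization that orders the vertices by the values of a strictly monotone function. -/
theorem exists_level_lt_iff [Finite V] (x : V → ℝ) (hx : ∀ v w, v < w → x v < x w) :
    ∃ L : Levelization V, ∀ v w, L.level v < L.level w ↔ x v < x w := by
  classical
  have : Fintype V := Fintype.ofFinite V
  let s : Finset ℝ := Finset.univ.image x
  let e := s.orderIsoOfFin rfl
  let l : V → Fin s.card := fun v => e.symm ⟨x v, Finset.mem_image_of_mem _ (Finset.mem_univ v)⟩
  have hl : ∀ v w, l v < l w ↔ x v < x w := fun v w => by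
    simp only [l, OrderIso.lt_iff_lt, Subtype.mk_lt_mk]
  refine ⟨⟨s.card, l, fun i => ?_, fun v w h => (hl v w).2 (hx v w h)⟩, hl⟩
  obtain ⟨v, -, hv⟩ := Finset.mem_image.1 (e i).2
  refine ⟨v, ?_⟩
  simp only [l, hv]
  exact e.symm_apply_apply i

open Classical in
/-- A nonnegative weight, positive exactly at those `x` at which the gap of every cut of `L` is
larger than the gap of every other set. -/
noncomputable def cutWeight [Fintype V] (L : Levelization V) (x : V → ℝ) : ℝ :=
  ∏ e : Set V × Set V,
    if L.IsCut e.1 ∧ ¬L.IsCut e.2 then max 0 (cutGap e.1 x - cutGap e.2 x) else 1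

theorem continuous_cutWeight [Fintype V] (L : Levelization V) : Continuous L.cutWeight := by
  unfold cutWeight
  refine continuous_finsetProd _ fun e _ => ?_
  split_ifs
  · exact continuous_const.max ((continuous_cutGap _).sub (continuous_cutGap _))
  · exact continuous_const

theorem cutWeight_nonneg [Fintype V] (L : Levelization V) (x : V → ℝ) : 0 ≤ L.cutWeight x := by
  refine Finset.prod_nonneg fun e _ => ?_
  split_ifs
  · exact le_max_left _ _
  · exact zero_le_one

theorem cutWeight_ne_zero_iff [Fintype V] (L : Levelization V) (x : V → ℝ) :
    L.cutWeight x ≠ 0 ↔ ∀ S S', L.IsCut S → ¬L.IsCut S' → cutGap S' x < cutGap S x := by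
  simp only [cutWeight, Finset.prod_ne_zero_iff, Finset.mem_univ, true_imp_iff, Prod.forall]
  refine forall₂_congr fun S S' => ?_
  split_ifs with h
  · simp only [h.1, h.2, not_false_eq_true, true_imp_iff, ne_eq, max_eq_left_iff, not_le, sub_pos]
  · simpa using fun h₁ h₂ => absurd ⟨h₁, h₂⟩ h

theorem le_total_of_cutWeight_ne_zero [Fintype V] {A B : Levelization V} {x : V → ℝ}
    (hA : A.cutWeight x ≠ 0) (hB : B.cutWeight x ≠ 0) : A ≤ B ∨ B ≤ A := by
  rw [cutWeight_ne_zero_iff] at hA hB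
  by_contra! h
  have h₁ := mt le_of_isCut h.1
  have h₂ := mt le_of_isCut h.2
  push Not at h₁ h₂
  obtain ⟨S, hAS, hBS⟩ := h₁
  obtain ⟨S', hBS', hAS'⟩ := h₂
  exact lt_asymm (hA S S' hAS hAS') (hB S' S hBS' hBS)

theorem cutWeight_ne_zero_of_level_lt_iff [Fintype V] {L : Levelization V} {x : V → ℝ}
    (h : ∀ v w, L.level v < L.level w ↔ x v < x w) : L.cutWeight x ≠ 0 := by
  rw [cutWeight_ne_zero_iff]
  intro S S' hS hS'
  refine lt_of_le_of_lt (b := 0) ?_ ?_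
  · by_cases hne : S'.Nonempty ∧ S'ᶜ.Nonempty
    · simp only [IsCut, hne.1, hne.2, true_and, h] at hS'
      push Not at hS'
      obtain ⟨u, hu, z, hz, hle⟩ := hS'
      linarith [cutGap_le x hu hz]
    · exact (cutGap_eq_zero x hne).le
  · obtain ⟨u, hu, z, hz, heq⟩ := exists_cutGap_eq x hS.1 hS.2.1
    linarith [(h u z).1 (hS.2.2 u hu z hz)]

section Average

variable {ι : Type*} [Fintype ι] (p : ι → Levelization V) (f : ι → ℝ)

/-- The weighted sum of the level functions of a family of levelizations. -/
def average (v : V) : ℝ := ∑ i, f i * ((p i).level v : ℝ)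

variable {p f}

theorem average_sub (v w : V) :
    average p f w - average p f v = ∑ i, f i * (((p i).level w : ℝ) - (p i).level v) := by
  simp only [average, ← Finset.sum_sub_distrib, mul_sub]

theorem average_lt_of_level_lt (hf : ∀ i, 0 ≤ f i) {v w : V} {i : ι} (hi : f i ≠ 0)
    (hc : ∀ j, f j ≠ 0 → p i ≤ p j ∨ p j ≤ p i) (h : (p i).level v < (p i).level w) :
    average p f v < average p f w := by
  rw [← sub_pos, average_sub]
  refine Finset.sum_pos' (fun j _ => ?_) ⟨i, Finset.mem_univ i, ?_⟩
  · by_cases hj : f j = 0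
    · simp [hj]
    · refine mul_nonneg (hf j) (sub_nonneg.2 ?_)
      rcases hc j hj with h' | h'
      · exact_mod_cast ((le_iff _ _).1 h' _ _ h).le
      · exact_mod_cast not_lt.1 fun hlt => lt_asymm h ((le_iff _ _).1 h' _ _ hlt)
  · refine mul_pos ((hf i).lt_of_ne' hi) (sub_pos.2 ?_)
    exact_mod_cast h

open Classical in
theorem cutGap_average_le [Finite V] (hf : ∀ i, 0 ≤ f i)
    (hc : ∀ i j, f i ≠ 0 → f j ≠ 0 → p i ≤ p j ∨ p j ≤ p i) {S : Set V} (hS : S.Nonempty)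
    (hS' : Sᶜ.Nonempty) :
    cutGap S (average p f) ≤ ∑ i, if (p i).IsCut S then f i else 0 := by
  obtain ⟨u, hu, z, hz, heq⟩ := exists_cutGap_eq (average p f) hS hS'
  have hmax : ∀ y ∈ S, average p f y ≤ average p f u := fun y hy => by
    linarith [cutGap_le (average p f) hy hz]
  have hmin : ∀ y ∉ S, average p f z ≤ average p f y := fun y hy => by
    linarith [cutGap_le (average p f) hu hy]
  rw [heq, average_sub]
  refine Finset.sum_le_sum fun i _ => ?_
  by_cases hi : f i = 0
  · simp [hi]
  have hlt : ∀ v w, (p i).level v < (p i).level w → average p f v < average p f w :=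
    fun v w => average_lt_of_level_lt hf hi fun j hj => hc i j hi hj
  have hle : ∀ v w, average p f v ≤ average p f w → (p i).level v ≤ (p i).level w :=
    fun v w h => not_lt.1 fun h' => absurd (hlt _ _ h') (not_lt.2 h)
  split_ifs with hcut
  · refine mul_le_of_le_one_right (hf i) ?_
    suffices h : ((p i).level z : ℕ) ≤ (p i).level u + 1 by
      have : ((p i).level z : ℝ) ≤ (p i).level u + 1 := by exact_mod_cast h
      linarith
    by_contra! h
    obtain ⟨y, hy⟩ := (p i).surj ⟨(p i).level u + 1, h.trans ((p i).level z).2⟩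
    have h₁ := hlt u y (by rw [Fin.lt_def, hy]; simp)
    have h₂ := hlt y z (by rw [Fin.lt_def, hy]; simpa using h)
    by_cases hyS : y ∈ S
    · linarith [hmax y hyS]
    · linarith [hmin y hyS]
  · simp only [IsCut, hS, hS', true_and] at hcut
    push Not at hcut
    obtain ⟨u', hu', z', hz', hle'⟩ := hcut
    refine mul_nonpos_of_nonneg_of_nonpos (hf i) (sub_nonpos.2 ?_)
    exact_mod_cast (hle _ _ (hmin z' hz')).trans (hle'.trans (hle _ _ (hmax u' hu')))

open Classical in
theorem le_cutGap_average [Finite V] (hf : ∀ i, 0 ≤ f i) {S : Set V} {i : ι}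
    (hS : (p i).IsCut S) (hc : ∀ j, f j ≠ 0 → p i ≤ p j ∨ p j ≤ p i) :
    (∑ j, if (p j).IsCut S then f j else 0) ≤ cutGap S (average p f) := by
  obtain ⟨u, hu, z, hz, heq⟩ := exists_cutGap_eq (average p f) hS.1 hS.2.1
  rw [heq, average_sub]
  refine Finset.sum_le_sum fun j _ => ?_
  by_cases hj : f j = 0
  · simp [hj]
  split_ifs with hcut
  · refine le_mul_of_one_le_right (hf j) ?_
    have h : ((p j).level u : ℕ) + 1 ≤ (p j).level z := hcut.2.2 u hu z hz
    have : ((p j).level u : ℝ) + 1 ≤ (p j).level z := by exact_mod_cast h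
    linarith
  · refine mul_nonneg (hf j) (sub_nonneg.2 ?_)
    have h := hS.2.2 u hu z hz
    rcases hc j hj with h' | h'
    · exact_mod_cast ((le_iff _ _).1 h' _ _ h).le
    · exact_mod_cast not_lt.1 fun hlt => lt_asymm h ((le_iff _ _).1 h' _ _ hlt)

theorem IsCut.of_le {A B : Levelization V} (h : A ≤ B) {S : Set V} (hS : A.IsCut S) : B.IsCut S :=
  ⟨hS.1, hS.2.1, fun u hu z hz => (le_iff _ _).1 h _ _ (hS.2.2 u hu z hz)⟩

theorem le_total_of_cutWeight_average_ne_zero [Fintype V] (hf : ∀ i, 0 ≤ f i)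
    (hc : ∀ i j, f i ≠ 0 → f j ≠ 0 → p i ≤ p j ∨ p j ≤ p i) {A : Levelization V}
    (hA : A.cutWeight (average p f) ≠ 0) {i : ι} (hi : f i ≠ 0) : A ≤ p i ∨ p i ≤ A := by
  classical
  rw [cutWeight_ne_zero_iff] at hA
  by_contra! h
  have h₁ := mt le_of_isCut h.1
  have h₂ := mt le_of_isCut h.2
  push Not at h₁ h₂
  obtain ⟨S, hAS, hiS⟩ := h₁
  obtain ⟨S', hiS', hAS'⟩ := h₂
  have hle := cutGap_average_le hf hc hAS.1 hAS.2.1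
  have hge := le_cutGap_average hf hiS' fun j hj => hc i j hi hj
  refine (hA S S' hAS hAS').not_ge (hle.trans (le_trans (Finset.sum_le_sum fun j _ => ?_) hge))
  by_cases hj : f j = 0
  · simp [hj]
  split_ifs with h₁ h₂ h₂
  · exact le_rfl
  · rcases hc i j hi hj with h' | h'
    · exact absurd (hiS'.of_le h') h₂
    · exact absurd (h₁.of_le h') hiS
  · exact hf j
  · exact le_rfl

end Average

end Levelization

/-- The subposet of levelizations that are strictly increasing along a relation containing the
strict order has contractible realization, provided the relation admits a strictly increasing
real-valued function. -/
theorem contractible_realization_of_strict_iff {V : Type} [Preorder V] [Finite V]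
    (R : V → V → Prop) (hR : ∀ v w, v < w → R v w) (Q : Levelization V → Prop)
    (hQ : ∀ L, Q L ↔ ∀ v w, R v w → L.level v < L.level w)
    (hne : ∃ x : V → ℝ, ∀ v w, R v w → x v < x w) :
    ContractibleSpace ↥(PosetRealization {L : Levelization V // Q L}) := by
  have : Fintype V := Fintype.ofFinite V
  have : Fintype {L : Levelization V // Q L} := Fintype.ofFinite _
  let C : Set (V → ℝ) := {x | ∀ v w, R v w → x v < x w}
  have hconv : Convex ℝ C := by
    simp only [C, Set.ofPred_forall]
    refine convex_iInter fun v => convex_iInter fun w => convex_iInter fun _ => ?_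
    intro x hx y hy a b ha hb hab
    rcases ha.eq_or_lt with rfl | ha
    · obtain rfl : b = 1 := by linarith
      simpa using hy
    · exact add_lt_add_of_lt_of_le (mul_lt_mul_of_pos_left hx ha)
        (mul_le_mul_of_nonneg_left (le_of_lt hy) hb)
  have : ContractibleSpace C := hconv.contractibleSpace hne
  let total : (V → ℝ) → ℝ := fun x => ∑ p : {L : Levelization V // Q L}, p.1.cutWeight x
  have htotal : ∀ x ∈ C, 0 < total x := by
    intro x hx
    obtain ⟨L, hL⟩ := Levelization.exists_level_lt_iff x fun v w h => hx v w (hR v w h)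
    refine Finset.sum_pos' (fun p _ => p.1.cutWeight_nonneg x)
      ⟨⟨L, (hQ L).2 fun v w h => (hL v w).2 (hx v w h)⟩, Finset.mem_univ _, ?_⟩
    exact (L.cutWeight_nonneg x).lt_of_ne' (Levelization.cutWeight_ne_zero_of_level_lt_iff hL)
  have hr : ∀ x ∈ C, (fun p : {L : Levelization V // Q L} => p.1.cutWeight x / total x) ∈
      PosetRealization {L : Levelization V // Q L} := by
    intro x hx
    refine ⟨fun p => div_nonneg (p.1.cutWeight_nonneg x) (htotal x hx).le, Set.toFinite _, ?_, ?_⟩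
    · rw [finsum_eq_sum_of_fintype, ← Finset.sum_div]
      exact div_self (htotal x hx).ne'
    · intro p hp q hq _
      exact Levelization.le_total_of_cutWeight_ne_zero (A := p.1) (B := q.1)
        (div_ne_zero_iff.1 hp).1 (div_ne_zero_iff.1 hq).1
  let r : C(C, PosetRealization {L : Levelization V // Q L}) :=
    ⟨fun x => ⟨_, hr x x.2⟩, Continuous.subtype_mk (continuous_pi fun p =>
      ((p.1.continuous_cutWeight).comp continuous_subtype_val).div
        ((continuous_finsetSum _ fun q _ => q.1.continuous_cutWeight).comp continuous_subtype_val)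
        fun x => (htotal x x.2).ne') _⟩
  have htot : ∀ f ∈ PosetRealization {L : Levelization V // Q L},
      ∀ i j, f i ≠ 0 → f j ≠ 0 → i.1 ≤ j.1 ∨ j.1 ≤ i.1 :=
    fun f hf i j hi hj => hf.2.2.2.total hi hj
  have hi : ∀ f ∈ PosetRealization {L : Levelization V // Q L},
      Levelization.average Subtype.val f ∈ C := by
    intro f hf v w hvw
    obtain ⟨i, hi⟩ : ∃ i, f i ≠ 0 := by
      by_contra! h
      simpa [h] using hf.2.2.1
    exact Levelization.average_lt_of_level_lt hf.1 hi (fun j hj => htot f hf i j hi hj)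
      ((hQ i.1).1 i.2 v w hvw)
  let i : C(PosetRealization {L : Levelization V // Q L}, C) :=
    ⟨fun f => ⟨_, hi f f.2⟩, Continuous.subtype_mk (continuous_pi fun v =>
      continuous_finsetSum _ fun q _ =>
        ((continuous_apply q).comp continuous_subtype_val).mul continuous_const) _⟩
  refine ContractibleSpace.of_homotopic_id i r ⟨⟨⟨fun tf => ⟨fun p =>
    (1 - (tf.1 : ℝ)) * (r (i tf.2)).1 p + tf.1 * tf.2.1 p,
      PosetRealization.lineMap_mem (r (i tf.2)).2 tf.2.2 ?_ tf.1.2.1 tf.1.2.2⟩, ?_⟩, ?_, ?_⟩⟩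
  · have key : ∀ p ∈ Function.support (r (i tf.2)).1, ∀ q ∈ Function.support tf.2.1,
        p ≤ q ∨ q ≤ p := fun p hp q hq =>
      Levelization.le_total_of_cutWeight_average_ne_zero (A := p.1) tf.2.2.1 (htot _ tf.2.2)
        (div_ne_zero_iff.1 hp).1 hq
    rintro p (hp | hp) q (hq | hq) hpq
    · exact (r (i tf.2)).2.2.2.2 hp hq hpq
    · exact key p hp q hq
    · exact (key q hq p hp).symm
    · exact tf.2.2.2.2.2 hp hq hpq
  · refine Continuous.subtype_mk (continuous_pi fun p => ?_) _
    have h₁ : Continuous fun tf : unitInterval × PosetRealization {L : Levelization V // Q L} =>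
        (r (i tf.2)).1 p :=
      (continuous_apply p).comp
        (continuous_subtype_val.comp ((r.comp i).continuous.comp continuous_snd))
    have h₂ : Continuous fun tf : unitInterval × PosetRealization {L : Levelization V // Q L} =>
        tf.2.1 p :=
      (continuous_apply p).comp (continuous_subtype_val.comp continuous_snd)
    have h₃ : Continuous fun tf : unitInterval × PosetRealization {L : Levelization V // Q L} =>
        (tf.1 : ℝ) :=
      continuous_subtype_val.comp continuous_fst
    exact ((continuous_const.sub h₃).mul h₁).add (h₃.mul h₂)
  · intro f
    ext p
    simp
  · intro f
    ext p
    simp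

/-- A monotone function to a finite ordinal and the strict order on a finite poset admit a common
strictly increasing real-valued function. -/
theorem exists_strict_of_monotone {V : Type*} [Preorder V] [Finite V] {n : ℕ} (l : V → Fin n)
    (hl : ∀ v w, v ≤ w → l v ≤ l w) :
    ∃ x : V → ℝ, ∀ v w, v < w ∨ l v < l w → x v < x w := by
  let N := Nat.card V + 1
  have hN : ∀ v : V, (Set.Iio v).ncard < N := fun v =>
    Nat.lt_succ_of_le (Set.ncard_le_card _)
  refine ⟨fun v => ((l v * N + (Set.Iio v).ncard : ℕ) : ℝ), fun v w h => Nat.cast_lt.2 ?_⟩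
  by_cases hlt : l v < l w
  · have h₁ : (l v + 1 : ℕ) * N ≤ l w * N := Nat.mul_le_mul_right _ hlt
    have h₂ := hN v
    rw [add_mul] at h₁
    omega
  · have hvw := h.resolve_right hlt
    have h₁ : (l v : ℕ) * N ≤ l w * N := Nat.mul_le_mul_right _ (hl v w hvw.le)
    have h₂ : (Set.Iio v).ncard < (Set.Iio w).ncard :=
      Set.ncard_lt_ncard (Set.Iio_ssubset_Iio hvw) (Set.toFinite _)
    omega

/-- **Lemma 7.3.** Let `T` be a finite rooted tree with at least one internal vertex,
with poset of internal vertices `V` (a nonempty finite poset with least element whose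
principal down-sets are chains), and let `T'` be obtained from `T` by contracting a set
of internal edges — encoded by the monotone idempotent deflationary map `k : V → V` with
convex fibers sending each internal vertex to the (representative of the) vertex of `T'`
it is merged into, so that the internal vertices of `T'` form the subposet
`Set.range k`.  Then, for any levelization `L'` of `T'`, the subposet of `X_T` of those
levelizations `L` of `T` with `(T, L) ≥ (T', L')` has contractible geometric
realization. -/
theorem contractible_realization_levelizations_above (V : Type) [PartialOrder V]
    [Finite V] [Nonempty V]
    (hchain : ∀ v : V, IsChain (· ≤ ·) {u | u ≤ v})
    (hroot : ∃ rt : V, ∀ v, rt ≤ v)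
    (k : V → V) (hmono : Monotone k) (hidem : ∀ v, k (k v) = k v)
    (hdefl : ∀ v, k v ≤ v)
    (hconvex : ∀ u v : V, k v ≤ u → u ≤ v → k u = k v)
    (L' : Levelization ↥(Set.range k)) :
    ContractibleSpace ↥(PosetRealization
      {L : Levelization V //
        ∃ φ : Fin L.m → Fin L'.m, Monotone φ ∧ Function.Surjective φ ∧
          ∀ v : V, L'.level ⟨k v, Set.mem_range_self v⟩ = φ (L.level v)}) := by
  have hle : ∀ v w : V, v ≤ w → L'.level ⟨k v, Set.mem_range_self v⟩ ≤
      L'.level ⟨k w, Set.mem_range_self w⟩ := fun v w h => by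
    rcases (hmono h).lt_or_eq with h | h
    · exact (L'.strict ⟨k v, Set.mem_range_self v⟩ ⟨k w, Set.mem_range_self w⟩ h).le
    · simp only [h, le_refl]
  refine contractible_realization_of_strict_iff
    (fun v w => v < w ∨ L'.level ⟨k v, Set.mem_range_self v⟩ <
      L'.level ⟨k w, Set.mem_range_self w⟩) (fun v w h => Or.inl h) _ (fun L => ?_) ?_
  · rw [L.exists_factorization_iff (fun v => L'.level ⟨k v, Set.mem_range_self v⟩)]
    · exact ⟨fun h v w hvw => hvw.elim (L.strict v w) (h v w), fun h v w hvw => h v w (Or.inr hvw)⟩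
    · intro i
      obtain ⟨⟨_, v, rfl⟩, hv⟩ := L'.surj i
      exact ⟨v, hv⟩
  · exact exists_strict_of_monotone _ hle
end
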